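/- Suppose T is Σ1-sound and n > m ≥ 1. Then there exists a Σ1 provability predicate PR_T(x) of T such that: (1) for any modal formula A and any arithmetical interpretation f based on PR_T(x), if N⁺A_{m,n} ⊢ A then T ⊢ f(A); and (2) there exists an arithmetical interpretation f based on PR_T(x) such that for every modal formula A, N⁺A_{m,n} ⊢ A if and only if T ⊢ f(A). -/

import Mathlib

namespace PLN

/-! ### Modal formulas and the logics N⁺A_{m,n} -/

/-- Formulas of modal propositional logic. -/
inductive MFml : Type
  | var : ℕ → MFml
  | bot : MFml
  | neg : MFml → MFml
  | and : MFml → MFml → MFml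
  | or : MFml → MFml → MFml
  | imp : MFml → MFml → MFml
  | box : MFml → MFml
  deriving DecidableEq

/-- `boxIter n A` is `□ⁿ A`, where `□⁰ A = A` and `□^(k+1) A = □ (□ᵏ A)`. -/
def boxIter : ℕ → MFml → MFml
  | 0, A => A
  | k + 1, A => .box (boxIter k A)

/-- Evaluation of a modal formula under a valuation of its "propositional atoms"
(propositional variables, and boxed formulas); used to define propositional tautologies
in the modal language. -/
def MFml.evalTC (v : MFml → Prop) : MFml → Prop
  | .bot => False
  | .neg A => ¬ A.evalTC v
  | .and A B => A.evalTC v ∧ B.evalTC v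
  | .or A B => A.evalTC v ∨ B.evalTC v
  | .imp A B => A.evalTC v → B.evalTC v
  | A => v A

/-- Propositional tautologies in the modal language. -/
def MTaut (A : MFml) : Prop := ∀ v, A.evalTC v

/-- Provability in the logic `N⁺A_{m,n}`: the pure logic of necessitation `N`
(propositional tautologies, modus ponens, necessitation) together with the axiom scheme
`□ⁿA → □ᵐA` and the rule `Ros□` (from `¬□A` infer `¬□□A`). -/
inductive NAProves (m n : ℕ) : MFml → Prop
  | taut {A} : MTaut A → NAProves m n A
  | acc (A) : NAProves m n (.imp (boxIter n A) (boxIter m A))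
  | mp {A B} : NAProves m n (.imp A B) → NAProves m n A → NAProves m n B
  | nec {A} : NAProves m n A → NAProves m n (.box A)
  | ros {A} : NAProves m n (.neg (.box A)) → NAProves m n (.neg (.box (.box A)))

/-- `IsSub B A` : `B` is a subformula of `A`. -/
inductive IsSub : MFml → MFml → Prop
  | refl (A) : IsSub A A
  | neg {B A} : IsSub B A → IsSub B (.neg A)
  | andL {B A C} : IsSub B A → IsSub B (.and A C)
  | andR {B A C} : IsSub B C → IsSub B (.and A C)
  | orL {B A C} : IsSub B A → IsSub B (.or A C)
  | orR {B A C} : IsSub B C → IsSub B (.or A C)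
  | impL {B A C} : IsSub B A → IsSub B (.imp A C)
  | impR {B A C} : IsSub B C → IsSub B (.imp A C)
  | box {B A} : IsSub B A → IsSub B (.box A)

/-! ### N-frames and N-models -/

/-- An N-model on a set `W` of worlds: an N-frame (a binary relation `≺_B` on `W`
for each modal formula `B`) together with a valuation of propositional variables. -/
structure NModel (W : Type) where
  rel : MFml → W → W → Prop
  val : W → ℕ → Prop

/-- The forcing relation of an N-model:
`x ⊩ □B` iff every `y` with `x ≺_B y` satisfies `y ⊩ B`. -/
def NModel.Forces {W : Type} (M : NModel W) : W → MFml → Prop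
  | x, .var p => M.val x p
  | _, .bot => False
  | x, .neg A => ¬ NModel.Forces M x A
  | x, .and A B => NModel.Forces M x A ∧ NModel.Forces M x B
  | x, .or A B => NModel.Forces M x A ∨ NModel.Forces M x B
  | x, .imp A B => NModel.Forces M x A → NModel.Forces M x B
  | x, .box A => ∀ y, M.rel A x y → NModel.Forces M y A

/-- The relations `≺_B^k` : `x ≺_B^0 y` iff `x = y`, and
`x ≺_B^(k+1) y` iff `∃ w, x ≺_{□ᵏB} w` and `w ≺_B^k y`. -/
def NModel.relIter {W : Type} (M : NModel W) (B : MFml) : ℕ → W → W → Prop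
  | 0, x, y => x = y
  | k + 1, x, y => ∃ w, M.rel (boxIter k B) x w ∧ NModel.relIter M B k w y

/-- `(m,n)`-accessibility of (the frame of) an N-model. -/
def NModel.Accessible {W : Type} (M : NModel W) (m n : ℕ) : Prop :=
  ∀ (B : MFml) (x y : W), NModel.relIter M B m x y → NModel.relIter M B n x y

/-! ### The language of first-order arithmetic -/

/-- Terms of the language of arithmetic, with de Bruijn variables. -/
inductive ATerm : Type
  | var : ℕ → ATerm
  | zero : ATerm
  | succ : ATerm → ATerm
  | add : ATerm → ATerm → ATerm
  | mul : ATerm → ATerm → ATerm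
  deriving DecidableEq

/-- Formulas of the language of arithmetic (with `≤` primitive), de Bruijn variables. -/
inductive AFml : Type
  | eq : ATerm → ATerm → AFml
  | le : ATerm → ATerm → AFml
  | neg : AFml → AFml
  | and : AFml → AFml → AFml
  | or : AFml → AFml → AFml
  | imp : AFml → AFml → AFml
  | all : AFml → AFml
  | ex : AFml → AFml
  deriving DecidableEq

/-- Lift (shift up by one) the variables `≥ c` of a term. -/
def ATerm.lift (c : ℕ) : ATerm → ATerm
  | .var n => .var (if n < c then n else n + 1)
  | .zero => .zero
  | .succ t => .succ (t.lift c)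
  | .add t s => .add (t.lift c) (s.lift c)
  | .mul t s => .mul (t.lift c) (s.lift c)

/-- Simultaneous substitution in terms. -/
def ATerm.substAll (σ : ℕ → ATerm) : ATerm → ATerm
  | .var n => σ n
  | .zero => .zero
  | .succ t => .succ (t.substAll σ)
  | .add t s => .add (t.substAll σ) (s.substAll σ)
  | .mul t s => .mul (t.substAll σ) (s.substAll σ)

/-- Pushing a substitution under a binder. -/
def liftSub (σ : ℕ → ATerm) : ℕ → ATerm
  | 0 => .var 0
  | n + 1 => (σ n).lift 0

/-- Lift (shift up by one) the free variables `≥ c` of a formula. -/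
def AFml.lift (c : ℕ) : AFml → AFml
  | .eq t s => .eq (t.lift c) (s.lift c)
  | .le t s => .le (t.lift c) (s.lift c)
  | .neg φ => .neg (φ.lift c)
  | .and φ ψ => .and (φ.lift c) (ψ.lift c)
  | .or φ ψ => .or (φ.lift c) (ψ.lift c)
  | .imp φ ψ => .imp (φ.lift c) (ψ.lift c)
  | .all φ => .all (φ.lift (c + 1))
  | .ex φ => .ex (φ.lift (c + 1))

/-- Simultaneous (capture-avoiding) substitution in formulas. -/
def AFml.substAll (σ : ℕ → ATerm) : AFml → AFml
  | .eq t s => .eq (t.substAll σ) (s.substAll σ)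
  | .le t s => .le (t.substAll σ) (s.substAll σ)
  | .neg φ => .neg (φ.substAll σ)
  | .and φ ψ => .and (φ.substAll σ) (ψ.substAll σ)
  | .or φ ψ => .or (φ.substAll σ) (ψ.substAll σ)
  | .imp φ ψ => .imp (φ.substAll σ) (ψ.substAll σ)
  | .all φ => .all (φ.substAll (liftSub σ))
  | .ex φ => .ex (φ.substAll (liftSub σ))

def subst0Env (t : ATerm) : ℕ → ATerm
  | 0 => t
  | n + 1 => .var n

def subst2Env (t s : ATerm) : ℕ → ATerm
  | 0 => t
  | 1 => s
  | n + 2 => .var n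

/-- Substitute the term `t` for the free variable `0` (decrementing other variables). -/
def AFml.subst0 (φ : AFml) (t : ATerm) : AFml := φ.substAll (subst0Env t)

/-- Substitute the terms `t`, `s` for the free variables `0`, `1` simultaneously. -/
def AFml.subst2 (φ : AFml) (t s : ATerm) : AFml := φ.substAll (subst2Env t s)

/-- Substitute `S(var 0)` for `var 0`, leaving all other free variables unchanged. -/
def succSubst (φ : AFml) : AFml :=
  φ.substAll fun n => if n = 0 then .succ (.var 0) else .var n

/-- All variables of a term are `< c`. -/
def ATerm.FreeLt (c : ℕ) : ATerm → Prop
  | .var n => n < c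
  | .zero => True
  | .succ t => t.FreeLt c
  | .add t s => t.FreeLt c ∧ s.FreeLt c
  | .mul t s => t.FreeLt c ∧ s.FreeLt c

/-- All free variables of a formula are `< c`; `FreeLt 0 φ` says that `φ` is a sentence. -/
def AFml.FreeLt (c : ℕ) : AFml → Prop
  | .eq t s => t.FreeLt c ∧ s.FreeLt c
  | .le t s => t.FreeLt c ∧ s.FreeLt c
  | .neg φ => φ.FreeLt c
  | .and φ ψ => φ.FreeLt c ∧ ψ.FreeLt c
  | .or φ ψ => φ.FreeLt c ∧ ψ.FreeLt c
  | .imp φ ψ => φ.FreeLt c ∧ ψ.FreeLt c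
  | .all φ => φ.FreeLt (c + 1)
  | .ex φ => φ.FreeLt (c + 1)

/-- The numeral `n̄`. -/
def numeral : ℕ → ATerm
  | 0 => .zero
  | n + 1 => .succ (numeral n)

/-- A Gödel numbering of terms. -/
def ATerm.code : ATerm → ℕ
  | .var n => Nat.pair 0 n
  | .zero => Nat.pair 1 0
  | .succ t => Nat.pair 2 t.code
  | .add t s => Nat.pair 3 (Nat.pair t.code s.code)
  | .mul t s => Nat.pair 4 (Nat.pair t.code s.code)

/-- A Gödel numbering of formulas. -/
def AFml.code : AFml → ℕ
  | .eq t s => Nat.pair 0 (Nat.pair t.code s.code)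
  | .le t s => Nat.pair 1 (Nat.pair t.code s.code)
  | .neg φ => Nat.pair 2 φ.code
  | .and φ ψ => Nat.pair 3 (Nat.pair φ.code ψ.code)
  | .or φ ψ => Nat.pair 4 (Nat.pair φ.code ψ.code)
  | .imp φ ψ => Nat.pair 5 (Nat.pair φ.code ψ.code)
  | .all φ => Nat.pair 6 φ.code
  | .ex φ => Nat.pair 7 φ.code

/-- `⌜φ⌝`, the numeral of the Gödel number of `φ`. -/
def gnum (φ : AFml) : ATerm := numeral φ.code

/-- For a formula `P(x)` (with free variable `var 0`), `P.appNum φ` is `P(⌜φ⌝)`. -/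
def AFml.appNum (P φ : AFml) : AFml := P.subst0 (gnum φ)

/-- Iterated application of a predicate: `iterPred P k φ = P(⌜P(⌜⋯P(⌜φ⌝)⋯⌝)⌝)` (`k` times). -/
def iterPred (P : AFml) : ℕ → AFml → AFml
  | 0, φ => φ
  | k + 1, φ => P.appNum (iterPred P k φ)

/-! ### Satisfaction in the standard model -/

def ATerm.val (ρ : ℕ → ℕ) : ATerm → ℕ
  | .var n => ρ n
  | .zero => 0
  | .succ t => t.val ρ + 1
  | .add t s => t.val ρ + s.val ρ
  | .mul t s => t.val ρ * s.val ρ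

def consEnv (a : ℕ) (ρ : ℕ → ℕ) : ℕ → ℕ
  | 0 => a
  | n + 1 => ρ n

/-- Satisfaction in the standard model `ℕ` under an environment `ρ`. -/
def AFml.Sat (ρ : ℕ → ℕ) : AFml → Prop
  | .eq t s => t.val ρ = s.val ρ
  | .le t s => t.val ρ ≤ s.val ρ
  | .neg φ => ¬ φ.Sat ρ
  | .and φ ψ => φ.Sat ρ ∧ ψ.Sat ρ
  | .or φ ψ => φ.Sat ρ ∨ ψ.Sat ρ
  | .imp φ ψ => φ.Sat ρ → ψ.Sat ρ
  | .all φ => ∀ a, φ.Sat (consEnv a ρ)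
  | .ex φ => ∃ a, φ.Sat (consEnv a ρ)

/-- `ℕ ⊨ φ`. -/
def TrueN (φ : AFml) : Prop := φ.Sat fun _ => 0

/-! ### The arithmetical hierarchy: Δ₀, Σ₁, Π₁ -/

/-- `Δ₀` formulas: every quantifier is bounded. -/
inductive IsDelta0 : AFml → Prop
  | eq (t s : ATerm) : IsDelta0 (.eq t s)
  | le (t s : ATerm) : IsDelta0 (.le t s)
  | neg {φ} : IsDelta0 φ → IsDelta0 (.neg φ)
  | and {φ ψ} : IsDelta0 φ → IsDelta0 ψ → IsDelta0 (.and φ ψ)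
  | or {φ ψ} : IsDelta0 φ → IsDelta0 ψ → IsDelta0 (.or φ ψ)
  | imp {φ ψ} : IsDelta0 φ → IsDelta0 ψ → IsDelta0 (.imp φ ψ)
  | ball {φ : AFml} (t : ATerm) : IsDelta0 φ → IsDelta0 (.all (.imp (.le (.var 0) (ATerm.lift 0 t)) φ))
  | bex {φ : AFml} (t : ATerm) : IsDelta0 φ → IsDelta0 (.ex (.and (.le (.var 0) (ATerm.lift 0 t)) φ))

mutual
  /-- `Σ₁` formulas. -/
  inductive IsSigma1 : AFml → Prop
    | delta0 {φ} : IsDelta0 φ → IsSigma1 φ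
    | and {φ ψ} : IsSigma1 φ → IsSigma1 ψ → IsSigma1 (.and φ ψ)
    | or {φ ψ} : IsSigma1 φ → IsSigma1 ψ → IsSigma1 (.or φ ψ)
    | ex {φ} : IsSigma1 φ → IsSigma1 (.ex φ)
    | negPi {φ} : IsPi1 φ → IsSigma1 (.neg φ)
    | impPiSigma {φ ψ} : IsPi1 φ → IsSigma1 ψ → IsSigma1 (.imp φ ψ)
  /-- `Π₁` formulas. -/
  inductive IsPi1 : AFml → Prop
    | delta0 {φ} : IsDelta0 φ → IsPi1 φ
    | and {φ ψ} : IsPi1 φ → IsPi1 ψ → IsPi1 (.and φ ψ)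
    | or {φ ψ} : IsPi1 φ → IsPi1 ψ → IsPi1 (.or φ ψ)
    | all {φ} : IsPi1 φ → IsPi1 (.all φ)
    | negSigma {φ} : IsSigma1 φ → IsPi1 (.neg φ)
    | impSigmaPi {φ ψ} : IsSigma1 φ → IsPi1 ψ → IsPi1 (.imp φ ψ)
end

/-! ### A Hilbert-style proof system for first-order arithmetic -/

/-- Evaluation of an arithmetical formula under a valuation of its "propositionally atomic"
subformulas (atomic or quantified formulas); used for propositional tautologies and
tautological consequence. -/
def AFml.evalProp (v : AFml → Prop) : AFml → Prop
  | .neg φ => ¬ φ.evalProp v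
  | .and φ ψ => φ.evalProp v ∧ ψ.evalProp v
  | .or φ ψ => φ.evalProp v ∨ ψ.evalProp v
  | .imp φ ψ => φ.evalProp v → ψ.evalProp v
  | φ => v φ

/-- Propositional tautologies in the language of arithmetic. -/
def ATaut (φ : AFml) : Prop := ∀ v, φ.evalProp v

/-- `φ` is a tautological consequence of the set `X` of formulas. -/
def TC (X : Set AFml) (φ : AFml) : Prop :=
  ∀ v : AFml → Prop, (∀ ψ ∈ X, ψ.evalProp v) → φ.evalProp v

def iffF (φ ψ : AFml) : AFml := .and (.imp φ ψ) (.imp ψ φ)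

/-- Hilbert-style provability from the set of axioms `Γ` in classical first-order
logic with equality. -/
inductive Proves (Γ : Set AFml) : AFml → Prop
  | ax {φ} : φ ∈ Γ → Proves Γ φ
  | taut {φ} : ATaut φ → Proves Γ φ
  | mp {φ ψ} : Proves Γ (.imp φ ψ) → Proves Γ φ → Proves Γ ψ
  | allE (φ : AFml) (t : ATerm) : Proves Γ (.imp (.all φ) (φ.subst0 t))
  | exI (φ : AFml) (t : ATerm) : Proves Γ (.imp (φ.subst0 t) (.ex φ))
  | allImp (φ ψ : AFml) : Proves Γ (.imp (.all (.imp φ ψ)) (.imp (.all φ) (.all ψ)))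
  | vacAll (φ : AFml) : Proves Γ (.imp φ (.all (AFml.lift 0 φ)))
  | exDef (φ : AFml) : Proves Γ (iffF (.ex φ) (.neg (.all (.neg φ))))
  | gen {φ} : Proves Γ φ → Proves Γ (.all φ)
  | eqRefl (t : ATerm) : Proves Γ (.eq t t)
  | eqSubst (φ : AFml) (t s : ATerm) : Proves Γ (.imp (.eq t s) (.imp (φ.subst0 t) (φ.subst0 s)))

/-! ### Peano arithmetic -/

/-- The axioms of Peano arithmetic. -/
inductive PAax : AFml → Prop
  | succNeZero : PAax (.all (.neg (.eq (.succ (.var 0)) .zero)))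
  | succInj :
      PAax (.all (.all (.imp (.eq (.succ (.var 1)) (.succ (.var 0))) (.eq (.var 1) (.var 0)))))
  | addZero : PAax (.all (.eq (.add (.var 0) .zero) (.var 0)))
  | addSucc :
      PAax (.all (.all (.eq (.add (.var 1) (.succ (.var 0))) (.succ (.add (.var 1) (.var 0))))))
  | mulZero : PAax (.all (.eq (.mul (.var 0) .zero) .zero))
  | mulSucc :
      PAax (.all (.all (.eq (.mul (.var 1) (.succ (.var 0)))
        (.add (.mul (.var 1) (.var 0)) (.var 1)))))
  | leDef :
      PAax (.all (.all (iffF (.le (.var 1) (.var 0))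
        (.ex (.eq (.add (.var 0) (.var 2)) (.var 1))))))
  | ind (φ : AFml) :
      PAax (.imp (.and (φ.subst0 .zero) (.all (.imp φ (succSubst φ)))) (.all φ))

/-- Peano arithmetic, as a set of axioms. -/
def PA : Set AFml := {φ | PAax φ}

/-- The sentence `0 = 1`. -/
def botFml : AFml := .eq .zero (.succ .zero)

/-- `t < s`, as the formula `S(t) ≤ s`. -/
def ltF (t s : ATerm) : AFml := .le (.succ t) s

/-- `Δ₁(PA)` formulas: `Σ₁` formulas which are `PA`-provably equivalent to a `Π₁` formula. -/
def IsDelta1PA (φ : AFml) : Prop :=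
  IsSigma1 φ ∧ ∃ ψ, IsPi1 ψ ∧ Proves PA (iffF φ ψ)

/-! ### Theories, provability predicates, arithmetical interpretations -/

/-- `Tax` is primitive recursively axiomatized (via the Gödel numbering). -/
def PrAxiomatized (Tax : Set AFml) : Prop :=
  ∃ p : ℕ → Bool, Primrec p ∧ ∀ φ : AFml, φ ∈ Tax ↔ p φ.code = true

/-- `Σ₁`-soundness: every `T`-provable `Σ₁` sentence is true in `ℕ`. -/
def Sigma1Sound (Tax : Set AFml) : Prop :=
  ∀ φ : AFml, IsSigma1 φ → φ.FreeLt 0 → Proves Tax φ → TrueN φ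

/-- `P` is a provability predicate of `T`: a formula `P(x)` with at most the free
variable `x` such that for every formula `φ`, `T ⊢ φ` iff `PA ⊢ P(⌜φ⌝)`. -/
def IsProvPred (Tax : Set AFml) (P : AFml) : Prop :=
  P.FreeLt 1 ∧ ∀ φ : AFml, Proves Tax φ ↔ Proves PA (P.appNum φ)

/-- `f` is an arithmetical interpretation based on the predicate `P`. -/
def IsInterp (P : AFml) (f : MFml → AFml) : Prop :=
  (∀ i, (f (.var i)).FreeLt 0) ∧
  f .bot = botFml ∧
  (∀ A, f (.neg A) = .neg (f A)) ∧
  (∀ A B, f (.and A B) = .and (f A) (f B)) ∧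
  (∀ A B, f (.or A B) = .or (f A) (f B)) ∧
  (∀ A B, f (.imp A B) = .imp (f A) (f B)) ∧
  (∀ A, f (.box A) = P.appNum (f A))

/-- The provability logic of the predicate `P` (relative to the theory `Tax`). -/
def PL (Tax : Set AFml) (P : AFml) : Set MFml :=
  {A | ∀ f : MFml → AFml, IsInterp P f → Proves Tax (f A)}

/-- The formulas with a `T`-proof of code `≤ s` (relative to a proof enumeration `prf`). -/
def PTset (prf : ℕ → Option AFml) (s : ℕ) : Set AFml :=
  {φ | ∃ y ≤ s, prf y = some φ}

/-! `PR_T(x)` says that `x` belongs to some finite set of accepted numbers which is closed under the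
implications between boxes required by the logic: from `□ᴺA` to `□ᴹA`, and from `□A` to a fixed
contradiction once `¬A` has been enumerated as a theorem, where `N = n - 1`, `M = m - 1` since the
implications hold between arguments of `PR_T`. PA proves closure of the whole predicate under each
such implication: a witness which exceeds some standard number is closed under it by definition,
and the finitely many smaller ones are decided. `PR_T` has its own code as a parameter, so that the
code of `PR_T(c)` is an explicit function of `c`.

Accepted are the theorems of `T` in the order of an enumeration, until a stage at which some finite
set compatible with the implications, used as an interpretation of the box, makes an enumerated
theorem false by propositional logic; from then on the members of this set are accepted instead. If
that happened, the true instances of `PR_T` would be the members of the set, and `T` would prove a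
false `Σ₁` sentence. So it never happens, and `PR_T` defines provability. Conversely, let `X` be
underivable. A valuation refuting `X` induces a finite set which makes the canonical interpretation
of `X` false, and which is compatible with the implications; were that interpretation a theorem,
the construction would switch at the stage enumerating it. -/

/-! ### Substitution -/

/-- The renaming carried out by `lift c`. -/
def liftEnv (c : ℕ) (n : ℕ) : ATerm := .var (if n < c then n else n + 1)

/-- The substitution sending variable `0` to `t` and variable `n + 1` to `σ n`. -/
def consSubst (t : ATerm) (σ : ℕ → ATerm) : ℕ → ATerm
  | 0 => t
  | n + 1 => σ n

/-- The substitution of numerals corresponding to an environment. -/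
def numeralEnv (ρ : ℕ → ℕ) (n : ℕ) : ATerm := numeral (ρ n)

theorem liftEnv_zero : liftEnv 0 = fun n => .var (n + 1) := by
  funext n; simp [liftEnv]

theorem liftSub_liftEnv (c : ℕ) : liftSub (liftEnv c) = liftEnv (c + 1) := by
  funext n
  cases n with
  | zero => simp [liftSub, liftEnv]
  | succ n => by_cases h : n < c <;> simp [liftSub, liftEnv, ATerm.lift, h]

@[simp] theorem liftSub_var : liftSub ATerm.var = ATerm.var := by
  funext n; cases n <;> simp [liftSub, ATerm.lift]

theorem consSubst_numeralEnv (a : ℕ) (ρ : ℕ → ℕ) :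
    consSubst (numeral a) (numeralEnv ρ) = numeralEnv (consEnv a ρ) := by
  funext n; cases n <;> rfl

namespace ATerm

theorem lift_eq_substAll (c : ℕ) (t : ATerm) : t.lift c = t.substAll (liftEnv c) := by
  induction t <;> simp_all [lift, substAll, liftEnv]

theorem substAll_substAll (σ τ : ℕ → ATerm) (t : ATerm) :
    (t.substAll σ).substAll τ = t.substAll (fun n => (σ n).substAll τ) := by
  induction t <;> simp_all [substAll]

@[simp] theorem substAll_var (t : ATerm) : t.substAll var = t := by
  induction t <;> simp_all [substAll]

theorem lift_substAll_liftSub (τ : ℕ → ATerm) (t : ATerm) :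
    (t.lift 0).substAll (liftSub τ) = (t.substAll τ).lift 0 := by
  induction t <;> simp_all [lift, substAll, liftSub]

@[simp] theorem lift_substAll_subst0Env (t s : ATerm) :
    (t.lift 0).substAll (subst0Env s) = t := by
  rw [lift_eq_substAll, substAll_substAll]
  simp [liftEnv, substAll, subst0Env]

theorem substAll_congr {c : ℕ} {σ τ : ℕ → ATerm} (h : ∀ n < c, σ n = τ n) {t : ATerm}
    (ht : t.FreeLt c) : t.substAll σ = t.substAll τ := by
  induction t <;> simp_all [substAll, FreeLt]

theorem FreeLt.lift {t : ATerm} {c : ℕ} (h : t.FreeLt c) : (t.lift 0).FreeLt (c + 1) := by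
  induction t <;> simp_all [FreeLt, ATerm.lift]

theorem FreeLt.substAll {c : ℕ} {σ : ℕ → ATerm} (h : ∀ n, (σ n).FreeLt c) (t : ATerm) :
    (t.substAll σ).FreeLt c := by
  induction t <;> simp_all [FreeLt, ATerm.substAll]

theorem FreeLt.mono {t : ATerm} {c d : ℕ} (h : t.FreeLt c) (hcd : c ≤ d) : t.FreeLt d := by
  induction t <;> simp_all [FreeLt]
  omega

theorem val_substAll (σ : ℕ → ATerm) (ρ : ℕ → ℕ) (t : ATerm) :
    (t.substAll σ).val ρ = t.val (fun n => (σ n).val ρ) := by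
  induction t <;> simp_all [val, substAll]

theorem val_lift (t : ATerm) (a : ℕ) (ρ : ℕ → ℕ) : (t.lift 0).val (consEnv a ρ) = t.val ρ := by
  induction t <;> simp_all [val, lift, consEnv]

theorem code_injective : Function.Injective code := by
  intro t s
  induction t generalizing s <;> cases s <;> simp_all [code] <;> aesop

end ATerm

@[simp] theorem numeral_substAll (n : ℕ) (σ : ℕ → ATerm) :
    (numeral n).substAll σ = numeral n := by
  induction n <;> simp_all [numeral, ATerm.substAll]

@[simp] theorem numeral_lift (n c : ℕ) : (numeral n).lift c = numeral n := by
  rw [ATerm.lift_eq_substAll, numeral_substAll]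

theorem numeral_freeLt (n c : ℕ) : (numeral n).FreeLt c := by
  induction n <;> simp_all [numeral, ATerm.FreeLt]

@[simp] theorem numeral_val (n : ℕ) (ρ : ℕ → ℕ) : (numeral n).val ρ = n := by
  induction n <;> simp_all [numeral, ATerm.val]

theorem numeral_injective : Function.Injective numeral :=
  Function.LeftInverse.injective (g := ATerm.val fun _ => 0) fun n => numeral_val n _

@[simp] theorem ATerm.lift_substAll_numeralEnv (t : ATerm) (ρ : ℕ → ℕ) (c : ℕ) :
    (t.substAll (numeralEnv ρ)).lift c = t.substAll (numeralEnv ρ) := by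
  rw [lift_eq_substAll, substAll_substAll]
  simp only [numeralEnv, numeral_substAll]
  rfl

theorem substAll_liftSub_comp (σ τ : ℕ → ATerm) :
    (fun n => (liftSub σ n).substAll (liftSub τ)) = liftSub (fun n => (σ n).substAll τ) := by
  funext n
  cases n with
  | zero => simp [liftSub, ATerm.substAll]
  | succ n => simp [liftSub, ATerm.lift_substAll_liftSub]

theorem liftSub_congr {c : ℕ} {σ τ : ℕ → ATerm} (h : ∀ n < c, σ n = τ n) :
    ∀ n < c + 1, liftSub σ n = liftSub τ n
  | 0, _ => rfl
  | n + 1, hn => by simp [liftSub, h n (by omega)]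

theorem liftSub_freeLt {c : ℕ} {σ : ℕ → ATerm} (h : ∀ n, (σ n).FreeLt c) :
    ∀ n, (liftSub σ n).FreeLt (c + 1)
  | 0 => by simp [liftSub, ATerm.FreeLt]
  | n + 1 => (h n).lift

theorem val_liftSub (σ : ℕ → ATerm) (ρ : ℕ → ℕ) (a : ℕ) :
    (fun n => (liftSub σ n).val (consEnv a ρ)) = consEnv a (fun n => (σ n).val ρ) := by
  funext n
  cases n with
  | zero => simp [liftSub, ATerm.val, consEnv]
  | succ n => simp [liftSub, ATerm.val_lift, consEnv]

namespace AFml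

theorem lift_eq_substAll (c : ℕ) (φ : AFml) : φ.lift c = φ.substAll (liftEnv c) := by
  induction φ generalizing c <;>
    simp_all [lift, substAll, ATerm.lift_eq_substAll, liftSub_liftEnv]

theorem substAll_substAll (σ τ : ℕ → ATerm) (φ : AFml) :
    (φ.substAll σ).substAll τ = φ.substAll (fun n => (σ n).substAll τ) := by
  induction φ generalizing σ τ <;>
    simp_all [substAll, ATerm.substAll_substAll, substAll_liftSub_comp]

@[simp] theorem substAll_var (φ : AFml) : φ.substAll ATerm.var = φ := by
  induction φ <;> simp_all [substAll]

theorem substAll_congr {c : ℕ} {σ τ : ℕ → ATerm} (h : ∀ n < c, σ n = τ n) {φ : AFml}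
    (hφ : φ.FreeLt c) : φ.substAll σ = φ.substAll τ := by
  induction φ generalizing c σ τ with
  | eq t s | le t s =>
    simp only [substAll, ATerm.substAll_congr h hφ.1, ATerm.substAll_congr h hφ.2]
  | neg φ ih => simp only [substAll, ih h hφ]
  | and φ ψ ih₁ ih₂ | or φ ψ ih₁ ih₂ | imp φ ψ ih₁ ih₂ =>
    simp only [substAll, ih₁ h hφ.1, ih₂ h hφ.2]
  | all φ ih | ex φ ih => simp only [substAll, ih (liftSub_congr h) hφ]

theorem substAll_eq_self {c : ℕ} {σ : ℕ → ATerm} (h : ∀ n < c, σ n = .var n) {φ : AFml}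
    (hφ : φ.FreeLt c) : φ.substAll σ = φ := by
  rw [substAll_congr h hφ, substAll_var]

theorem FreeLt.substAll {c : ℕ} {σ : ℕ → ATerm} (h : ∀ n, (σ n).FreeLt c) (φ : AFml) :
    (φ.substAll σ).FreeLt c := by
  induction φ generalizing c σ with
  | eq t s | le t s => exact ⟨ATerm.FreeLt.substAll h t, ATerm.FreeLt.substAll h s⟩
  | neg _ ih => exact ih h
  | and _ _ ih₁ ih₂ | or _ _ ih₁ ih₂ | imp _ _ ih₁ ih₂ => exact ⟨ih₁ h, ih₂ h⟩
  | all _ ih | ex _ ih => exact ih (liftSub_freeLt h)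

theorem FreeLt.subst0 {φ : AFml} {t : ATerm} {c : ℕ} (hφ : φ.FreeLt 1) (ht : t.FreeLt c) :
    (φ.subst0 t).FreeLt c := by
  rw [AFml.subst0, substAll_congr (τ := fun _ => t) (fun | 0, _ => rfl) hφ]
  exact .substAll (fun _ => ht) φ

theorem FreeLt.mono {φ : AFml} {c d : ℕ} (h : φ.FreeLt c) (hcd : c ≤ d) : φ.FreeLt d := by
  induction φ generalizing c d with
  | eq t s | le t s => exact ⟨ATerm.FreeLt.mono h.1 hcd, ATerm.FreeLt.mono h.2 hcd⟩
  | neg φ ih => exact ih h hcd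
  | and φ ψ ih₁ ih₂ | or φ ψ ih₁ ih₂ | imp φ ψ ih₁ ih₂ => exact ⟨ih₁ h.1 hcd, ih₂ h.2 hcd⟩
  | all φ ih | ex φ ih => exact ih h (Nat.succ_le_succ hcd)

theorem sat_substAll (σ : ℕ → ATerm) (ρ : ℕ → ℕ) (φ : AFml) :
    (φ.substAll σ).Sat ρ ↔ φ.Sat (fun n => (σ n).val ρ) := by
  induction φ generalizing σ ρ <;>
    simp_all [substAll, Sat, ATerm.val_substAll, val_liftSub]

theorem lift_one_subst0_var (φ : AFml) : (φ.lift 1).subst0 (.var 0) = φ := by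
  rw [lift_eq_substAll, subst0, substAll_substAll]
  convert substAll_var φ using 2
  funext n
  cases n <;> simp [liftEnv, ATerm.substAll, subst0Env]

theorem lift_one_subst0_lift (φ : AFml) (t : ATerm) :
    (φ.lift 1).subst0 (t.lift 0) = (φ.subst0 t).lift 0 := by
  rw [lift_eq_substAll, lift_eq_substAll, subst0, subst0, substAll_substAll, substAll_substAll]
  congr 1
  funext n
  cases n <;> simp [liftEnv, ATerm.substAll, subst0Env, ATerm.lift_eq_substAll]

theorem lift_substAll_liftSub (φ : AFml) (σ : ℕ → ATerm) :
    (φ.lift 0).substAll (liftSub σ) = (φ.substAll σ).lift 0 := by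
  rw [lift_eq_substAll, lift_eq_substAll, substAll_substAll, substAll_substAll]
  congr 1
  funext n
  simp [liftEnv, ATerm.substAll, liftSub, ATerm.lift_eq_substAll]

theorem substAll_liftSub_subst0 (φ : AFml) (σ : ℕ → ATerm) (t : ATerm) :
    (φ.substAll (liftSub σ)).subst0 t = φ.substAll (consSubst t σ) := by
  rw [subst0, substAll_substAll]
  congr 1
  funext n
  cases n <;> simp [liftSub, consSubst, ATerm.substAll, subst0Env]

theorem substAll_numeralEnv_subst0 (φ : AFml) (ρ : ℕ → ℕ) (a : ℕ) :
    (φ.substAll (liftSub (numeralEnv ρ))).subst0 (numeral a) =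
      φ.substAll (numeralEnv (consEnv a ρ)) := by
  rw [substAll_liftSub_subst0, consSubst_numeralEnv]

theorem subst0_substAll (φ : AFml) (t : ATerm) (σ : ℕ → ATerm) :
    (φ.subst0 t).substAll σ = (φ.substAll (liftSub σ)).subst0 (t.substAll σ) := by
  rw [substAll_liftSub_subst0, subst0, substAll_substAll]
  congr 1
  funext n
  cases n <;> simp [subst0Env, consSubst, ATerm.substAll]

theorem evalProp_substAll (v : AFml → Prop) (σ : ℕ → ATerm) (φ : AFml) :
    (φ.substAll σ).evalProp v ↔ φ.evalProp (fun ψ => (ψ.substAll σ).evalProp v) := by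
  induction φ <;> simp_all [substAll, evalProp]

theorem code_injective : Function.Injective code := by
  intro φ ψ h
  induction φ generalizing ψ <;> cases ψ <;>
    grind [code, Nat.pair_eq_pair, ATerm.code_injective.eq_iff]

end AFml

theorem succSubst_substAll (φ : AFml) (σ : ℕ → ATerm) :
    (succSubst φ).substAll (liftSub σ) = succSubst (φ.substAll (liftSub σ)) := by
  rw [succSubst, succSubst, AFml.substAll_substAll, AFml.substAll_substAll]
  congr 1
  funext n
  cases n with
  | zero => simp [liftSub, ATerm.substAll]
  | succ n =>
    simp [liftSub, liftEnv_zero, ATerm.substAll, ATerm.lift_eq_substAll,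
      ATerm.substAll_substAll]

theorem succSubst_subst0_numeral (φ : AFml) (n : ℕ) :
    (succSubst φ).subst0 (numeral n) = φ.subst0 (numeral (n + 1)) := by
  rw [succSubst, AFml.subst0, AFml.substAll_substAll, AFml.subst0]
  congr 1
  funext k
  cases k <;> simp [ATerm.substAll, subst0Env, numeral]

theorem IsDelta0.substAll {φ : AFml} (h : IsDelta0 φ) (σ : ℕ → ATerm) :
    IsDelta0 (φ.substAll σ) := by
  induction h generalizing σ with
  | eq t s => exact .eq _ _
  | le t s => exact .le _ _
  | neg _ ih => exact .neg (ih σ)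
  | and _ _ ih₁ ih₂ => exact .and (ih₁ σ) (ih₂ σ)
  | or _ _ ih₁ ih₂ => exact .or (ih₁ σ) (ih₂ σ)
  | imp _ _ ih₁ ih₂ => exact .imp (ih₁ σ) (ih₂ σ)
  | ball t _ ih =>
    simp only [AFml.substAll, ATerm.lift_substAll_liftSub]
    exact .ball _ (ih _)
  | bex t _ ih =>
    simp only [AFml.substAll, ATerm.lift_substAll_liftSub]
    exact .bex _ (ih _)

/-! ### The Hilbert calculus -/

namespace Proves

section
variable {Γ : Set AFml} {A B C D : AFml}

theorem taut₁ (hA : Proves Γ A)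
    (h : ∀ v, A.evalProp v → B.evalProp v := by
      intro v; simp only [AFml.evalProp, AFml.lift, AFml.substAll, iffF]; tauto) :
    Proves Γ B :=
  .mp (.taut h) hA

theorem taut₂ (hA : Proves Γ A) (hB : Proves Γ B)
    (h : ∀ v, A.evalProp v → B.evalProp v → C.evalProp v := by
      intro v; simp only [AFml.evalProp, AFml.lift, AFml.substAll, iffF]; tauto) :
    Proves Γ C :=
  .mp (.mp (.taut (φ := .imp A (.imp B C)) h) hA) hB

theorem taut₃ (hA : Proves Γ A) (hB : Proves Γ B) (hC : Proves Γ C)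
    (h : ∀ v, A.evalProp v → B.evalProp v → C.evalProp v → D.evalProp v := by
      intro v; simp only [AFml.evalProp, AFml.lift, AFml.substAll, iffF]; tauto) :
    Proves Γ D :=
  .mp (.mp (.mp (.taut (φ := .imp A (.imp B (.imp C D))) h) hA) hB) hC

theorem mono {Δ : Set AFml} (h : Γ ⊆ Δ) (hA : Proves Γ A) : Proves Δ A := by
  induction hA with
  | ax h' => exact .ax (h h')
  | taut h' => exact .taut h'
  | mp _ _ ih₁ ih₂ => exact .mp ih₁ ih₂
  | allE φ t => exact .allE φ t
  | exI φ t => exact .exI φ t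
  | allImp φ ψ => exact .allImp φ ψ
  | vacAll φ => exact .vacAll φ
  | exDef φ => exact .exDef φ
  | gen _ ih => exact .gen ih
  | eqRefl t => exact .eqRefl t
  | eqSubst φ t s => exact .eqSubst φ t s

theorem imp_trans (h₁ : Proves Γ (.imp A B)) (h₂ : Proves Γ (.imp B C)) :
    Proves Γ (.imp A C) :=
  taut₂ h₁ h₂

theorem imp_all (h : Proves Γ (.imp (A.lift 0) B)) : Proves Γ (.imp A (.all B)) :=
  imp_trans (.vacAll A) (.mp (.allImp _ _) (.gen h))

theorem ex_imp (h : Proves Γ (.imp A (B.lift 0))) : Proves Γ (.imp (.ex A) B) := by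
  have contra : Proves Γ (.imp ((AFml.neg B).lift 0) (.neg A)) := taut₁ h
  exact taut₂ (imp_all contra) (.exDef A)

theorem eq_symm (t s : ATerm) : Proves Γ (.imp (.eq t s) (.eq s t)) := by
  have h := eqSubst (Γ := Γ) (.eq (.var 0) (t.lift 0)) t s
  simp only [AFml.subst0, AFml.substAll, ATerm.substAll, ATerm.lift_substAll_subst0Env,
    subst0Env] at h
  exact taut₂ h (.eqRefl t)

theorem eq_trans (t s r : ATerm) : Proves Γ (.imp (.eq t s) (.imp (.eq s r) (.eq t r))) := by
  have h := eqSubst (Γ := Γ) (.eq (t.lift 0) (.var 0)) s r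
  simp only [AFml.subst0, AFml.substAll, ATerm.substAll, ATerm.lift_substAll_subst0Env,
    subst0Env] at h
  exact taut₁ h

theorem symm {t s : ATerm} (h : Proves Γ (.eq t s)) : Proves Γ (.eq s t) := .mp (.eq_symm t s) h

theorem trans {t s r : ATerm} (h₁ : Proves Γ (.eq t s)) (h₂ : Proves Γ (.eq s r)) :
    Proves Γ (.eq t r) :=
  .mp (.mp (.eq_trans t s r) h₁) h₂

theorem substAll_congr (r t s : ATerm) :
    Proves Γ (.imp (.eq t s)
      (.eq (r.substAll (subst0Env t)) (r.substAll (subst0Env s)))) := by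
  have h := eqSubst (Γ := Γ) (.eq ((r.substAll (subst0Env t)).lift 0) r) t s
  simp only [AFml.subst0, AFml.substAll, ATerm.lift_substAll_subst0Env] at h
  exact taut₂ h (.eqRefl _)

theorem succ_congr (t s : ATerm) : Proves Γ (.imp (.eq t s) (.eq (.succ t) (.succ s))) :=
  substAll_congr (.succ (.var 0)) t s

theorem add_congr {t t' s s' : ATerm} (ht : Proves Γ (.eq t t')) (hs : Proves Γ (.eq s s')) :
    Proves Γ (.eq (.add t s) (.add t' s')) := by
  have h₁ := substAll_congr (Γ := Γ) (.add (.var 0) (s.lift 0)) t t'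
  have h₂ := substAll_congr (Γ := Γ) (.add (t'.lift 0) (.var 0)) s s'
  simp only [ATerm.substAll, ATerm.lift_substAll_subst0Env, subst0Env] at h₁ h₂
  exact trans (.mp h₁ ht) (.mp h₂ hs)

theorem mul_congr {t t' s s' : ATerm} (ht : Proves Γ (.eq t t')) (hs : Proves Γ (.eq s s')) :
    Proves Γ (.eq (.mul t s) (.mul t' s')) := by
  have h₁ := substAll_congr (Γ := Γ) (.mul (.var 0) (s.lift 0)) t t'
  have h₂ := substAll_congr (Γ := Γ) (.mul (t'.lift 0) (.var 0)) s s'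
  simp only [ATerm.substAll, ATerm.lift_substAll_subst0Env, subst0Env] at h₁ h₂
  exact trans (.mp h₁ ht) (.mp h₂ hs)

theorem eq_iff_eq {t t' s s' : ATerm} (ht : Proves Γ (.eq t t')) (hs : Proves Γ (.eq s s')) :
    Proves Γ (iffF (.eq t s) (.eq t' s')) := by
  have h₁ : Proves Γ (.imp (.eq t s) (.eq t' s')) :=
    taut₂ (.mp (.eq_trans t' t s) ht.symm)
      (taut₂ (.eq_trans t' s s') hs : Proves Γ (.imp (.eq t' s) (.eq t' s')))
  have h₂ : Proves Γ (.imp (.eq t' s') (.eq t s)) :=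
    taut₂ (.mp (.eq_trans t t' s') ht)
      (taut₂ (.eq_trans t s' s) hs.symm : Proves Γ (.imp (.eq t s') (.eq t s)))
  exact taut₂ h₁ h₂

theorem le_imp_le {t t' s s' : ATerm} (ht : Proves Γ (.eq t t')) (hs : Proves Γ (.eq s s')) :
    Proves Γ (.imp (.le t s) (.le t' s')) := by
  have h₁ := eqSubst (Γ := Γ) (.le (.var 0) (s.lift 0)) t t'
  have h₂ := eqSubst (Γ := Γ) (.le (t'.lift 0) (.var 0)) s s'
  simp only [AFml.subst0, AFml.substAll, ATerm.substAll, ATerm.lift_substAll_subst0Env,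
    subst0Env] at h₁ h₂
  exact imp_trans (.mp h₁ ht) (.mp h₂ hs)

theorem le_iff_le {t t' s s' : ATerm} (ht : Proves Γ (.eq t t')) (hs : Proves Γ (.eq s s')) :
    Proves Γ (iffF (.le t s) (.le t' s')) :=
  taut₂ (le_imp_le ht hs) (le_imp_le ht.symm hs.symm)

end

end Proves

/-! ### Peano arithmetic on numerals -/

theorem PAax.substAll {φ : AFml} (h : PAax φ) (σ : ℕ → ATerm) : PAax (φ.substAll σ) := by
  cases h with
  | ind φ =>
    simp only [AFml.substAll, AFml.subst0_substAll, succSubst_substAll]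
    exact .ind _
  | succNeZero => exact .succNeZero
  | succInj => exact .succInj
  | addZero => exact .addZero
  | addSucc => exact .addSucc
  | mulZero => exact .mulZero
  | mulSucc => exact .mulSucc
  | leDef => exact .leDef

theorem Proves.substAll {φ : AFml} (h : Proves PA φ) (σ : ℕ → ATerm) :
    Proves PA (φ.substAll σ) := by
  induction h generalizing σ with
  | ax h => exact .ax (PAax.substAll h σ)
  | taut h => exact .taut fun v => (AFml.evalProp_substAll v σ _).2 (h _)
  | mp _ _ ih₁ ih₂ => exact .mp (ih₁ σ) (ih₂ σ)
  | allE φ t => simp only [AFml.substAll, AFml.subst0_substAll]; exact .allE _ _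
  | exI φ t => simp only [AFml.substAll, AFml.subst0_substAll]; exact .exI _ _
  | allImp φ ψ => exact .allImp _ _
  | vacAll φ => simp only [AFml.substAll, AFml.lift_substAll_liftSub]; exact .vacAll _
  | exDef φ => exact .exDef _
  | gen _ ih => exact .gen (ih _)
  | eqRefl t => exact .eqRefl _
  | eqSubst φ t s => simp only [AFml.substAll, AFml.subst0_substAll]; exact .eqSubst _ _ _

theorem Proves.subst0 {φ : AFml} (h : Proves PA φ) (t : ATerm) : Proves PA (φ.subst0 t) :=
  h.substAll _

theorem Proves.subst2 {φ : AFml} (h : Proves PA φ) (t s : ATerm) : Proves PA (φ.subst2 t s) :=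
  h.substAll _

theorem Proves.of_all {φ : AFml} (h : Proves PA (.all φ)) : Proves PA φ := by
  have lifted : Proves PA (.all (φ.lift 1)) := by
    simpa only [← AFml.lift_eq_substAll, AFml.lift] using h.substAll (liftEnv 0)
  simpa only [AFml.lift_one_subst0_var] using Proves.mp (.allE _ (.var 0)) lifted

theorem pa_zero_or_succ {φ : AFml} (h₀ : Proves PA (φ.subst0 .zero))
    (h₁ : Proves PA (succSubst φ)) : Proves PA φ :=
  .of_all (.mp (.ax (.ind φ)) (.taut₂ h₀
    (.gen (.taut₁ (B := .imp φ (succSubst φ)) h₁ fun _ h _ => h))))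

theorem pa_le_def (t s : ATerm) :
    Proves PA (iffF (.le t s) (.ex (.eq (.add (.var 0) (t.lift 0)) (s.lift 0)))) :=
  (Proves.of_all (.of_all (.ax .leDef))).subst2 s t

theorem pa_le_of_add_eq (r t s : ATerm) : Proves PA (.imp (.eq (.add r t) s) (.le t s)) := by
  have h := Proves.exI (Γ := PA) (.eq (.add (.var 0) (t.lift 0)) (s.lift 0)) r
  simp only [AFml.subst0, AFml.substAll, ATerm.substAll, ATerm.lift_substAll_subst0Env,
    subst0Env] at h
  exact .taut₂ h (pa_le_def t s)

theorem pa_le_imp {t s : ATerm} {ψ : AFml}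
    (h : Proves PA (.imp (.eq (.add (.var 0) (t.lift 0)) (s.lift 0)) (ψ.lift 0))) :
    Proves PA (.imp (.le t s) ψ) :=
  .taut₂ (.ex_imp h) (pa_le_def t s)

theorem pa_succ_ne_zero (t : ATerm) : Proves PA (.neg (.eq (.succ t) .zero)) :=
  (Proves.of_all (.ax .succNeZero)).subst0 t

theorem pa_succ_inj (t s : ATerm) : Proves PA (.imp (.eq (.succ t) (.succ s)) (.eq t s)) :=
  (Proves.of_all (.of_all (.ax .succInj))).subst2 s t

theorem pa_add_zero (t : ATerm) : Proves PA (.eq (.add t .zero) t) :=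
  (Proves.of_all (.ax .addZero)).subst0 t

theorem pa_add_succ (t s : ATerm) : Proves PA (.eq (.add t (.succ s)) (.succ (.add t s))) :=
  (Proves.of_all (.of_all (.ax .addSucc))).subst2 s t

theorem pa_mul_zero (t : ATerm) : Proves PA (.eq (.mul t .zero) .zero) :=
  (Proves.of_all (.ax .mulZero)).subst0 t

theorem pa_mul_succ (t s : ATerm) : Proves PA (.eq (.mul t (.succ s)) (.add (.mul t s) t)) :=
  (Proves.of_all (.of_all (.ax .mulSucc))).subst2 s t

theorem pa_not_bot : Proves PA (.neg botFml) :=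
  .taut₂ (pa_succ_ne_zero .zero) (.eq_symm .zero (.succ .zero))

theorem pa_zero_le (t : ATerm) : Proves PA (.le .zero t) :=
  .mp (pa_le_of_add_eq t .zero t) (pa_add_zero t)

theorem pa_not_succ_le_zero (t : ATerm) : Proves PA (.neg (.le (.succ t) .zero)) := by
  refine .taut₁ (pa_le_imp (ψ := .neg (.le (.succ t) .zero)) ?_)
  have h := Proves.mp (.eq_trans _ _ .zero) (pa_add_succ (.var 0) (t.lift 0)).symm
  exact .taut₂ h (pa_succ_ne_zero (.add (.var 0) (t.lift 0)))

theorem pa_succ_le_succ (t s : ATerm) :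
    Proves PA (iffF (.le (.succ t) (.succ s)) (.le t s)) := by
  have add_succ := pa_add_succ (.var 0) (t.lift 0)
  have mp : Proves PA (.imp (.le (.succ t) (.succ s)) (.le t s)) := by
    refine pa_le_imp (.imp_trans ?_ (pa_le_of_add_eq (.var 0) (t.lift 0) (s.lift 0)))
    exact .imp_trans (.mp (.eq_trans _ _ _) add_succ.symm) (pa_succ_inj _ _)
  have mpr : Proves PA (.imp (.le t s) (.le (.succ t) (.succ s))) := by
    refine pa_le_imp (.imp_trans ?_
      (pa_le_of_add_eq (.var 0) (.succ (t.lift 0)) (.succ (s.lift 0))))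
    exact .imp_trans (.succ_congr _ _) (.mp (.eq_trans _ _ _) add_succ)
  exact .taut₂ mp mpr

theorem pa_numeral_add (a b : ℕ) :
    Proves PA (.eq (.add (numeral a) (numeral b)) (numeral (a + b))) := by
  induction b with
  | zero => exact pa_add_zero _
  | succ b ih => exact .trans (pa_add_succ _ _) (.mp (.succ_congr _ _) ih)

theorem pa_numeral_mul (a b : ℕ) :
    Proves PA (.eq (.mul (numeral a) (numeral b)) (numeral (a * b))) := by
  induction b with
  | zero => exact pa_mul_zero _
  | succ b ih =>
    exact .trans (pa_mul_succ _ _) (.trans (.add_congr ih (.eqRefl _)) (pa_numeral_add _ _))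

theorem pa_numeral_ne {a b : ℕ} (h : a ≠ b) :
    Proves PA (.neg (.eq (numeral a) (numeral b))) := by
  induction a generalizing b with
  | zero =>
    obtain ⟨b, rfl⟩ := Nat.exists_eq_succ_of_ne_zero h.symm
    exact .taut₂ (pa_succ_ne_zero (numeral b)) (.eq_symm .zero (.succ (numeral b)))
  | succ a ih =>
    cases b with
    | zero => exact pa_succ_ne_zero _
    | succ b => exact .taut₂ (ih fun hab => h (congrArg _ hab)) (pa_succ_inj _ _)

theorem pa_numeral_le {a b : ℕ} (h : a ≤ b) : Proves PA (.le (numeral a) (numeral b)) := by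
  have := pa_numeral_add (b - a) a
  rw [Nat.sub_add_cancel h] at this
  exact .mp (pa_le_of_add_eq _ _ _) this

theorem pa_numeral_not_le {a b : ℕ} (h : b < a) :
    Proves PA (.neg (.le (numeral a) (numeral b))) := by
  induction b generalizing a with
  | zero =>
    obtain ⟨a, rfl⟩ := Nat.exists_eq_succ_of_ne_zero h.ne'
    exact pa_not_succ_le_zero _
  | succ b ih =>
    obtain ⟨a, rfl⟩ := Nat.exists_eq_succ_of_ne_zero (Nat.ne_zero_of_lt h)
    exact .taut₂ (ih (Nat.lt_of_succ_lt_succ h)) (pa_succ_le_succ (numeral a) (numeral b))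

theorem pa_le_numeral_imp {φ : AFml} {n : ℕ} (h : ∀ i ≤ n, Proves PA (φ.subst0 (numeral i))) :
    Proves PA (.imp (.le (.var 0) (numeral n)) φ) := by
  induction n generalizing φ with
  | zero =>
    refine pa_zero_or_succ ?_ ?_
    · exact .taut₁ (h 0 le_rfl) fun v hφ _ => hφ
    · exact .taut₁ (pa_not_succ_le_zero (.var 0)) fun v h' hle => absurd hle h'
  | succ n ih =>
    have step : Proves PA (.imp (.le (.var 0) (numeral n)) (succSubst φ)) :=
      ih fun i hi => by rw [succSubst_subst0_numeral]; exact h _ (Nat.succ_le_succ hi)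
    refine pa_zero_or_succ ?_ ?_
    · exact .taut₁ (h 0 (Nat.zero_le _)) fun v hφ _ => hφ
    · simpa only [succSubst, AFml.substAll, ATerm.substAll, numeral_substAll, if_true] using
        Proves.imp_trans (.taut₁ (pa_succ_le_succ (.var 0) (numeral n))) step

theorem pa_le_of_numeral_le {a b : ℕ} (h : a ≤ b) :
    Proves PA (.imp (.le (numeral b) (.var 0)) (.le (numeral a) (.var 0))) := by
  induction a generalizing b with
  | zero => exact .taut₁ (pa_zero_le (.var 0))
  | succ a ih =>
    obtain ⟨b, rfl⟩ := Nat.exists_eq_succ_of_ne_zero (Nat.ne_zero_of_lt h)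
    refine pa_zero_or_succ ?_ ?_
    · simp only [AFml.subst0, AFml.substAll, numeral_substAll, ATerm.substAll, subst0Env]
      exact .taut₁ (pa_not_succ_le_zero (numeral b)) fun v h' hle => absurd hle h'
    · simp only [succSubst, AFml.substAll, numeral_substAll, ATerm.substAll, if_true]
      exact .taut₃ (ih (Nat.le_of_succ_le_succ h)) (pa_succ_le_succ (numeral a) (.var 0))
        (pa_succ_le_succ (numeral b) (.var 0))

theorem pa_le_total_numeral (n : ℕ) :
    Proves PA (.or (.le (.var 0) (numeral n)) (.le (numeral n) (.var 0))) := by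
  induction n with
  | zero => exact .taut₁ (pa_zero_le (.var 0))
  | succ n ih =>
    refine pa_zero_or_succ ?_ ?_ <;>
      simp only [succSubst, AFml.subst0, AFml.substAll, numeral_substAll, ATerm.substAll,
        subst0Env, if_true]
    · exact .taut₁ (pa_zero_le (numeral (n + 1)))
    exact .taut₃ ih (pa_succ_le_succ (numeral n) (.var 0)) (pa_succ_le_succ (.var 0) (numeral n))

/-! ### Σ₁-completeness -/

theorem pa_eq_numeral_val (t : ATerm) (ρ : ℕ → ℕ) :
    Proves PA (.eq (t.substAll (numeralEnv ρ)) (numeral (t.val ρ))) := by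
  induction t with
  | var n => exact .eqRefl _
  | zero => exact .eqRefl _
  | succ t ih => exact .mp (.succ_congr _ _) ih
  | add t s ih₁ ih₂ => exact .trans (.add_congr ih₁ ih₂) (pa_numeral_add _ _)
  | mul t s ih₁ ih₂ => exact .trans (.mul_congr ih₁ ih₂) (pa_numeral_mul _ _)

/-- `PA` decides every instance of `φ` by numerals in accordance with truth in `ℕ`. -/
def PADecides (φ : AFml) : Prop :=
  ∀ ρ : ℕ → ℕ, (φ.Sat ρ → Proves PA (φ.substAll (numeralEnv ρ))) ∧
    (¬ φ.Sat ρ → Proves PA (.neg (φ.substAll (numeralEnv ρ))))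

namespace PADecides

variable {φ ψ : AFml}

theorem eq (t s : ATerm) : PADecides (.eq t s) := fun ρ => by
  have h := Proves.eq_iff_eq (pa_eq_numeral_val t ρ) (pa_eq_numeral_val s ρ)
  constructor <;> intro hs
  · rw [show t.val ρ = s.val ρ from hs] at h
    exact .taut₂ h (.eqRefl (numeral (s.val ρ)))
  · exact .taut₂ h (pa_numeral_ne hs)

theorem le (t s : ATerm) : PADecides (.le t s) := fun ρ => by
  have h := Proves.le_iff_le (pa_eq_numeral_val t ρ) (pa_eq_numeral_val s ρ)
  constructor <;> intro hs
  · exact .taut₂ h (pa_numeral_le hs)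
  · exact .taut₂ h (pa_numeral_not_le (not_le.1 hs))

theorem neg (hφ : PADecides φ) : PADecides (.neg φ) := fun ρ =>
  ⟨(hφ ρ).2, fun h => .taut₁ ((hφ ρ).1 (not_not.1 h))⟩

theorem and (hφ : PADecides φ) (hψ : PADecides ψ) : PADecides (.and φ ψ) := fun ρ =>
  ⟨fun h => .taut₂ ((hφ ρ).1 h.1) ((hψ ρ).1 h.2),
    fun h => (not_and_or.1 h).elim (fun h => .taut₁ ((hφ ρ).2 h)) fun h => .taut₁ ((hψ ρ).2 h)⟩

theorem or (hφ : PADecides φ) (hψ : PADecides ψ) : PADecides (.or φ ψ) := fun ρ =>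
  ⟨fun h => h.elim (fun h => .taut₁ ((hφ ρ).1 h)) fun h => .taut₁ ((hψ ρ).1 h),
    fun h => .taut₂ ((hφ ρ).2 (not_or.1 h).1) ((hψ ρ).2 (not_or.1 h).2)⟩

theorem imp (hφ : PADecides φ) (hψ : PADecides ψ) : PADecides (.imp φ ψ) := fun ρ =>
  ⟨fun h => (imp_iff_not_or.1 h).elim (fun h => .taut₁ ((hφ ρ).2 h))
      fun h => .taut₁ ((hψ ρ).1 h),
    fun h => .taut₂ ((hφ ρ).1 (Classical.not_imp.1 h).1) ((hψ ρ).2 (Classical.not_imp.1 h).2)⟩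

theorem ball (hφ : PADecides φ) (t : ATerm) :
    PADecides (.all (.imp (.le (.var 0) (t.lift 0)) φ)) := fun ρ => by
  have ht := pa_eq_numeral_val t ρ
  simp only [AFml.substAll, ATerm.lift_substAll_liftSub, ATerm.lift_substAll_numeralEnv,
    AFml.Sat, ATerm.val_lift]
  refine ⟨fun h => .gen ?_, fun h => ?_⟩
  · refine .imp_trans (.le_imp_le (.eqRefl _) ht) (pa_le_numeral_imp fun i hi => ?_)
    rw [AFml.substAll_numeralEnv_subst0]
    exact (hφ _).1 (h i hi)
  · obtain ⟨a, ha, hna⟩ : ∃ a ≤ t.val ρ, ¬ φ.Sat (consEnv a ρ) := by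
      simpa only [not_forall, exists_prop, ATerm.val, consEnv] using h
    have inst := Proves.allE (Γ := PA) (.imp (.le (.var 0) ((t.substAll (numeralEnv ρ)).lift 0))
      (φ.substAll (liftSub (numeralEnv ρ)))) (numeral a)
    simp only [AFml.subst0, AFml.substAll, ATerm.lift_substAll_subst0Env] at inst
    rw [← AFml.subst0, AFml.substAll_numeralEnv_subst0, ATerm.lift_substAll_numeralEnv] at inst
    have hle := Proves.mp (.le_imp_le (.eqRefl (numeral a)) ht.symm) (pa_numeral_le ha)
    exact .taut₃ ((hφ _).2 hna) hle inst

theorem bex (hφ : PADecides φ) (t : ATerm) :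
    PADecides (.ex (.and (.le (.var 0) (t.lift 0)) φ)) := fun ρ => by
  have ht := pa_eq_numeral_val t ρ
  simp only [AFml.substAll, ATerm.lift_substAll_liftSub, ATerm.lift_substAll_numeralEnv,
    AFml.Sat, ATerm.val_lift]
  refine ⟨fun ⟨a, ha, haφ⟩ => ?_, fun h => ?_⟩
  · have inst := Proves.exI (Γ := PA) (.and (.le (.var 0) ((t.substAll (numeralEnv ρ)).lift 0))
      (φ.substAll (liftSub (numeralEnv ρ)))) (numeral a)
    simp only [AFml.subst0, AFml.substAll, ATerm.lift_substAll_subst0Env] at inst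
    rw [← AFml.subst0, AFml.substAll_numeralEnv_subst0, ATerm.lift_substAll_numeralEnv] at inst
    have hle := Proves.mp (.le_imp_le (.eqRefl (numeral a)) ht.symm) (pa_numeral_le ha)
    exact .taut₃ ((hφ _).1 haφ) hle inst
  · have hneg : Proves PA (.imp (.le (.var 0) (numeral (t.val ρ)))
        (.neg (φ.substAll (liftSub (numeralEnv ρ))))) := by
      refine pa_le_numeral_imp fun i hi => ?_
      change Proves PA (.neg ((φ.substAll _).subst0 _))
      rw [AFml.substAll_numeralEnv_subst0]
      exact (hφ _).2 fun hi' => h ⟨i, hi, hi'⟩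
    have hbot : Proves PA (.imp (.ex (.and (.le (.var 0) (t.substAll (numeralEnv ρ)))
        (φ.substAll (liftSub (numeralEnv ρ))))) botFml) :=
      .ex_imp (.taut₂ (.le_imp_le (.eqRefl _) ht) hneg)
    exact .taut₂ hbot pa_not_bot

end PADecides

theorem IsDelta0.paDecides {φ : AFml} (h : IsDelta0 φ) : PADecides φ := by
  induction h with
  | eq t s => exact .eq t s
  | le t s => exact .le t s
  | neg _ ih => exact ih.neg
  | and _ _ ih₁ ih₂ => exact ih₁.and ih₂
  | or _ _ ih₁ ih₂ => exact ih₁.or ih₂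
  | imp _ _ ih₁ ih₂ => exact ih₁.imp ih₂
  | ball t _ ih => exact ih.ball t
  | bex t _ ih => exact ih.bex t

mutual

theorem IsSigma1.proves_of_sat {φ : AFml} (ρ : ℕ → ℕ) (hs : φ.Sat ρ) :
    IsSigma1 φ → Proves PA (φ.substAll (numeralEnv ρ))
  | .delta0 h => (h.paDecides ρ).1 hs
  | .and h₁ h₂ => .taut₂ (h₁.proves_of_sat ρ hs.1) (h₂.proves_of_sat ρ hs.2)
  | .or h₁ h₂ => hs.elim (fun hs => .taut₁ (h₁.proves_of_sat ρ hs))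
      fun hs => .taut₁ (h₂.proves_of_sat ρ hs)
  | .ex h => by
    obtain ⟨a, ha⟩ := hs
    refine .mp (.exI _ (numeral a)) ?_
    rw [AFml.substAll_numeralEnv_subst0]
    exact h.proves_of_sat _ ha
  | .negPi h => h.refutes_of_not_sat ρ hs
  | .impPiSigma h₁ h₂ => (imp_iff_not_or.1 hs).elim
      (fun hs => .taut₁ (h₁.refutes_of_not_sat ρ hs)) fun hs => .taut₁ (h₂.proves_of_sat ρ hs)

theorem IsPi1.refutes_of_not_sat {φ : AFml} (ρ : ℕ → ℕ) (hs : ¬ φ.Sat ρ) :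
    IsPi1 φ → Proves PA (.neg (φ.substAll (numeralEnv ρ)))
  | .delta0 h => (h.paDecides ρ).2 hs
  | .and h₁ h₂ => (not_and_or.1 hs).elim (fun hs => .taut₁ (h₁.refutes_of_not_sat ρ hs))
      fun hs => .taut₁ (h₂.refutes_of_not_sat ρ hs)
  | .or h₁ h₂ => .taut₂ (h₁.refutes_of_not_sat ρ (not_or.1 hs).1)
      (h₂.refutes_of_not_sat ρ (not_or.1 hs).2)
  | .all (φ := φ) h => by
    obtain ⟨a, ha⟩ := not_forall.1 hs
    have inst := Proves.allE (Γ := PA) (φ.substAll (liftSub (numeralEnv ρ))) (numeral a)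
    rw [AFml.substAll_numeralEnv_subst0] at inst
    exact .taut₂ inst (h.refutes_of_not_sat _ ha)
  | .negSigma h => .taut₁ (h.proves_of_sat ρ (not_not.1 hs))
  | .impSigmaPi h₁ h₂ => .taut₂ (h₁.proves_of_sat ρ (Classical.not_imp.1 hs).1)
      (h₂.refutes_of_not_sat ρ (Classical.not_imp.1 hs).2)

end

/-! ### Σ₁-definability -/

theorem consEnv_head_tail (ρ : ℕ → ℕ) : consEnv (ρ 0) (fun n => ρ (n + 1)) = ρ := by
  funext n; cases n <;> rfl

theorem consEnv_swap (ρ : ℕ → ℕ) (a w : ℕ) :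
    (fun n => consEnv a (consEnv w ρ) (Equiv.swap 0 1 n)) = consEnv w (consEnv a ρ) := by
  funext n
  match n with
  | 0 => rfl
  | 1 => rfl
  | n + 2 => rw [Equiv.swap_apply_of_ne_of_ne (by omega) (by omega)]; rfl

theorem exists_uniform_witness {p : ℕ → ℕ → Prop} (mono : ∀ a {w w'}, w ≤ w' → p a w → p a w')
    {n : ℕ} (h : ∀ a ≤ n, ∃ w, p a w) : ∃ w, ∀ a ≤ n, p a w := by
  choose! g hg using h
  refine ⟨(Finset.range (n + 1)).sup g, fun a ha => mono a ?_ (hg a ha)⟩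
  exact Finset.le_sup (Finset.mem_range.2 (Nat.lt_succ_of_le ha))

/-- Definability of a predicate by a `Δ₀` formula. A predicate of several variables is encoded
as a predicate of environments, the `i`-th variable being `ρ i`. -/
def Delta0Definable (S : (ℕ → ℕ) → Prop) : Prop :=
  ∃ φ : AFml, IsDelta0 φ ∧ ∀ ρ, φ.Sat ρ ↔ S ρ

namespace Delta0Definable

variable {S S' : (ℕ → ℕ) → Prop}

theorem of_iff (h : Delta0Definable S) (e : ∀ ρ, S ρ ↔ S' ρ) : Delta0Definable S' := by
  obtain ⟨φ, hφ, hS⟩ := h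
  exact ⟨φ, hφ, fun ρ => (hS ρ).trans (e ρ)⟩

theorem eq (t s : ATerm) : Delta0Definable fun ρ => t.val ρ = s.val ρ :=
  ⟨_, .eq t s, fun _ => Iff.rfl⟩

theorem le (t s : ATerm) : Delta0Definable fun ρ => t.val ρ ≤ s.val ρ :=
  ⟨_, .le t s, fun _ => Iff.rfl⟩

theorem not (h : Delta0Definable S) : Delta0Definable fun ρ => ¬ S ρ := by
  obtain ⟨φ, hφ, hS⟩ := h
  exact ⟨_, .neg hφ, fun ρ => not_congr (hS ρ)⟩

theorem and (h : Delta0Definable S) (h' : Delta0Definable S') :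
    Delta0Definable fun ρ => S ρ ∧ S' ρ := by
  obtain ⟨φ, hφ, hS⟩ := h
  obtain ⟨ψ, hψ, hS'⟩ := h'
  exact ⟨_, .and hφ hψ, fun ρ => and_congr (hS ρ) (hS' ρ)⟩

theorem or (h : Delta0Definable S) (h' : Delta0Definable S') :
    Delta0Definable fun ρ => S ρ ∨ S' ρ := by
  obtain ⟨φ, hφ, hS⟩ := h
  obtain ⟨ψ, hψ, hS'⟩ := h'
  exact ⟨_, .or hφ hψ, fun ρ => or_congr (hS ρ) (hS' ρ)⟩

theorem rename (h : Delta0Definable S) (f : ℕ → ℕ) :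
    Delta0Definable fun ρ => S fun n => ρ (f n) := by
  obtain ⟨φ, hφ, hS⟩ := h
  exact ⟨_, hφ.substAll fun n => .var (f n), fun ρ => (AFml.sat_substAll _ ρ φ).trans (hS _)⟩

theorem bex (h : Delta0Definable S) (t : ATerm) :
    Delta0Definable fun ρ => ∃ a ≤ t.val ρ, S (consEnv a ρ) := by
  obtain ⟨φ, hφ, hS⟩ := h
  refine ⟨_, .bex t hφ, fun ρ => ?_⟩
  simp only [AFml.Sat, ATerm.val_lift, hS, ATerm.val]
  rfl

theorem ball (h : Delta0Definable S) (t : ATerm) :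
    Delta0Definable fun ρ => ∀ a ≤ t.val ρ, S (consEnv a ρ) := by
  obtain ⟨φ, hφ, hS⟩ := h
  refine ⟨_, .ball t hφ, fun ρ => ?_⟩
  simp only [AFml.Sat, ATerm.val_lift, hS, ATerm.val]
  rfl

end Delta0Definable

/-- Definability of a predicate of environments in the form `∃ w, D w` with `D` a `Δ₀`-definable
predicate. `D` is required to be monotone in `w`, so that finitely many witnesses can be replaced
by their maximum. It is a class, so that definitions by composition are found by instance search. -/
class Sigma1Definable (S : (ℕ → ℕ) → Prop) : Prop where
  out : ∃ D : (ℕ → ℕ) → Prop, Delta0Definable D ∧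
    (∀ ρ w w', w ≤ w' → D (consEnv w ρ) → D (consEnv w' ρ)) ∧ ∀ ρ, S ρ ↔ ∃ w, D (consEnv w ρ)

/-- Functions of environments with a `Σ₁`-definable graph; the value is variable `0`. -/
class Sigma1Fun (F : (ℕ → ℕ) → ℕ) : Prop where
  out : Sigma1Definable fun ρ => ρ 0 = F fun n => ρ (n + 1)

/-- Predicates of environments that are `Σ₁`-definable together with their complement. -/
class Delta1Definable (S : (ℕ → ℕ) → Prop) : Prop where
  pos : Sigma1Definable S
  neg : Sigma1Definable fun ρ => ¬ S ρ

namespace Sigma1Definable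

variable {S S' : (ℕ → ℕ) → Prop}

theorem of_iff (h : Sigma1Definable S) (e : ∀ ρ, S ρ ↔ S' ρ) : Sigma1Definable S' := by
  obtain ⟨D, hD, mono, hS⟩ := h
  exact ⟨D, hD, mono, fun ρ => (e ρ).symm.trans (hS ρ)⟩

theorem of_delta0 (h : Delta0Definable S) : Sigma1Definable S :=
  ⟨_, h.rename (· + 1), fun _ _ _ _ h => h, fun _ => ⟨fun h => ⟨0, h⟩, fun ⟨_, h⟩ => h⟩⟩

theorem rename (h : Sigma1Definable S) (f : ℕ → ℕ) :
    Sigma1Definable fun ρ => S fun n => ρ (f n) := by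
  obtain ⟨D, hD, mono, hS⟩ := h
  have env (ρ : ℕ → ℕ) (w : ℕ) : (fun n => consEnv w ρ (consEnv 0 (fun n => f n + 1) n)) =
      consEnv w fun n => ρ (f n) := by
    funext n; cases n <;> rfl
  refine ⟨_, hD.rename (consEnv 0 fun n => f n + 1), fun ρ w w' hw => ?_, fun ρ => ?_⟩
  · simp only [env]; exact mono _ _ _ hw
  · simp only [env]; exact hS _

instance and [h : Sigma1Definable S] [h' : Sigma1Definable S'] :
    Sigma1Definable fun ρ => S ρ ∧ S' ρ := by
  obtain ⟨D, hD, mono, hS⟩ := h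
  obtain ⟨D', hD', mono', hS'⟩ := h'
  refine ⟨_, hD.and hD', fun ρ w w' hw h => ⟨mono _ _ _ hw h.1, mono' _ _ _ hw h.2⟩, fun ρ => ?_⟩
  rw [hS, hS']
  constructor
  · rintro ⟨⟨w, hw⟩, w', hw'⟩
    exact ⟨max w w', mono _ _ _ (le_max_left _ _) hw, mono' _ _ _ (le_max_right _ _) hw'⟩
  · rintro ⟨w, h, h'⟩
    exact ⟨⟨w, h⟩, w, h'⟩

instance or [h : Sigma1Definable S] [h' : Sigma1Definable S'] :
    Sigma1Definable fun ρ => S ρ ∨ S' ρ := by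
  obtain ⟨D, hD, mono, hS⟩ := h
  obtain ⟨D', hD', mono', hS'⟩ := h'
  refine ⟨_, hD.or hD', fun ρ w w' hw h => h.imp (mono _ _ _ hw) (mono' _ _ _ hw), fun ρ => ?_⟩
  rw [hS, hS', exists_or]

theorem ex_cons (h : Sigma1Definable S) : Sigma1Definable fun ρ => ∃ a, S (consEnv a ρ) := by
  obtain ⟨D, hD, mono, hS⟩ := h
  refine ⟨_, (hD.rename (Equiv.swap 0 1)).bex (.var 0), fun ρ w w' hw => ?_, fun ρ => ?_⟩
  · rintro ⟨a, ha, h⟩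
    rw [consEnv_swap] at h
    exact ⟨a, ha.trans hw, by rw [consEnv_swap]; exact mono _ _ _ hw h⟩
  · simp only [hS, consEnv_swap]
    constructor
    · rintro ⟨a, w, h⟩
      exact ⟨max a w, a, le_max_left _ _, mono _ _ _ (le_max_right _ _) h⟩
    · rintro ⟨w, a, _, h⟩
      exact ⟨a, w, h⟩

theorem ball_cons (h : Sigma1Definable S) :
    Sigma1Definable fun ρ => ∀ a ≤ ρ 0, S (consEnv a ρ) := by
  obtain ⟨D, hD, mono, hS⟩ := h
  refine ⟨_, (hD.rename (Equiv.swap 0 1)).ball (.var 1), fun ρ w w' hw h a ha => ?_, fun ρ => ?_⟩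
  · have := h a ha
    rw [consEnv_swap] at this ⊢
    exact mono _ _ _ hw this
  · simp only [hS, consEnv_swap]
    change (∀ a ≤ ρ 0, _) ↔ ∃ w, ∀ a ≤ ρ 0, _
    refine ⟨fun h => ?_, fun ⟨w, h⟩ a ha => ⟨w, h a ha⟩⟩
    exact exists_uniform_witness (p := fun a w => D (consEnv w (consEnv a ρ)))
      (fun _ => mono _ _ _) h

instance ex {S : (ℕ → ℕ) → ℕ → Prop}
    [h : Sigma1Definable fun ρ => S (fun n => ρ (n + 1)) (ρ 0)] :
    Sigma1Definable fun ρ => ∃ a, S ρ a :=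
  h.ex_cons

theorem comp_cons {F : (ℕ → ℕ) → ℕ} (h : Sigma1Definable S) (hF : Sigma1Fun F) :
    Sigma1Definable fun ρ => S (consEnv (F ρ) ρ) := by
  have body : Sigma1Definable fun ρ => ρ 0 = F (fun n => ρ (n + 1)) ∧
      S (consEnv (ρ 0) fun n => ρ (n + 1)) := by
    simp only [consEnv_head_tail]
    exact @and _ _ hF.out h
  exact (@ex (fun ρ a => a = F ρ ∧ S (consEnv a ρ)) body).of_iff fun ρ => by simp

end Sigma1Definable

namespace Sigma1Fun

variable {F G H K : (ℕ → ℕ) → ℕ}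

theorem rename (hF : Sigma1Fun F) (f : ℕ → ℕ) : Sigma1Fun fun ρ => F fun n => ρ (f n) :=
  ⟨hF.out.rename (consEnv 0 fun n => f n + 1)⟩

theorem of_graph {S : (ℕ → ℕ) → ℕ → Prop}
    (h : Sigma1Definable fun ρ => S (fun n => ρ (n + 1)) (ρ 0)) (e : ∀ ρ y, S ρ y ↔ y = F ρ) :
    Sigma1Fun F :=
  ⟨h.of_iff fun _ => e _ _⟩

instance proj (i : ℕ) : Sigma1Fun fun ρ => ρ i :=
  ⟨.of_delta0 (.eq (.var 0) (.var (i + 1)))⟩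

instance const (c : ℕ) : Sigma1Fun fun _ => c := by
  refine ⟨.of_delta0 (.of_iff (.eq (.var 0) (numeral c)) fun ρ => ?_)⟩
  rw [numeral_val]; rfl

end Sigma1Fun

namespace Sigma1Definable

variable {F G H K : (ℕ → ℕ) → ℕ}

theorem comp₁ {R : ℕ → Prop} (h : Sigma1Definable fun ρ => R (ρ 0)) (hF : Sigma1Fun F) :
    Sigma1Definable fun ρ => R (F ρ) :=
  h.comp_cons hF

theorem comp₂ {R : ℕ → ℕ → Prop} (h : Sigma1Definable fun ρ => R (ρ 0) (ρ 1))
    (hF : Sigma1Fun F) (hG : Sigma1Fun G) : Sigma1Definable fun ρ => R (F ρ) (G ρ) :=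
  (h.comp_cons (hF.rename (· + 1))).comp_cons hG

theorem comp₃ {R : ℕ → ℕ → ℕ → Prop} (h : Sigma1Definable fun ρ => R (ρ 0) (ρ 1) (ρ 2))
    (hF : Sigma1Fun F) (hG : Sigma1Fun G) (hH : Sigma1Fun H) :
    Sigma1Definable fun ρ => R (F ρ) (G ρ) (H ρ) :=
  ((h.comp_cons (hF.rename (· + 2))).comp_cons (hG.rename (· + 1))).comp_cons hH

theorem comp₄ {R : ℕ → ℕ → ℕ → ℕ → Prop}
    (h : Sigma1Definable fun ρ => R (ρ 0) (ρ 1) (ρ 2) (ρ 3))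
    (hF : Sigma1Fun F) (hG : Sigma1Fun G) (hH : Sigma1Fun H) (hK : Sigma1Fun K) :
    Sigma1Definable fun ρ => R (F ρ) (G ρ) (H ρ) (K ρ) :=
  (((h.comp_cons (hF.rename (· + 3))).comp_cons (hG.rename (· + 2))).comp_cons
    (hH.rename (· + 1))).comp_cons hK

instance (priority := 50) of_delta1 {S : (ℕ → ℕ) → Prop} [h : Delta1Definable S] :
    Sigma1Definable S :=
  h.pos

end Sigma1Definable

namespace Sigma1Fun

variable {F G : (ℕ → ℕ) → ℕ}

theorem comp₁ {f : ℕ → ℕ} (h : Sigma1Fun fun ρ => f (ρ 0)) (hF : Sigma1Fun F) :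
    Sigma1Fun fun ρ => f (F ρ) :=
  ⟨(h.out.rename fun n => (n + 1) % 2).comp_cons (hF.rename (· + 1))⟩

theorem comp₂ {f : ℕ → ℕ → ℕ} (h : Sigma1Fun fun ρ => f (ρ 0) (ρ 1)) (hF : Sigma1Fun F)
    (hG : Sigma1Fun G) : Sigma1Fun fun ρ => f (F ρ) (G ρ) :=
  ⟨((h.out.rename fun n => (n + 2) % 3).comp_cons (hF.rename (· + 2))).comp_cons
    (hG.rename (· + 1))⟩

instance add [hF : Sigma1Fun F] [hG : Sigma1Fun G] : Sigma1Fun fun ρ => F ρ + G ρ :=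
  .comp₂ (f := (· + ·)) ⟨.of_delta0 (.eq (.var 0) (.add (.var 1) (.var 2)))⟩ hF hG

instance mul [hF : Sigma1Fun F] [hG : Sigma1Fun G] : Sigma1Fun fun ρ => F ρ * G ρ :=
  .comp₂ (f := (· * ·)) ⟨.of_delta0 (.eq (.var 0) (.mul (.var 1) (.var 2)))⟩ hF hG

end Sigma1Fun

namespace Delta1Definable

variable {S S' : (ℕ → ℕ) → Prop} {F G : (ℕ → ℕ) → ℕ}

theorem of_iff (h : Delta1Definable S) (e : ∀ ρ, S ρ ↔ S' ρ) : Delta1Definable S' :=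
  ⟨h.pos.of_iff e, h.neg.of_iff fun ρ => not_congr (e ρ)⟩

instance eq [hF : Sigma1Fun F] [hG : Sigma1Fun G] : Delta1Definable fun ρ => F ρ = G ρ :=
  ⟨.comp₂ (R := (· = ·)) (.of_delta0 (.eq (.var 0) (.var 1))) hF hG,
    .comp₂ (R := fun a b => ¬ a = b) (.of_delta0 (.not (.eq (.var 0) (.var 1)))) hF hG⟩

instance le [hF : Sigma1Fun F] [hG : Sigma1Fun G] : Delta1Definable fun ρ => F ρ ≤ G ρ :=
  ⟨.comp₂ (R := (· ≤ ·)) (.of_delta0 (.le (.var 0) (.var 1))) hF hG,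
    .comp₂ (R := fun a b => ¬ a ≤ b) (.of_delta0 (.not (.le (.var 0) (.var 1)))) hF hG⟩

instance lt [Sigma1Fun F] [Sigma1Fun G] : Delta1Definable fun ρ => F ρ < G ρ :=
  .of_iff (S := fun ρ => F ρ + 1 ≤ G ρ) inferInstance fun _ => Iff.rfl

instance not [h : Delta1Definable S] : Delta1Definable fun ρ => ¬ S ρ :=
  ⟨h.neg, h.pos.of_iff fun _ => not_not.symm⟩

instance and [h : Delta1Definable S] [h' : Delta1Definable S'] :
    Delta1Definable fun ρ => S ρ ∧ S' ρ :=
  ⟨@Sigma1Definable.and _ _ h.pos h'.pos,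
    (@Sigma1Definable.or _ _ h.neg h'.neg).of_iff fun _ => not_and_or.symm⟩

instance or [h : Delta1Definable S] [h' : Delta1Definable S'] :
    Delta1Definable fun ρ => S ρ ∨ S' ρ :=
  ⟨@Sigma1Definable.or _ _ h.pos h'.pos,
    (@Sigma1Definable.and _ _ h.neg h'.neg).of_iff fun _ => not_or.symm⟩

instance imp [Delta1Definable S] [Delta1Definable S'] : Delta1Definable fun ρ => S ρ → S' ρ :=
  .of_iff (S := fun ρ => ¬ S ρ ∨ S' ρ) inferInstance fun _ => imp_iff_not_or.symm

end Delta1Definable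

section BoundedQuantifiers

variable {S : (ℕ → ℕ) → ℕ → Prop} {F : (ℕ → ℕ) → ℕ}

instance Sigma1Definable.ball [hF : Sigma1Fun F]
    [h : Sigma1Definable fun ρ => S (fun n => ρ (n + 1)) (ρ 0)] :
    Sigma1Definable fun ρ => ∀ a, a ≤ F ρ → S ρ a :=
  (h.rename (consEnv 0 fun n => n + 2)).ball_cons.comp_cons hF

instance Delta1Definable.ball [hF : Sigma1Fun F]
    [h : Delta1Definable fun ρ => S (fun n => ρ (n + 1)) (ρ 0)] :
    Delta1Definable fun ρ => ∀ a, a ≤ F ρ → S ρ a := by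
  refine ⟨@Sigma1Definable.ball _ _ hF h.pos, ?_⟩
  have hF' : Sigma1Fun fun ρ => F fun n => ρ (n + 1) := hF.rename _
  have : Sigma1Definable fun ρ => ∃ a, a ≤ F ρ ∧ ¬ S ρ a :=
    @Sigma1Definable.ex _ (@Sigma1Definable.and _ _ (Delta1Definable.le (F := (· 0))).pos h.neg)
  exact this.of_iff fun ρ => by simp only [not_forall, exists_prop]

instance Delta1Definable.bex [Sigma1Fun F]
    [Delta1Definable fun ρ => S (fun n => ρ (n + 1)) (ρ 0)] :
    Delta1Definable fun ρ => ∃ a, a ≤ F ρ ∧ S ρ a :=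
  .of_iff (S := fun ρ => ¬ ∀ a, a ≤ F ρ → ¬ S ρ a) inferInstance fun ρ => by
    simp only [not_forall, not_not, exists_prop]

theorem forall_le_ge_or_iff {n : ℕ} {p : ℕ → Prop} :
    (∀ a, a ≤ n → n ≤ a ∨ p a) ↔ ∀ a, a < n → p a :=
  forall_congr' fun a => ⟨fun h ha => (h ha.le).resolve_left ha.not_ge,
    fun h _ => (le_or_gt n a).imp_right h⟩

instance Sigma1Definable.ball_lt [hF : Sigma1Fun F]
    [Sigma1Definable fun ρ => S (fun n => ρ (n + 1)) (ρ 0)] :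
    Sigma1Definable fun ρ => ∀ a, a < F ρ → S ρ a := by
  have hF' : Sigma1Fun fun ρ => F fun n => ρ (n + 1) := hF.rename _
  exact .of_iff (S := fun ρ => ∀ a, a ≤ F ρ → F ρ ≤ a ∨ S ρ a) inferInstance
    fun _ => forall_le_ge_or_iff

instance Delta1Definable.ball_lt [hF : Sigma1Fun F]
    [Delta1Definable fun ρ => S (fun n => ρ (n + 1)) (ρ 0)] :
    Delta1Definable fun ρ => ∀ a, a < F ρ → S ρ a := by
  have hF' : Sigma1Fun fun ρ => F fun n => ρ (n + 1) := hF.rename _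
  exact .of_iff (S := fun ρ => ∀ a, a ≤ F ρ → F ρ ≤ a ∨ S ρ a) inferInstance
    fun _ => forall_le_ge_or_iff

instance Delta1Definable.bex_lt [Sigma1Fun F]
    [Delta1Definable fun ρ => S (fun n => ρ (n + 1)) (ρ 0)] :
    Delta1Definable fun ρ => ∃ a, a < F ρ ∧ S ρ a :=
  .of_iff (S := fun ρ => ¬ ∀ a, a < F ρ → ¬ S ρ a) inferInstance fun ρ => by
    simp only [not_forall, not_not, exists_prop]

end BoundedQuantifiers

namespace Sigma1Fun

variable {F G : (ℕ → ℕ) → ℕ}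

instance pair [hF : Sigma1Fun F] [hG : Sigma1Fun G] :
    Sigma1Fun fun ρ => Nat.pair (F ρ) (G ρ) := by
  refine .comp₂ ⟨?_⟩ hF hG
  have : Sigma1Definable fun ρ => (ρ 1 < ρ 2 ∧ ρ 0 = ρ 2 * ρ 2 + ρ 1) ∨
      (¬ ρ 1 < ρ 2 ∧ ρ 0 = ρ 1 * ρ 1 + ρ 1 + ρ 2) := inferInstance
  refine this.of_iff fun ρ => ?_
  unfold Nat.pair
  split_ifs with h <;> simp only [h, true_and, false_and, or_false, false_or, not_true_eq_false,
    not_false_eq_true]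

instance unpair_fst [hF : Sigma1Fun F] : Sigma1Fun fun ρ => (F ρ).unpair.1 := by
  refine .comp₁ (f := fun x => x.unpair.1) ⟨?_⟩ hF
  have : Sigma1Definable fun ρ => ∃ b, ρ 1 = Nat.pair (ρ 0) b := inferInstance
  refine this.of_iff fun ρ => ⟨fun ⟨b, hb⟩ => ?_, fun h => ⟨(ρ 1).unpair.2, ?_⟩⟩
  · change ρ 0 = (ρ 1).unpair.1
    rw [hb, Nat.unpair_pair]
  · rw [h, Nat.pair_unpair]

instance unpair_snd [hF : Sigma1Fun F] : Sigma1Fun fun ρ => (F ρ).unpair.2 := by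
  refine .comp₁ (f := fun x => x.unpair.2) ⟨?_⟩ hF
  have : Sigma1Definable fun ρ => ∃ b, ρ 1 = Nat.pair b (ρ 0) := inferInstance
  refine this.of_iff fun ρ => ⟨fun ⟨b, hb⟩ => ?_, fun h => ⟨(ρ 1).unpair.1, ?_⟩⟩
  · change ρ 0 = (ρ 1).unpair.2
    rw [hb, Nat.unpair_pair]
  · rw [h, Nat.pair_unpair]

instance div [hF : Sigma1Fun F] [hG : Sigma1Fun G] : Sigma1Fun fun ρ => F ρ / G ρ := by
  refine .comp₂ (f := (· / ·)) ⟨?_⟩ hF hG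
  have : Sigma1Definable fun ρ => (ρ 2 = 0 ∧ ρ 0 = 0) ∨
      (¬ ρ 2 = 0 ∧ ρ 0 * ρ 2 ≤ ρ 1 ∧ ρ 1 < (ρ 0 + 1) * ρ 2) := inferInstance
  refine this.of_iff fun ρ => ?_
  change _ ↔ ρ 0 = ρ 1 / ρ 2
  rcases Nat.eq_zero_or_pos (ρ 2) with h | h
  · simp only [h, true_and, not_true_eq_false, false_and, or_false, Nat.div_zero]
  · simp only [h.ne', false_and, false_or, not_false_eq_true, true_and]
    rw [eq_comm (a := ρ 0), Nat.div_eq_iff h, Nat.add_one_mul]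
    omega

instance mod [hF : Sigma1Fun F] [hG : Sigma1Fun G] : Sigma1Fun fun ρ => F ρ % G ρ := by
  refine .comp₂ (f := (· % ·)) ⟨?_⟩ hF hG
  have : Sigma1Definable fun ρ => ρ 2 * (ρ 1 / ρ 2) + ρ 0 = ρ 1 := inferInstance
  refine this.of_iff fun ρ => ?_
  change _ ↔ ρ 0 = ρ 1 % ρ 2
  have := Nat.div_add_mod (ρ 1) (ρ 2)
  omega

instance beta [Sigma1Fun F] [Sigma1Fun G] : Sigma1Fun fun ρ => Nat.beta (F ρ) (G ρ) :=
  inferInstanceAs <| Sigma1Fun fun ρ => (F ρ).unpair.1 % ((G ρ + 1) * (F ρ).unpair.2 + 1)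

end Sigma1Fun

/-! ### Inductively generated sets -/

/-- The least set of numbers that contains `A` and is closed under the two-premise rules `R`;
`R a b x` reads: from `a` and `b` infer `x`. One-premise rules ignore the second premise. -/
inductive InductiveClosure (A : ℕ → Prop) (R : ℕ → ℕ → ℕ → Prop) : ℕ → Prop
  | base {x} : A x → InductiveClosure A R x
  | step {a b x} : InductiveClosure A R a → InductiveClosure A R b → R a b x →
      InductiveClosure A R x

/-- Derivations witnessing membership in `InductiveClosure A R`, as lists with the conclusion
first, so that the premises of an entry occur after it. -/
def IsDerivation (A : ℕ → Prop) (R : ℕ → ℕ → ℕ → Prop) : List ℕ → Prop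
  | [] => True
  | x :: l => (A x ∨ ∃ a ∈ l, ∃ b ∈ l, R a b x) ∧ IsDerivation A R l

section

variable {A : ℕ → Prop} {R : ℕ → ℕ → ℕ → Prop}

theorem IsDerivation.append {l l' : List ℕ} (h : IsDerivation A R l) (h' : IsDerivation A R l') :
    IsDerivation A R (l ++ l') := by
  induction l with
  | nil => exact h'
  | cons x l ih =>
    refine ⟨h.1.imp_right fun ⟨a, ha, b, hb, hx⟩ => ?_, ih h.2⟩
    exact ⟨a, List.mem_append_left _ ha, b, List.mem_append_left _ hb, hx⟩

theorem IsDerivation.getElem {l : List ℕ} (h : IsDerivation A R l) (i : ℕ) (hi : i < l.length) :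
    A l[i] ∨ ∃ j k, ∃ (hj : j < l.length) (hk : k < l.length),
      i < j ∧ i < k ∧ R l[j] l[k] l[i] := by
  induction l generalizing i with
  | nil => exact absurd hi (Nat.not_lt_zero i)
  | cons x l ih =>
    cases i with
    | zero =>
      refine h.1.imp_right fun ⟨a, ha, b, hb, hx⟩ => ?_
      obtain ⟨j, hj, rfl⟩ := List.mem_iff_getElem.1 ha
      obtain ⟨k, hk, rfl⟩ := List.mem_iff_getElem.1 hb
      exact ⟨j + 1, k + 1, Nat.succ_lt_succ hj, Nat.succ_lt_succ hk, j.succ_pos, k.succ_pos, hx⟩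
    | succ i =>
      refine (ih h.2 i (Nat.lt_of_succ_lt_succ hi)).imp_right fun ⟨j, k, hj, hk, hij, hik, hx⟩ => ?_
      exact ⟨j + 1, k + 1, Nat.succ_lt_succ hj, Nat.succ_lt_succ hk, Nat.succ_lt_succ hij,
        Nat.succ_lt_succ hik, hx⟩

theorem InductiveClosure.exists_isDerivation {x : ℕ} (h : InductiveClosure A R x) :
    ∃ l, IsDerivation A R (x :: l) := by
  induction h with
  | base h => exact ⟨[], .inl h, trivial⟩
  | @step a b x _ _ hx ih₁ ih₂ =>
    obtain ⟨l₁, h₁⟩ := ih₁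
    obtain ⟨l₂, h₂⟩ := ih₂
    exact ⟨(a :: l₁) ++ (b :: l₂), .inr ⟨a, by simp, b, by simp, hx⟩, h₁.append h₂⟩

theorem inductiveClosure_iff_beta {x : ℕ} : InductiveClosure A R x ↔
    ∃ c n, Nat.beta c 0 = x ∧ ∀ i, i ≤ n → (A (Nat.beta c i) ∨
      ∃ j k, i < j ∧ j ≤ n ∧ i < k ∧ k ≤ n ∧
        R (Nat.beta c j) (Nat.beta c k) (Nat.beta c i)) := by
  constructor
  · intro h
    obtain ⟨l, hl⟩ := h.exists_isDerivation
    have beta_getElem (i : ℕ) (hi : i < (x :: l).length) :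
        Nat.beta (Nat.unbeta (x :: l)) i = (x :: l)[i] :=
      Nat.beta_unbeta_coe (x :: l) ⟨i, hi⟩
    refine ⟨Nat.unbeta (x :: l), l.length, beta_getElem 0 l.length.succ_pos, fun i hi => ?_⟩
    rw [beta_getElem i (Nat.lt_succ_of_le hi)]
    refine (hl.getElem i _).imp_right fun ⟨j, k, hj, hk, hij, hik, hx⟩ => ?_
    refine ⟨j, k, hij, Nat.le_of_lt_succ hj, hik, Nat.le_of_lt_succ hk, ?_⟩
    rwa [beta_getElem j hj, beta_getElem k hk]
  · rintro ⟨c, n, rfl, h⟩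
    have entry (d i : ℕ) (hd : n - i ≤ d) (hi : i ≤ n) :
        InductiveClosure A R (Nat.beta c i) := by
      induction d using Nat.strong_induction_on generalizing i with
      | _ d ih =>
        rcases h i hi with hA | ⟨j, k, hij, hj, hik, hk, hR⟩
        · exact .base hA
        · exact .step (ih (n - j) (by omega) j le_rfl hj) (ih (n - k) (by omega) k le_rfl hk) hR
    exact entry n 0 (Nat.sub_le n 0) n.zero_le

end

theorem Sigma1Definable.inductiveClosure {A : (ℕ → ℕ) → ℕ → Prop}
    {R : (ℕ → ℕ) → ℕ → ℕ → ℕ → Prop} {F : (ℕ → ℕ) → ℕ} (hF : Sigma1Fun F)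
    (hA : Sigma1Definable fun ρ => A (fun n => ρ (n + 1)) (ρ 0))
    (hR : Sigma1Definable fun ρ => R (fun n => ρ (n + 3)) (ρ 2) (ρ 1) (ρ 0)) :
    Sigma1Definable fun ρ => InductiveClosure (A ρ) (R ρ) (F ρ) := by
  have hF' : Sigma1Fun fun ρ => F fun n => ρ (n + 2) := hF.rename _
  have hA' : Sigma1Definable fun ρ => A (fun n => ρ (n + 3)) (Nat.beta (ρ 2) (ρ 0)) :=
    (hA.rename (consEnv 0 fun n => n + 4)).comp_cons inferInstance
  have hR' : Sigma1Definable fun ρ => R (fun n => ρ (n + 5)) (Nat.beta (ρ 4) (ρ 1))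
      (Nat.beta (ρ 4) (ρ 0)) (Nat.beta (ρ 4) (ρ 2)) :=
    (((hR.rename (consEnv 0 (consEnv 1 (consEnv 2 fun n => n + 8)))).comp_cons
      (F := fun ρ => Nat.beta (ρ 6) (ρ 4)) inferInstance).comp_cons
      (F := fun ρ => Nat.beta (ρ 5) (ρ 1)) inferInstance).comp_cons
      (F := fun ρ => Nat.beta (ρ 4) (ρ 1)) inferInstance
  exact .of_iff (S := fun ρ => ∃ c n, Nat.beta c 0 = F ρ ∧ ∀ i, i ≤ n → (A ρ (Nat.beta c i) ∨
      ∃ j k, i < j ∧ j ≤ n ∧ i < k ∧ k ≤ n ∧ R ρ (Nat.beta c j) (Nat.beta c k) (Nat.beta c i)))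
    inferInstance fun ρ => inductiveClosure_iff_beta.symm

/-! ### Primitive recursive functions -/

theorem inductiveClosure_natRec_iff (z : ℕ) (g : ℕ → ℕ → ℕ) (x y : ℕ) :
    InductiveClosure (fun u => u = Nat.pair 0 z)
      (fun a _ u => u = Nat.pair (a.unpair.1 + 1) (g a.unpair.1 a.unpair.2)) (Nat.pair x y) ↔
    y = Nat.rec z g x := by
  constructor
  · suffices ∀ u, InductiveClosure (fun u => u = Nat.pair 0 z)
        (fun a _ u => u = Nat.pair (a.unpair.1 + 1) (g a.unpair.1 a.unpair.2)) u →
        u.unpair.2 = Nat.rec z g u.unpair.1 from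
      fun h => by simpa only [Nat.unpair_pair] using this _ h
    intro u hu
    induction hu with
    | base h => simp only [h, Nat.unpair_pair, Nat.rec_zero]
    | step _ _ h ih _ => simp only [h, Nat.unpair_pair, ih]
  · rintro rfl
    induction x with
    | zero => exact .base rfl
    | succ x ih => exact .step ih ih (by simp only [Nat.unpair_pair])

theorem Sigma1Fun.of_primrec {f : ℕ → ℕ} (h : Nat.Primrec f) {F : (ℕ → ℕ) → ℕ}
    (hF : Sigma1Fun F) : Sigma1Fun fun ρ => f (F ρ) := by
  induction h generalizing F with
  | zero => exact .const 0
  | succ => exact .add (G := fun _ => 1)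
  | left => exact .unpair_fst
  | right => exact .unpair_snd
  | pair _ _ ih₁ ih₂ => exact @Sigma1Fun.pair _ _ (ih₁ hF) (ih₂ hF)
  | comp _ _ ih₁ ih₂ => exact ih₁ (ih₂ hF)
  | @prec f g _ _ ih₁ ih₂ =>
    refine .comp₁ ⟨?_⟩ hF
    have base : Sigma1Fun fun ρ => f (ρ 2).unpair.1 := ih₁ inferInstance
    have step : Sigma1Fun fun ρ => g (Nat.pair (ρ 4).unpair.1
      (Nat.pair (ρ 2).unpair.1 (ρ 2).unpair.2)) := ih₂ inferInstance
    have graph := Sigma1Definable.inductiveClosure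
      (A := fun ρ u => u = Nat.pair 0 (f (ρ 1).unpair.1))
      (R := fun ρ a _ u => u = Nat.pair (a.unpair.1 + 1)
        (g (Nat.pair (ρ 1).unpair.1 (Nat.pair a.unpair.1 a.unpair.2))))
      (F := fun ρ => Nat.pair (ρ 1).unpair.2 (ρ 0)) inferInstance inferInstance inferInstance
    exact graph.of_iff fun ρ => inductiveClosure_natRec_iff _
      (fun y IH => g (Nat.pair (ρ 1).unpair.1 (Nat.pair y IH))) _ _

theorem Sigma1Fun.of_primrec₂ {f : ℕ → ℕ → ℕ} (h : Primrec₂ f) {F G : (ℕ → ℕ) → ℕ}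
    (hF : Sigma1Fun F) (hG : Sigma1Fun G) : Sigma1Fun fun ρ => f (F ρ) (G ρ) := by
  have uncurried : Primrec fun n : ℕ => f n.unpair.1 n.unpair.2 :=
    h.comp (Primrec.fst.comp Primrec.unpair) (Primrec.snd.comp Primrec.unpair)
  simpa only [Nat.unpair_pair] using
    Sigma1Fun.of_primrec (Primrec.nat_iff.1 uncurried) (F := fun ρ => Nat.pair (F ρ) (G ρ))
      inferInstance

instance Sigma1Fun.pow {F G : (ℕ → ℕ) → ℕ} [hF : Sigma1Fun F] [hG : Sigma1Fun G] :
    Sigma1Fun fun ρ => F ρ ^ G ρ :=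
  .of_primrec₂ (Primrec₂.unpaired'.1 Nat.Primrec.pow) hF hG

/-! ### Substitution on codes -/

/-- The substitution facts `x ↦ y`, coded as `Nat.pair x y`, from which the action of a
substitution on codes of terms is generated; `V n y` says that variable `n` goes to `y`. -/
def TermSubstBase (V : ℕ → ℕ → Prop) (u : ℕ) : Prop :=
  (∃ n y, V n y ∧ u = Nat.pair (Nat.pair 0 n) y) ∨ u = Nat.pair (Nat.pair 1 0) (Nat.pair 1 0)

/-- The rules generating the action of a substitution on codes of compound terms. -/
def TermSubstRule (a b u : ℕ) : Prop :=
  ∃ x₁ x₂ y₁ y₂, a = Nat.pair x₁ x₂ ∧ b = Nat.pair y₁ y₂ ∧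
    (u = Nat.pair (Nat.pair 2 x₁) (Nat.pair 2 x₂) ∨
      u = Nat.pair (Nat.pair 3 (Nat.pair x₁ y₁)) (Nat.pair 3 (Nat.pair x₂ y₂)) ∨
      u = Nat.pair (Nat.pair 4 (Nat.pair x₁ y₁)) (Nat.pair 4 (Nat.pair x₂ y₂)))

/-- The graph of the action on codes of terms of the substitution with graph `V`. -/
def TermSubstGraph (V : ℕ → ℕ → Prop) (x y : ℕ) : Prop :=
  InductiveClosure (TermSubstBase V) TermSubstRule (Nat.pair x y)

/-- The substitution facts for atomic formulas. The fact that below `d` binders `x` goes to `y`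
is coded as `Nat.pair d (Nat.pair x y)`, and `V d` is the substitution performed there. -/
def FmlSubstBase (V : ℕ → ℕ → ℕ → Prop) (u : ℕ) : Prop :=
  ∃ d x₁ x₂ y₁ y₂, TermSubstGraph (V d) x₁ x₂ ∧ TermSubstGraph (V d) y₁ y₂ ∧
    (u = Nat.pair d (Nat.pair (Nat.pair 0 (Nat.pair x₁ y₁)) (Nat.pair 0 (Nat.pair x₂ y₂))) ∨
      u = Nat.pair d (Nat.pair (Nat.pair 1 (Nat.pair x₁ y₁)) (Nat.pair 1 (Nat.pair x₂ y₂))))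

/-- The rules generating the action of a substitution on codes of compound formulas. -/
def FmlSubstRule (a b u : ℕ) : Prop :=
  (∃ d x₁ x₂, a = Nat.pair d (Nat.pair x₁ x₂) ∧
    u = Nat.pair d (Nat.pair (Nat.pair 2 x₁) (Nat.pair 2 x₂))) ∨
  (∃ d x₁ x₂ y₁ y₂, a = Nat.pair d (Nat.pair x₁ x₂) ∧ b = Nat.pair d (Nat.pair y₁ y₂) ∧
    (u = Nat.pair d (Nat.pair (Nat.pair 3 (Nat.pair x₁ y₁)) (Nat.pair 3 (Nat.pair x₂ y₂))) ∨
      u = Nat.pair d (Nat.pair (Nat.pair 4 (Nat.pair x₁ y₁)) (Nat.pair 4 (Nat.pair x₂ y₂))) ∨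
      u = Nat.pair d (Nat.pair (Nat.pair 5 (Nat.pair x₁ y₁)) (Nat.pair 5 (Nat.pair x₂ y₂))))) ∨
  (∃ d x₁ x₂, a = Nat.pair (d + 1) (Nat.pair x₁ x₂) ∧
    (u = Nat.pair d (Nat.pair (Nat.pair 6 x₁) (Nat.pair 6 x₂)) ∨
      u = Nat.pair d (Nat.pair (Nat.pair 7 x₁) (Nat.pair 7 x₂))))

/-- The graph of the action on codes of formulas of a substitution below `d` binders. -/
def FmlSubstGraph (V : ℕ → ℕ → ℕ → Prop) (d x y : ℕ) : Prop :=
  InductiveClosure (FmlSubstBase V) FmlSubstRule (Nat.pair d (Nat.pair x y))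

section TermSubst

variable {V : ℕ → ℕ → Prop} {σ : ℕ → ATerm}

theorem exists_term_of_substClosure (hV : ∀ n y, V n y ↔ y = (σ n).code) {u : ℕ}
    (h : InductiveClosure (TermSubstBase V) TermSubstRule u) :
    ∃ t : ATerm, u = Nat.pair t.code (t.substAll σ).code := by
  induction h with
  | base h =>
    rcases h with ⟨n, y, hn, rfl⟩ | rfl
    · exact ⟨.var n, by rw [(hV n y).1 hn]; rfl⟩
    · exact ⟨.zero, rfl⟩
  | step _ _ h ih₁ ih₂ =>
    obtain ⟨t, rfl⟩ := ih₁
    obtain ⟨s, rfl⟩ := ih₂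
    obtain ⟨x, x', y, y', ha, hb, h⟩ := h
    obtain ⟨rfl, rfl⟩ := Nat.pair_eq_pair.1 ha
    obtain ⟨rfl, rfl⟩ := Nat.pair_eq_pair.1 hb
    rcases h with rfl | rfl | rfl
    exacts [⟨.succ t, rfl⟩, ⟨.add t s, rfl⟩, ⟨.mul t s, rfl⟩]

theorem termSubstGraph_code (hV : ∀ n y, V n y ↔ y = (σ n).code) (t : ATerm) :
    TermSubstGraph V t.code (t.substAll σ).code := by
  induction t with
  | var n => exact .base (.inl ⟨n, _, (hV n _).2 rfl, rfl⟩)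
  | zero => exact .base (.inr rfl)
  | succ t ih => exact .step ih ih ⟨_, _, _, _, rfl, rfl, .inl rfl⟩
  | add t s ih₁ ih₂ => exact .step ih₁ ih₂ ⟨_, _, _, _, rfl, rfl, .inr (.inl rfl)⟩
  | mul t s ih₁ ih₂ => exact .step ih₁ ih₂ ⟨_, _, _, _, rfl, rfl, .inr (.inr rfl)⟩

theorem termSubstGraph_iff (hV : ∀ n y, V n y ↔ y = (σ n).code) {x y : ℕ} :
    TermSubstGraph V x y ↔ ∃ t : ATerm, x = t.code ∧ y = (t.substAll σ).code := by
  refine ⟨fun h => ?_, ?_⟩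
  · obtain ⟨t, ht⟩ := exists_term_of_substClosure hV h
    exact ⟨t, Nat.pair_eq_pair.1 ht⟩
  · rintro ⟨t, rfl, rfl⟩
    exact termSubstGraph_code hV t

end TermSubst

section FmlSubst

variable {V : ℕ → ℕ → ℕ → Prop} {σ : ℕ → ℕ → ATerm}

theorem exists_fml_of_substClosure (hV : ∀ d n y, V d n y ↔ y = (σ d n).code)
    (hσ : ∀ d, liftSub (σ d) = σ (d + 1)) {u : ℕ}
    (h : InductiveClosure (FmlSubstBase V) FmlSubstRule u) :
    ∃ (d : ℕ) (φ : AFml), u = Nat.pair d (Nat.pair φ.code (φ.substAll (σ d)).code) := by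
  induction h with
  | base h =>
    obtain ⟨d, x, x', y, y', hx, hy, h⟩ := h
    obtain ⟨t, rfl, rfl⟩ := (termSubstGraph_iff (hV d)).1 hx
    obtain ⟨s, rfl, rfl⟩ := (termSubstGraph_iff (hV d)).1 hy
    rcases h with rfl | rfl
    exacts [⟨d, .eq t s, rfl⟩, ⟨d, .le t s, rfl⟩]
  | step _ _ h ih₁ ih₂ =>
    obtain ⟨d, φ, rfl⟩ := ih₁
    obtain ⟨e, ψ, rfl⟩ := ih₂
    simp only [FmlSubstRule, Nat.pair_eq_pair] at h
    rcases h with ⟨_, _, _, ⟨rfl, rfl, rfl⟩, rfl⟩ |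
      ⟨_, _, _, _, _, ⟨rfl, rfl, rfl⟩, ⟨rfl, rfl, rfl⟩, h⟩ | ⟨d, _, _, ⟨rfl, rfl, rfl⟩, h⟩
    · exact ⟨d, .neg φ, rfl⟩
    · rcases h with rfl | rfl | rfl
      exacts [⟨_, .and φ ψ, rfl⟩, ⟨_, .or φ ψ, rfl⟩, ⟨_, .imp φ ψ, rfl⟩]
    · rw [← hσ] at h
      rcases h with rfl | rfl
      exacts [⟨d, .all φ, rfl⟩, ⟨d, .ex φ, rfl⟩]

theorem fmlSubstGraph_code (hV : ∀ d n y, V d n y ↔ y = (σ d n).code)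
    (hσ : ∀ d, liftSub (σ d) = σ (d + 1)) (φ : AFml) (d : ℕ) :
    FmlSubstGraph V d φ.code (φ.substAll (σ d)).code := by
  have term (t : ATerm) (d : ℕ) := termSubstGraph_code (hV d) t
  induction φ generalizing d with
  | eq t s => exact .base ⟨d, _, _, _, _, term t d, term s d, .inl rfl⟩
  | le t s => exact .base ⟨d, _, _, _, _, term t d, term s d, .inr rfl⟩
  | neg φ ih => exact .step (ih d) (ih d) (.inl ⟨_, _, _, rfl, rfl⟩)
  | and φ ψ ih₁ ih₂ =>
    exact .step (ih₁ d) (ih₂ d) (.inr (.inl ⟨_, _, _, _, _, rfl, rfl, .inl rfl⟩))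
  | or φ ψ ih₁ ih₂ =>
    exact .step (ih₁ d) (ih₂ d) (.inr (.inl ⟨_, _, _, _, _, rfl, rfl, .inr (.inl rfl)⟩))
  | imp φ ψ ih₁ ih₂ =>
    exact .step (ih₁ d) (ih₂ d) (.inr (.inl ⟨_, _, _, _, _, rfl, rfl, .inr (.inr rfl)⟩))
  | all φ ih =>
    rw [AFml.substAll, hσ]
    exact .step (ih (d + 1)) (ih (d + 1)) (.inr (.inr ⟨_, _, _, rfl, .inl rfl⟩))
  | ex φ ih =>
    rw [AFml.substAll, hσ]
    exact .step (ih (d + 1)) (ih (d + 1)) (.inr (.inr ⟨_, _, _, rfl, .inr rfl⟩))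

theorem fmlSubstGraph_iff (hV : ∀ d n y, V d n y ↔ y = (σ d n).code)
    (hσ : ∀ d, liftSub (σ d) = σ (d + 1)) {d x y : ℕ} :
    FmlSubstGraph V d x y ↔ ∃ φ : AFml, x = φ.code ∧ y = (φ.substAll (σ d)).code := by
  refine ⟨fun h => ?_, ?_⟩
  · obtain ⟨e, φ, hφ⟩ := exists_fml_of_substClosure hV hσ h
    obtain ⟨rfl, hxy⟩ := Nat.pair_eq_pair.1 hφ
    exact ⟨φ, Nat.pair_eq_pair.1 hxy⟩
  · rintro ⟨φ, rfl, rfl⟩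
    exact fmlSubstGraph_code hV hσ φ d

end FmlSubst

theorem Sigma1Definable.termSubstGraph {V : (ℕ → ℕ) → ℕ → ℕ → Prop} {F G : (ℕ → ℕ) → ℕ}
    (hV : Sigma1Definable fun ρ => V (fun n => ρ (n + 2)) (ρ 1) (ρ 0))
    (hF : Sigma1Fun F) (hG : Sigma1Fun G) :
    Sigma1Definable fun ρ => TermSubstGraph (V ρ) (F ρ) (G ρ) := by
  have hV' : Sigma1Definable fun ρ => V (fun n => ρ (n + 3)) (ρ 1) (ρ 0) :=
    hV.rename (consEnv 0 (consEnv 1 fun n => n + 3))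
  refine .inductiveClosure (A := fun ρ => TermSubstBase (V ρ)) (R := fun _ => TermSubstRule)
    inferInstance ?_ ?_
  · unfold TermSubstBase; infer_instance
  · unfold TermSubstRule; infer_instance

set_option synthInstance.maxHeartbeats 400000 in
-- The rules are a long disjunction of existential clauses, which instance search has to traverse.
set_option synthInstance.maxSize 2048 in
theorem Sigma1Definable.fmlSubstGraph {V : (ℕ → ℕ) → ℕ → ℕ → ℕ → Prop} {D F G : (ℕ → ℕ) → ℕ}
    (hV : Sigma1Definable fun ρ => V (fun n => ρ (n + 3)) (ρ 2) (ρ 1) (ρ 0))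
    (hD : Sigma1Fun D) (hF : Sigma1Fun F) (hG : Sigma1Fun G) :
    Sigma1Definable fun ρ => FmlSubstGraph (V ρ) (D ρ) (F ρ) (G ρ) := by
  have hV' : Sigma1Definable fun ρ => V (fun n => ρ (n + 8)) (ρ 6) (ρ 1) (ρ 0) :=
    hV.rename (consEnv 0 (consEnv 1 (consEnv 6 fun n => n + 8)))
  have hT (i j : ℕ) : Sigma1Definable fun ρ =>
      TermSubstGraph (V (fun n => ρ (n + 6)) (ρ 4)) (ρ i) (ρ j) :=
    .termSubstGraph (V := fun ρ => V (fun n => ρ (n + 6)) (ρ 4)) hV' inferInstance inferInstance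
  have h₁ := hT 3 2
  have h₂ := hT 1 0
  refine .inductiveClosure (A := fun ρ => FmlSubstBase (V ρ)) (R := fun _ => FmlSubstRule)
    inferInstance ?_ ?_
  · unfold FmlSubstBase; infer_instance
  · unfold FmlSubstRule; infer_instance

/-- `y` is the code of the variable that replaces variable `n` when a formula is lifted, below
`d` binders. -/
def LiftVar (d n y : ℕ) : Prop :=
  (n < d ∧ y = Nat.pair 0 n) ∨ (d ≤ n ∧ y = Nat.pair 0 (n + 1))

/-- `y` is the code of variable `n + k`. -/
def ShiftVar (k n y : ℕ) : Prop := y = Nat.pair 0 (n + k)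

/-- `y` is the code of the term that replaces variable `n` when the term with code `t` is
substituted for variable `0`, below `d` binders. -/
def Subst0Var (t d n y : ℕ) : Prop :=
  (n < d ∧ y = Nat.pair 0 n) ∨ (n = d ∧ TermSubstGraph (ShiftVar d) t y) ∨
    (d < n ∧ ∃ k, n = k + 1 ∧ y = Nat.pair 0 k)

/-- The graph of `AFml.lift 0` on codes. -/
def LiftCode (x y : ℕ) : Prop := FmlSubstGraph LiftVar 0 x y

/-- `x` is the code of a formula. -/
def IsFmlCode (x : ℕ) : Prop := ∃ y, LiftCode x y

/-- `x` is the code of a term. -/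
def IsTermCode (x : ℕ) : Prop := ∃ y, TermSubstGraph (ShiftVar 0) x y

/-- The graph of `AFml.subst0` on codes, with `t` the code of the substituted term. -/
def Subst0Code (t x y : ℕ) : Prop := IsTermCode t ∧ FmlSubstGraph (Subst0Var t) 0 x y

theorem liftVar_iff (d n y : ℕ) : LiftVar d n y ↔ y = (liftEnv d n).code := by
  unfold LiftVar liftEnv
  split_ifs with h
  · simp [h, ATerm.code]
  · simp [h, not_lt.1 h, ATerm.code]

theorem liftCode_iff {x y : ℕ} :
    LiftCode x y ↔ ∃ φ : AFml, x = φ.code ∧ y = (φ.lift 0).code := by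
  simp only [AFml.lift_eq_substAll]
  exact fmlSubstGraph_iff liftVar_iff liftSub_liftEnv

theorem isFmlCode_iff {x : ℕ} : IsFmlCode x ↔ ∃ φ : AFml, x = φ.code := by
  simp only [IsFmlCode, liftCode_iff]
  rw [exists_comm]
  simp

theorem termSubstGraph_shiftVar {k x y : ℕ} : TermSubstGraph (ShiftVar k) x y ↔
    ∃ t : ATerm, x = t.code ∧ y = (t.substAll fun n => .var (n + k)).code :=
  termSubstGraph_iff (σ := fun n => .var (n + k)) fun _ _ => Iff.rfl

theorem isTermCode_iff {x : ℕ} : IsTermCode x ↔ ∃ t : ATerm, x = t.code := by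
  simp only [IsTermCode, termSubstGraph_shiftVar]
  rw [exists_comm]
  simp

/-- The substitution of `t` for variable `0`, as it acts below `d` binders. -/
def subst0EnvBelow (t : ATerm) (d n : ℕ) : ATerm :=
  if n < d then .var n else if n = d then t.substAll fun k => .var (k + d) else .var (n - 1)

theorem subst0EnvBelow_zero (t : ATerm) : subst0EnvBelow t 0 = subst0Env t := by
  funext n
  cases n with
  | zero => exact ATerm.substAll_var t
  | succ n => simp [subst0EnvBelow, subst0Env]

theorem liftSub_subst0EnvBelow (t : ATerm) (d : ℕ) :
    liftSub (subst0EnvBelow t d) = subst0EnvBelow t (d + 1) := by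
  funext n
  cases n with
  | zero => simp [liftSub, subst0EnvBelow]
  | succ n =>
    simp only [liftSub, subst0EnvBelow, add_lt_add_iff_right, add_left_inj]
    split_ifs with hlt heq
    · simp [ATerm.lift]
    · simp [ATerm.lift_eq_substAll, ATerm.substAll_substAll, ATerm.substAll, liftEnv, add_assoc]
    · simp only [ATerm.lift, Nat.not_lt_zero, if_false, ATerm.var.injEq]
      omega

theorem subst0Var_iff (t : ATerm) (d n y : ℕ) :
    Subst0Var t.code d n y ↔ y = (subst0EnvBelow t d n).code := by
  unfold Subst0Var subst0EnvBelow
  rw [termSubstGraph_shiftVar]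
  rcases lt_trichotomy n d with h | rfl | h
  · simp [h, ATerm.code, h.ne, h.le.not_gt]
  · simp only [lt_irrefl, false_and, false_or, true_and, or_false, if_false, if_true]
    refine ⟨?_, fun h => ⟨t, rfl, h⟩⟩
    rintro ⟨s, hs, rfl⟩
    rw [ATerm.code_injective hs]
  · obtain ⟨k, rfl⟩ := Nat.exists_eq_succ_of_ne_zero (Nat.ne_zero_of_lt h)
    simp [h.le.not_gt, h.ne', h, ATerm.code]

theorem subst0Code_iff {u x y : ℕ} : Subst0Code u x y ↔
    ∃ (t : ATerm) (φ : AFml), u = t.code ∧ x = φ.code ∧ y = (φ.subst0 t).code := by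
  have graph (t : ATerm) : FmlSubstGraph (Subst0Var t.code) 0 x y ↔
      ∃ φ : AFml, x = φ.code ∧ y = (φ.subst0 t).code := by
    rw [fmlSubstGraph_iff (subst0Var_iff t) (liftSub_subst0EnvBelow t), subst0EnvBelow_zero]
    rfl
  rw [Subst0Code, isTermCode_iff]
  constructor
  · rintro ⟨⟨t, rfl⟩, h⟩
    obtain ⟨φ, hφ⟩ := (graph t).1 h
    exact ⟨t, φ, rfl, hφ⟩
  · rintro ⟨t, φ, rfl, hφ⟩
    exact ⟨⟨t, rfl⟩, (graph t).2 ⟨φ, hφ⟩⟩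

namespace Sigma1Definable

variable {F G H : (ℕ → ℕ) → ℕ}

instance liftCode [hF : Sigma1Fun F] [hG : Sigma1Fun G] :
    Sigma1Definable fun ρ => LiftCode (F ρ) (G ρ) := by
  refine .fmlSubstGraph (V := fun _ => LiftVar) ?_ (.const 0) hF hG
  unfold LiftVar; infer_instance

instance isFmlCode [hF : Sigma1Fun F] : Sigma1Definable fun ρ => IsFmlCode (F ρ) := by
  refine .comp₁ ?_ hF
  unfold IsFmlCode; infer_instance

instance termSubstGraph_shiftVar [hF : Sigma1Fun F] [hG : Sigma1Fun G] [hH : Sigma1Fun H] :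
    Sigma1Definable fun ρ => TermSubstGraph (ShiftVar (F ρ)) (G ρ) (H ρ) := by
  refine .comp₃ (R := fun a b c => TermSubstGraph (ShiftVar a) b c) ?_ hF hG hH
  refine .termSubstGraph (V := fun ρ => ShiftVar (ρ 0)) ?_ inferInstance inferInstance
  unfold ShiftVar; infer_instance

instance isTermCode [hF : Sigma1Fun F] : Sigma1Definable fun ρ => IsTermCode (F ρ) := by
  refine .comp₁ ?_ hF
  unfold IsTermCode; infer_instance

instance subst0Code [hF : Sigma1Fun F] [hG : Sigma1Fun G] [hH : Sigma1Fun H] :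
    Sigma1Definable fun ρ => Subst0Code (F ρ) (G ρ) (H ρ) := by
  refine .comp₃ (R := Subst0Code) ?_ hF hG hH
  have : Sigma1Definable fun ρ => FmlSubstGraph (Subst0Var (ρ 0)) 0 (ρ 1) (ρ 2) := by
    refine .fmlSubstGraph (V := fun ρ => Subst0Var (ρ 0)) ?_ inferInstance inferInstance
      inferInstance
    unfold Subst0Var; infer_instance
  unfold Subst0Code; infer_instance

end Sigma1Definable

/-! ### Codes of tautologies and of theorems -/

instance Sigma1Fun.ite {S : (ℕ → ℕ) → Prop} {F G : (ℕ → ℕ) → ℕ} [∀ ρ, Decidable (S ρ)]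
    [hS : Delta1Definable S] [hF : Sigma1Fun F] [hG : Sigma1Fun G] :
    Sigma1Fun fun ρ => if S ρ then F ρ else G ρ := by
  have cases : Sigma1Definable fun ρ =>
      (S (fun n => ρ (n + 1)) ∧ ρ 0 = F fun n => ρ (n + 1)) ∨
        (¬ S (fun n => ρ (n + 1)) ∧ ρ 0 = G fun n => ρ (n + 1)) :=
    @Sigma1Definable.or _ _ (@Sigma1Definable.and _ _ (hS.pos.rename _) hF.out)
      (@Sigma1Definable.and _ _ (hS.neg.rename _) hG.out)
  refine ⟨cases.of_iff fun ρ => ?_⟩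
  by_cases h : S fun n => ρ (n + 1) <;> simp [h]

/-- The `x`-th binary digit of `b`; finite sets of numbers are coded by their digits. -/
def bit (b x : ℕ) : ℕ := (b.testBit x).toNat

instance Sigma1Fun.bit {F G : (ℕ → ℕ) → ℕ} [Sigma1Fun F] [Sigma1Fun G] :
    Sigma1Fun fun ρ => bit (F ρ) (G ρ) := by
  simp only [PLN.bit, Nat.toNat_testBit]; infer_instance

theorem bit_lt_two (b x : ℕ) : bit b x < 2 := Bool.toNat_lt _

theorem le_of_bit_eq_one {b s x : ℕ} (h : b < 2 ^ (s + 1)) (hx : bit b x = 1) : x ≤ s := by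
  by_contra! hsx
  have : b.testBit x = false :=
    Nat.testBit_lt_two_pow (h.trans_le (Nat.pow_le_pow_right two_pos hsx))
  simp [bit, this] at hx

theorem exists_bit_eq_one_iff (S : ℕ → Prop) (s : ℕ) :
    ∃ b, b < 2 ^ (s + 1) ∧ ∀ x, bit b x = 1 ↔ x ≤ s ∧ S x := by
  classical
  refine ⟨Nat.ofBits fun i : Fin (s + 1) => decide (S i), Nat.ofBits_lt_two_pow _, fun x => ?_⟩
  rcases lt_or_ge x (s + 1) with hx | hx
  · simp [bit, Nat.testBit_ofBits_lt _ _ hx, Nat.le_of_lt_succ hx]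
  · simp [bit, Nat.testBit_ofBits_ge _ _ hx, Nat.not_le.2 hx]

/-- The truth table of the connective with code tag `c` (conjunction `3`, disjunction `4`,
implication `5`). The values are `0`, `1`, and `2` for undefined. -/
def truthTable (c a b : ℕ) : ℕ :=
  if a < 2 ∧ b < 2 then
    if c = 3 then a * b else if c = 4 then (a + b + a * b) % 2 else (1 + a + a * b) % 2
  else 2

instance Sigma1Fun.truthTable {F G H : (ℕ → ℕ) → ℕ} [Sigma1Fun F] [Sigma1Fun G] [Sigma1Fun H] :
    Sigma1Fun fun ρ => truthTable (F ρ) (G ρ) (H ρ) := by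
  unfold PLN.truthTable; infer_instance

theorem truthTable_lt_two_iff {c a b : ℕ} : truthTable c a b < 2 ↔ a < 2 ∧ b < 2 := by
  rw [truthTable]
  split_ifs with hab
  · obtain ⟨ha, hb⟩ := hab
    interval_cases a <;> interval_cases b <;> decide
  all_goals
    first
    | exact iff_of_true (Nat.mod_lt _ two_pos) hab
    | exact iff_of_false (by decide) hab

theorem truthTable_and {a b : ℕ} (ha : a < 2) (hb : b < 2) :
    truthTable 3 a b = 1 ↔ a = 1 ∧ b = 1 := by
  interval_cases a <;> interval_cases b <;> decide

theorem truthTable_or {a b : ℕ} (ha : a < 2) (hb : b < 2) :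
    truthTable 4 a b = 1 ↔ a = 1 ∨ b = 1 := by
  interval_cases a <;> interval_cases b <;> decide

theorem truthTable_imp {a b : ℕ} (ha : a < 2) (hb : b < 2) :
    truthTable 5 a b = 1 ↔ (a = 1 → b = 1) := by
  interval_cases a <;> interval_cases b <;> decide

theorem truthTable_neg {a : ℕ} (ha : a < 2) : truthTable 5 a 0 = 1 ↔ ¬ a = 1 := by
  interval_cases a <;> decide

theorem unpair_snd_lt {x : ℕ} (h : x.unpair.1 ≠ 0) : x.unpair.2 < x := by
  have := Nat.add_le_pair x.unpair.1 x.unpair.2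
  rw [Nat.pair_unpair] at this
  omega

/-- The value of the propositional formula with code `x` when the formulas that are not negations,
conjunctions, disjunctions or implications take the values `α`. -/
def evalCode (α : ℕ → ℕ) (x : ℕ) : ℕ :=
  if _h : x.unpair.1 = 2 then truthTable 5 (evalCode α x.unpair.2) 0
  else if _h : 3 ≤ x.unpair.1 ∧ x.unpair.1 ≤ 5 then
    truthTable x.unpair.1 (evalCode α x.unpair.2.unpair.1) (evalCode α x.unpair.2.unpair.2)
  else α x
termination_by x
decreasing_by
  · exact unpair_snd_lt (by omega)
  · exact (Nat.unpair_left_le _).trans_lt (unpair_snd_lt (by omega))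
  · exact (Nat.unpair_right_le _).trans_lt (unpair_snd_lt (by omega))

section EvalCode

variable {α : ℕ → ℕ}

theorem evalCode_neg (x : ℕ) : evalCode α (Nat.pair 2 x) = truthTable 5 (evalCode α x) 0 := by
  rw [evalCode]; simp

theorem evalCode_binary {c : ℕ} (h₁ : 3 ≤ c) (h₂ : c ≤ 5) (x y : ℕ) :
    evalCode α (Nat.pair c (Nat.pair x y)) = truthTable c (evalCode α x) (evalCode α y) := by
  rw [evalCode]
  simp [h₁, h₂, show c ≠ 2 by omega]

theorem evalCode_atom {x : ℕ} (h : ¬ (2 ≤ x.unpair.1 ∧ x.unpair.1 ≤ 5)) :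
    evalCode α x = α x := by
  rw [evalCode, dif_neg (by omega), dif_neg (by omega)]

/-- The facts that `x` has value `v`, coded as `Nat.pair x v`, for atoms `x`. -/
def EvalCodeBase (α : ℕ → ℕ) (u : ℕ) : Prop :=
  ∃ x, ¬ (2 ≤ x.unpair.1 ∧ x.unpair.1 ≤ 5) ∧ u = Nat.pair x (α x)

/-- The rules generating the graph of `evalCode`. -/
def EvalCodeRule (a b u : ℕ) : Prop :=
  ∃ x v y w, a = Nat.pair x v ∧ b = Nat.pair y w ∧
    (u = Nat.pair (Nat.pair 2 x) (truthTable 5 v 0) ∨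
      ∃ c, 3 ≤ c ∧ c ≤ 5 ∧ u = Nat.pair (Nat.pair c (Nat.pair x y)) (truthTable c v w))

theorem exists_eq_evalCode_of_closure {u : ℕ}
    (h : InductiveClosure (EvalCodeBase α) EvalCodeRule u) :
    ∃ x, u = Nat.pair x (evalCode α x) := by
  induction h with
  | base h =>
    obtain ⟨x, hx, rfl⟩ := h
    exact ⟨x, by rw [evalCode_atom hx]⟩
  | step _ _ h ih₁ ih₂ =>
    obtain ⟨x, rfl⟩ := ih₁
    obtain ⟨y, rfl⟩ := ih₂
    simp only [EvalCodeRule, Nat.pair_eq_pair] at h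
    obtain ⟨_, _, _, _, ⟨rfl, rfl⟩, ⟨rfl, rfl⟩, rfl | ⟨c, h₁, h₂, rfl⟩⟩ := h
    · exact ⟨_, by rw [evalCode_neg]⟩
    · exact ⟨_, by rw [evalCode_binary h₁ h₂]⟩

theorem closure_evalCode (x : ℕ) :
    InductiveClosure (EvalCodeBase α) EvalCodeRule (Nat.pair x (evalCode α x)) := by
  induction x using evalCode.induct with
  | case1 x h ih =>
    refine .step ih ih ⟨_, _, _, _, rfl, rfl, .inl ?_⟩
    rw [← evalCode_neg, ← h, Nat.pair_unpair]
  | case2 x _ h ih₁ ih₂ =>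
    refine .step ih₁ ih₂ ⟨_, _, _, _, rfl, rfl, .inr ⟨x.unpair.1, h.1, h.2, ?_⟩⟩
    rw [← evalCode_binary h.1 h.2, Nat.pair_unpair, Nat.pair_unpair]
  | case3 x h₁ h₂ =>
    have hx : ¬ (2 ≤ x.unpair.1 ∧ x.unpair.1 ≤ 5) := by omega
    exact .base ⟨x, hx, by rw [evalCode_atom hx]⟩

theorem closure_iff_eq_evalCode {x v : ℕ} :
    InductiveClosure (EvalCodeBase α) EvalCodeRule (Nat.pair x v) ↔ v = evalCode α x := by
  refine ⟨fun h => ?_, fun h => h ▸ closure_evalCode x⟩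
  obtain ⟨y, hy⟩ := exists_eq_evalCode_of_closure h
  obtain ⟨rfl, rfl⟩ := Nat.pair_eq_pair.1 hy
  rfl

theorem Sigma1Fun.evalCode {α : (ℕ → ℕ) → ℕ → ℕ} {F : (ℕ → ℕ) → ℕ}
    (hα : Sigma1Fun fun ρ => α (fun n => ρ (n + 1)) (ρ 0)) (hF : Sigma1Fun F) :
    Sigma1Fun fun ρ => evalCode (α ρ) (F ρ) := by
  refine .of_graph (S := fun ρ y => InductiveClosure (EvalCodeBase (α ρ)) EvalCodeRule
    (Nat.pair (F ρ) y)) ?_ fun ρ y => closure_iff_eq_evalCode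
  have hF' : Sigma1Fun fun ρ => F fun n => ρ (n + 1) := hF.rename _
  have hα' : Sigma1Fun fun ρ => α (fun n => ρ (n + 3)) (ρ 0) :=
    hα.rename (consEnv 0 fun n => n + 3)
  refine .inductiveClosure (A := fun ρ => EvalCodeBase (α fun n => ρ (n + 1)))
    (R := fun _ => EvalCodeRule) inferInstance ?_ ?_
  · unfold EvalCodeBase; infer_instance
  · unfold EvalCodeRule; infer_instance

theorem evalCode_code_lt_two (hα : ∀ x, α x < 2) (φ : AFml) : evalCode α φ.code < 2 := by
  induction φ with
  | eq | le | all | ex => rw [evalCode_atom (by simp [AFml.code])]; exact hα _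
  | neg φ ih => rw [AFml.code, evalCode_neg]; exact truthTable_lt_two_iff.2 ⟨ih, two_pos⟩
  | and φ ψ ih₁ ih₂ | or φ ψ ih₁ ih₂ | imp φ ψ ih₁ ih₂ =>
    rw [AFml.code, evalCode_binary (by decide) (by decide)]
    exact truthTable_lt_two_iff.2 ⟨ih₁, ih₂⟩

theorem evalCode_code_eq_one_iff (hα : ∀ x, α x < 2) (φ : AFml) :
    evalCode α φ.code = 1 ↔ φ.evalProp fun ψ => α ψ.code = 1 := by
  have lt_two := evalCode_code_lt_two hα
  induction φ with
  | eq | le | all | ex => rw [evalCode_atom (by simp [AFml.code])]; rfl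
  | neg φ ih =>
    rw [AFml.code, evalCode_neg, truthTable_neg (lt_two φ)]
    exact not_congr ih
  | and φ ψ ih₁ ih₂ =>
    rw [AFml.code, evalCode_binary le_rfl (by decide), truthTable_and (lt_two φ) (lt_two ψ)]
    exact and_congr ih₁ ih₂
  | or φ ψ ih₁ ih₂ =>
    rw [AFml.code, evalCode_binary (by decide) (by decide), truthTable_or (lt_two φ) (lt_two ψ)]
    exact or_congr ih₁ ih₂
  | imp φ ψ ih₁ ih₂ =>
    rw [AFml.code, evalCode_binary (by decide) le_rfl, truthTable_imp (lt_two φ) (lt_two ψ)]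
    exact imp_congr ih₁ ih₂

end EvalCode

theorem left_le_pair_pair (c x y : ℕ) : x ≤ Nat.pair c (Nat.pair x y) :=
  (Nat.left_le_pair x y).trans (Nat.right_le_pair c _)

theorem right_le_pair_pair (c x y : ℕ) : y ≤ Nat.pair c (Nat.pair x y) :=
  (Nat.right_le_pair x y).trans (Nat.right_le_pair c _)

theorem AFml.evalProp_congr {v v' : AFml → Prop} {φ : AFml}
    (h : ∀ ψ : AFml, ψ.code ≤ φ.code → (v ψ ↔ v' ψ)) : φ.evalProp v ↔ φ.evalProp v' := by
  induction φ with
  | eq | le | all | ex => exact h _ le_rfl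
  | neg φ ih => exact not_congr (ih fun ψ hψ => h ψ (hψ.trans (Nat.right_le_pair _ _)))
  | and φ ψ ih₁ ih₂ =>
    exact and_congr (ih₁ fun χ hχ => h χ (hχ.trans (left_le_pair_pair _ _ _)))
      (ih₂ fun χ hχ => h χ (hχ.trans (right_le_pair_pair _ _ _)))
  | or φ ψ ih₁ ih₂ =>
    exact or_congr (ih₁ fun χ hχ => h χ (hχ.trans (left_le_pair_pair _ _ _)))
      (ih₂ fun χ hχ => h χ (hχ.trans (right_le_pair_pair _ _ _)))
  | imp φ ψ ih₁ ih₂ =>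
    exact imp_congr (ih₁ fun χ hχ => h χ (hχ.trans (left_le_pair_pair _ _ _)))
      (ih₂ fun χ hχ => h χ (hχ.trans (right_le_pair_pair _ _ _)))

/-- `x` is the code of a tautology. A valuation of the atoms occurring in the formula is coded by
the digits of a number. -/
def IsTautCode (x : ℕ) : Prop := IsFmlCode x ∧ ∀ b, b < 2 ^ (x + 1) → evalCode (bit b) x = 1

theorem isTautCode_iff {x : ℕ} : IsTautCode x ↔ ∃ φ : AFml, x = φ.code ∧ ATaut φ := by
  rw [IsTautCode, isFmlCode_iff]
  constructor
  · rintro ⟨⟨φ, rfl⟩, h⟩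
    refine ⟨φ, rfl, fun v => ?_⟩
    obtain ⟨b, hb, bit_iff⟩ := exists_bit_eq_one_iff (fun y => ∃ ψ : AFml, y = ψ.code ∧ v ψ) φ.code
    refine (AFml.evalProp_congr fun ψ hψ => ?_).1
      ((evalCode_code_eq_one_iff (bit_lt_two b) φ).1 (h b hb))
    rw [bit_iff, and_iff_right hψ]
    refine ⟨?_, fun hv => ⟨ψ, rfl, hv⟩⟩
    rintro ⟨χ, hχ, hv⟩
    rwa [AFml.code_injective hχ]
  · rintro ⟨φ, rfl, h⟩
    exact ⟨⟨φ, rfl⟩, fun b _ => (evalCode_code_eq_one_iff (bit_lt_two b) φ).2 (h _)⟩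

instance Sigma1Definable.isTautCode {F : (ℕ → ℕ) → ℕ} [hF : Sigma1Fun F] :
    Sigma1Definable fun ρ => IsTautCode (F ρ) := by
  refine .comp₁ ?_ hF
  unfold IsTautCode
  have : Sigma1Fun fun ρ => evalCode (PLN.bit (ρ 0)) (ρ 1) :=
    .evalCode (α := fun ρ => PLN.bit (ρ 0)) inferInstance inferInstance
  infer_instance

/-- `x` is the code of one of the logical axioms of `Proves` other than tautologies. -/
def IsLogicalAxiomCode (x : ℕ) : Prop :=
  (∃ f t y, Subst0Code t f y ∧ x = Nat.pair 5 (Nat.pair (Nat.pair 6 f) y)) ∨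
  (∃ f t y, Subst0Code t f y ∧ x = Nat.pair 5 (Nat.pair y (Nat.pair 7 f))) ∨
  (∃ f g, IsFmlCode f ∧ IsFmlCode g ∧
    x = Nat.pair 5 (Nat.pair (Nat.pair 6 (Nat.pair 5 (Nat.pair f g)))
      (Nat.pair 5 (Nat.pair (Nat.pair 6 f) (Nat.pair 6 g))))) ∨
  (∃ f y, LiftCode f y ∧ x = Nat.pair 5 (Nat.pair f (Nat.pair 6 y))) ∨
  (∃ f, IsFmlCode f ∧ x = Nat.pair 3 (Nat.pair
    (Nat.pair 5 (Nat.pair (Nat.pair 7 f) (Nat.pair 2 (Nat.pair 6 (Nat.pair 2 f)))))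
    (Nat.pair 5 (Nat.pair (Nat.pair 2 (Nat.pair 6 (Nat.pair 2 f))) (Nat.pair 7 f))))) ∨
  (∃ t, IsTermCode t ∧ x = Nat.pair 0 (Nat.pair t t)) ∨
  (∃ f t s y z, Subst0Code t f y ∧ Subst0Code s f z ∧
    x = Nat.pair 5 (Nat.pair (Nat.pair 0 (Nat.pair t s)) (Nat.pair 5 (Nat.pair y z))))

instance Sigma1Definable.isLogicalAxiomCode :
    Sigma1Definable fun ρ => IsLogicalAxiomCode (ρ 0) := by
  unfold IsLogicalAxiomCode
  refine @or _ _ inferInstance (@or _ _ inferInstance (@or _ _ inferInstance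
    (@or _ _ inferInstance (@or _ _ inferInstance (@or _ _ inferInstance ?_)))))
  infer_instance

/-- `x` is the code of a theorem of the theory with axioms `Tax`. -/
def IsTheoremCode (Tax : Set AFml) (x : ℕ) : Prop := ∃ φ : AFml, x = φ.code ∧ Proves Tax φ

/-- `x` is the code of an axiom of the calculus `Proves`, where `p` decides the proper axioms. -/
def IsAxiomCode (p : ℕ → Bool) (x : ℕ) : Prop :=
  (IsFmlCode x ∧ p x = true) ∨ IsTautCode x ∨ IsLogicalAxiomCode x

/-- Modus ponens and generalization on codes. -/
def DeductionRule (a b x : ℕ) : Prop := a = Nat.pair 5 (Nat.pair b x) ∨ x = Nat.pair 6 a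

section IsTheoremCode

variable {Tax : Set AFml} {x : ℕ}

theorem isTheoremCode_code {φ : AFml} : IsTheoremCode Tax φ.code ↔ Proves Tax φ := by
  refine ⟨?_, fun h => ⟨φ, rfl, h⟩⟩
  rintro ⟨ψ, hψ, h⟩
  rwa [AFml.code_injective hψ]

theorem IsLogicalAxiomCode.isTheoremCode (h : IsLogicalAxiomCode x) : IsTheoremCode Tax x := by
  rcases h with ⟨f, t, y, hy, rfl⟩ | ⟨f, t, y, hy, rfl⟩ | ⟨f, g, hf, hg, rfl⟩ | ⟨f, y, hy, rfl⟩ |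
    ⟨f, hf, rfl⟩ | ⟨t, ht, rfl⟩ | ⟨f, t, s, y, z, hy, hz, rfl⟩
  · obtain ⟨t, φ, rfl, rfl, rfl⟩ := subst0Code_iff.1 hy
    exact ⟨_, rfl, .allE φ t⟩
  · obtain ⟨t, φ, rfl, rfl, rfl⟩ := subst0Code_iff.1 hy
    exact ⟨_, rfl, .exI φ t⟩
  · obtain ⟨φ, rfl⟩ := isFmlCode_iff.1 hf
    obtain ⟨ψ, rfl⟩ := isFmlCode_iff.1 hg
    exact ⟨_, rfl, .allImp φ ψ⟩
  · obtain ⟨φ, rfl, rfl⟩ := liftCode_iff.1 hy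
    exact ⟨_, rfl, .vacAll φ⟩
  · obtain ⟨φ, rfl⟩ := isFmlCode_iff.1 hf
    exact ⟨_, rfl, .exDef φ⟩
  · obtain ⟨t, rfl⟩ := isTermCode_iff.1 ht
    exact ⟨_, rfl, .eqRefl t⟩
  · obtain ⟨t, φ, rfl, rfl, rfl⟩ := subst0Code_iff.1 hy
    obtain ⟨s, ψ, rfl, hψ, rfl⟩ := subst0Code_iff.1 hz
    cases AFml.code_injective hψ
    exact ⟨_, rfl, .eqSubst φ t s⟩

theorem IsTheoremCode.deductionRule {a b : ℕ} (ha : IsTheoremCode Tax a)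
    (hb : IsTheoremCode Tax b) (h : DeductionRule a b x) : IsTheoremCode Tax x := by
  obtain ⟨φ, rfl, hφ⟩ := ha
  obtain ⟨ψ, rfl, hψ⟩ := hb
  rcases h with h | rfl
  · cases φ with
    | imp φ χ =>
      simp only [AFml.code, Nat.pair_eq_pair] at h
      obtain ⟨_, h, rfl⟩ := h
      cases AFml.code_injective h
      exact ⟨χ, rfl, .mp hφ hψ⟩
    | _ => simp [AFml.code, Nat.pair_eq_pair] at h
  · exact ⟨_, rfl, .gen hφ⟩

theorem Proves.closure_code {p : ℕ → Bool} (hp : ∀ φ : AFml, φ ∈ Tax ↔ p φ.code = true)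
    {φ : AFml} (h : Proves Tax φ) : InductiveClosure (IsAxiomCode p) DeductionRule φ.code := by
  have logical {x : ℕ} (h : IsLogicalAxiomCode x) :
      InductiveClosure (IsAxiomCode p) DeductionRule x := .base (.inr (.inr h))
  induction h with
  | ax h => exact .base (.inl ⟨isFmlCode_iff.2 ⟨_, rfl⟩, (hp _).1 h⟩)
  | taut h => exact .base (.inr (.inl (isTautCode_iff.2 ⟨_, rfl, h⟩)))
  | mp _ _ ih₁ ih₂ => exact .step ih₁ ih₂ (.inl rfl)
  | gen _ ih => exact .step ih ih (.inr rfl)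
  | allE φ t => exact logical (.inl ⟨_, _, _, subst0Code_iff.2 ⟨t, φ, rfl, rfl, rfl⟩, rfl⟩)
  | exI φ t => exact logical (.inr (.inl ⟨_, _, _, subst0Code_iff.2 ⟨t, φ, rfl, rfl, rfl⟩, rfl⟩))
  | allImp φ ψ =>
    exact logical (.inr (.inr (.inl
      ⟨_, _, isFmlCode_iff.2 ⟨φ, rfl⟩, isFmlCode_iff.2 ⟨ψ, rfl⟩, rfl⟩)))
  | vacAll φ =>
    exact logical (.inr (.inr (.inr (.inl ⟨_, _, liftCode_iff.2 ⟨φ, rfl, rfl⟩, rfl⟩))))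
  | exDef φ =>
    exact logical (.inr (.inr (.inr (.inr (.inl ⟨_, isFmlCode_iff.2 ⟨φ, rfl⟩, rfl⟩)))))
  | eqRefl t =>
    exact logical (.inr (.inr (.inr (.inr (.inr (.inl ⟨_, isTermCode_iff.2 ⟨t, rfl⟩, rfl⟩))))))
  | eqSubst φ t s =>
    exact logical (.inr (.inr (.inr (.inr (.inr (.inr ⟨_, _, _, _, _,
      subst0Code_iff.2 ⟨t, φ, rfl, rfl, rfl⟩, subst0Code_iff.2 ⟨s, φ, rfl, rfl, rfl⟩, rfl⟩))))))

theorem closure_axiomCode_iff_isTheoremCode {p : ℕ → Bool}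
    (hp : ∀ φ : AFml, φ ∈ Tax ↔ p φ.code = true) :
    InductiveClosure (IsAxiomCode p) DeductionRule x ↔ IsTheoremCode Tax x := by
  constructor
  · intro h
    induction h with
    | base h =>
      rcases h with ⟨hx, hpx⟩ | h | h
      · obtain ⟨φ, rfl⟩ := isFmlCode_iff.1 hx
        exact ⟨φ, rfl, .ax ((hp φ).2 hpx)⟩
      · obtain ⟨φ, rfl, hφ⟩ := isTautCode_iff.1 h
        exact ⟨φ, rfl, .taut hφ⟩
      · exact h.isTheoremCode
    | step _ _ h ih₁ ih₂ => exact ih₁.deductionRule ih₂ h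
  · rintro ⟨φ, rfl, h⟩
    exact h.closure_code hp

theorem PrAxiomatized.sigma1Definable_isTheoremCode (hpr : PrAxiomatized Tax) :
    Sigma1Definable fun ρ => IsTheoremCode Tax (ρ 0) := by
  obtain ⟨p, hp, mem_iff⟩ := hpr
  have toNat : Primrec fun x => (p x).toNat :=
    (Primrec.cond hp (Primrec.const 1) (Primrec.const 0)).of_eq fun x => by cases p x <;> rfl
  have : Sigma1Fun fun ρ => (p (ρ 0)).toNat := .of_primrec (Primrec.nat_iff.1 toNat) (.proj 0)
  have axioms : Sigma1Definable fun ρ => p (ρ 0) = true :=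
    .of_iff (S := fun ρ => (p (ρ 0)).toNat = 1) inferInstance fun ρ => Bool.toNat_eq_one
  refine .of_iff (.inductiveClosure (A := fun _ => IsAxiomCode p) (R := fun _ => DeductionRule)
    (.proj 0) ?_ ?_) fun ρ => closure_axiomCode_iff_isTheoremCode mem_iff
  · unfold IsAxiomCode; infer_instance
  · unfold DeductionRule; infer_instance

end IsTheoremCode

/-! ### Numbers accepted by stages -/

/-- A decidable enumeration by stages of a `Σ₁` set: `found x w` says that `x` has been enumerated
by stage `w`. -/
structure Enumeration where
  found : ℕ → ℕ → Prop
  delta1 : Delta1Definable fun ρ => found (ρ 0) (ρ 1)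
  mono : ∀ {x w w'}, w ≤ w' → found x w → found x w'
  le_stage : ∀ {x w}, found x w → x ≤ w

theorem exists_enumeration {R : ℕ → Prop} (h : Sigma1Definable fun ρ => R (ρ 0)) :
    ∃ E : Enumeration, ∀ x, (∃ w, E.found x w) ↔ R x := by
  obtain ⟨D, hD, mono, hR⟩ := h
  let found (x w : ℕ) : Prop := x ≤ w ∧ D (consEnv w fun _ => x)
  have delta0 : Delta0Definable fun ρ => found (ρ 0) (ρ 1) :=
    (Delta0Definable.le (.var 0) (.var 1)).and <|
      (hD.rename (consEnv 1 fun _ => 0)).of_iff fun ρ => by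
        rw [iff_iff_eq]; congr 1; funext n; cases n <;> rfl
  refine ⟨⟨found, ⟨.of_delta0 delta0, .of_delta0 delta0.not⟩,
    fun hw h => ⟨h.1.trans hw, mono _ _ _ hw h.2⟩, And.left⟩, fun x => ?_⟩
  refine Iff.trans ⟨fun ⟨w, _, hw⟩ => ⟨w, hw⟩, fun ⟨w, hw⟩ => ?_⟩ (hR fun _ => x).symm
  exact ⟨max x w, le_max_left _ _, mono _ _ _ (le_max_right _ _) hw⟩

/-- The code of the numeral of `n`. -/
def numeralCode (n : ℕ) : ℕ := (numeral n).code

theorem numeralCode_succ (n : ℕ) : numeralCode (n + 1) = Nat.pair 2 (numeralCode n) := rfl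

instance Sigma1Fun.numeralCode {F : (ℕ → ℕ) → ℕ} [hF : Sigma1Fun F] :
    Sigma1Fun fun ρ => numeralCode (F ρ) := by
  have primrec := Primrec.nat_rec₁ (f := fun _ c => Nat.pair 2 c) (Nat.pair 1 0)
    (Primrec₂.natPair.comp (Primrec.const 2) Primrec.snd).to₂
  refine .of_primrec (Primrec.nat_iff.1 (primrec.of_eq fun n => ?_)) hF
  induction n with
  | zero => rfl
  | succ n ih => rw [numeralCode_succ, ← ih]

theorem le_numeralCode (n : ℕ) : n ≤ numeralCode n := by
  induction n with
  | zero => exact Nat.zero_le _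
  | succ n ih =>
    have := Nat.add_le_pair 2 (numeralCode n)
    rw [numeralCode_succ]
    omega

theorem numeralCode_injective : Function.Injective numeralCode :=
  ATerm.code_injective.comp numeral_injective

/-- The code of `∃ v, v = c̄ ∧ ∃ w, w = q̄ ∧ Θ(w, v)`, where `Θ` is the formula with code `q`. -/
def boxCode (q c : ℕ) : ℕ :=
  Nat.pair 7 (Nat.pair 3 (Nat.pair (Nat.pair 0 (Nat.pair (Nat.pair 0 0) (numeralCode c)))
    (Nat.pair 7 (Nat.pair 3
      (Nat.pair (Nat.pair 0 (Nat.pair (Nat.pair 0 0) (numeralCode q))) q)))))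

instance Sigma1Fun.boxCode {F G : (ℕ → ℕ) → ℕ} [Sigma1Fun F] [Sigma1Fun G] :
    Sigma1Fun fun ρ => boxCode (F ρ) (G ρ) := by
  unfold PLN.boxCode; infer_instance

theorem boxCode_injective (q : ℕ) : Function.Injective (boxCode q) := fun _ _ h =>
  numeralCode_injective (by simpa only [boxCode, Nat.pair_eq_pair, true_and, and_true] using h)

theorem lt_boxCode (q c : ℕ) : c < boxCode q c := by
  let atom (n : ℕ) : ℕ := Nat.pair 0 (Nat.pair (Nat.pair 0 0) (numeralCode n))
  let tail : ℕ := Nat.pair 7 (Nat.pair 3 (Nat.pair (atom q) q))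
  calc c ≤ numeralCode c := le_numeralCode c
    _ ≤ atom c := (Nat.right_le_pair _ _).trans (Nat.right_le_pair _ _)
    _ ≤ Nat.pair 3 (Nat.pair (atom c) tail) :=
      (Nat.left_le_pair _ tail).trans (Nat.right_le_pair _ _)
    _ < 7 + Nat.pair 3 (Nat.pair (atom c) tail) := by omega
    _ ≤ boxCode q c := Nat.add_le_pair _ _

/-- The code of the `k`-fold box of the sentence with code `c`. -/
def boxCodeIter (q : ℕ) : ℕ → ℕ → ℕ
  | 0, c => c
  | k + 1, c => boxCode q (boxCodeIter q k c)

instance Sigma1Fun.boxCodeIter (k : ℕ) {F G : (ℕ → ℕ) → ℕ} [Sigma1Fun F] [hG : Sigma1Fun G] :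
    Sigma1Fun fun ρ => boxCodeIter (F ρ) k (G ρ) := by
  induction k with
  | zero => exact hG
  | succ k ih => unfold PLN.boxCodeIter; infer_instance

theorem boxCodeIter_strictMono (q c : ℕ) : StrictMono fun k => boxCodeIter q k c :=
  strictMono_nat_of_lt_succ fun _ => lt_boxCode _ _

theorem le_boxCodeIter (q k c : ℕ) : c ≤ boxCodeIter q k c :=
  (boxCodeIter_strictMono q c).monotone (Nat.zero_le k)

open Classical in
/-- The value of the atom with code `x` when the sentence with code `boxCode q c` is assigned the
`c`-th digit of `b`. The sentence `0 = 1` is false and other atoms are undefined (value `2`). -/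
noncomputable def boxValue (q b x : ℕ) : ℕ :=
  if x = botFml.code then 0 else if h : ∃ c, x = boxCode q c then bit b h.choose else 2

theorem boxCode_ne_code_botFml (q c : ℕ) : boxCode q c ≠ botFml.code := by
  simp [boxCode, botFml, AFml.code]

theorem boxValue_boxCode (q b c : ℕ) : boxValue q b (boxCode q c) = bit b c := by
  have h : ∃ c', boxCode q c = boxCode q c' := ⟨c, rfl⟩
  rw [boxValue, if_neg (boxCode_ne_code_botFml q c), dif_pos h,
    ← boxCode_injective q h.choose_spec]

theorem boxValue_code_botFml (q b : ℕ) : boxValue q b botFml.code = 0 := if_pos rfl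

/-- The graph of `boxValue`. -/
def BoxValueGraph (q b x y : ℕ) : Prop :=
  (x = botFml.code ∧ y = 0) ∨ (∃ c, x = boxCode q c ∧ y = bit b c) ∨
    (¬ x = botFml.code ∧ (¬ ∃ c, c ≤ x ∧ x = boxCode q c) ∧ y = 2)

theorem boxValueGraph_iff {q b x y : ℕ} : BoxValueGraph q b x y ↔ y = boxValue q b x := by
  have bounded : (∃ c, c ≤ x ∧ x = boxCode q c) ↔ ∃ c, x = boxCode q c :=
    exists_congr fun c => and_iff_right_of_imp fun h => h ▸ (lt_boxCode q c).le
  rw [BoxValueGraph, bounded]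
  by_cases hbot : x = botFml.code
  · subst hbot
    simp [boxValue_code_botFml, (boxCode_ne_code_botFml q _).symm]
  by_cases hbox : ∃ c, x = boxCode q c
  · obtain ⟨c, rfl⟩ := hbox
    simp [hbot, boxValue_boxCode, (boxCode_injective q).eq_iff]
  · rw [boxValue, if_neg hbot, dif_neg hbox]
    simp only [hbot, hbox, not_false_eq_true, false_and, false_or, true_and]
    exact or_iff_right fun ⟨c, h, _⟩ => hbox ⟨c, h⟩

theorem sigma1Fun_boxValue : Sigma1Fun fun ρ => boxValue (ρ 0) (ρ 1) (ρ 2) := by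
  refine .of_graph (S := fun ρ y => BoxValueGraph (ρ 0) (ρ 1) (ρ 2) y) ?_
    fun _ _ => boxValueGraph_iff
  unfold BoxValueGraph; infer_instance

/-- The value of the sentence with code `x` when its atoms are assigned the values `boxValue`. -/
noncomputable def boxEval (q b x : ℕ) : ℕ := evalCode (boxValue q b) x

theorem boxEval_boxCode (q b c : ℕ) : boxEval q b (boxCode q c) = bit b c := by
  rw [boxEval, evalCode_atom (by simp [boxCode]), boxValue_boxCode]

theorem boxEval_code_botFml (q b : ℕ) : boxEval q b botFml.code = 0 := by
  rw [boxEval, evalCode_atom (by simp [botFml, AFml.code]), boxValue_code_botFml]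

theorem boxEval_neg (q b x : ℕ) :
    boxEval q b (Nat.pair 2 x) = truthTable 5 (boxEval q b x) 0 := evalCode_neg x

theorem boxEval_binary (q b : ℕ) {c : ℕ} (h₁ : 3 ≤ c) (h₂ : c ≤ 5) (x y : ℕ) :
    boxEval q b (Nat.pair c (Nat.pair x y)) = truthTable c (boxEval q b x) (boxEval q b y) :=
  evalCode_binary h₁ h₂ x y

instance Sigma1Fun.boxEval {F G H : (ℕ → ℕ) → ℕ} [hF : Sigma1Fun F] [hG : Sigma1Fun G]
    [hH : Sigma1Fun H] : Sigma1Fun fun ρ => boxEval (F ρ) (G ρ) (H ρ) := by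
  have h : Sigma1Fun fun ρ => PLN.boxEval (ρ 0) (ρ 1) (ρ 2) :=
    .evalCode (α := fun ρ => boxValue (ρ 0) (ρ 1))
      ((sigma1Fun_boxValue).rename fun n => if n = 0 then 1 else if n = 1 then 2 else 0)
      inferInstance
  exact ⟨.comp₄ (R := fun y a b c => y = PLN.boxEval a b c) h.out (.proj 0)
    (hF.rename (· + 1)) (hG.rename (· + 1)) (hH.rename (· + 1))⟩

theorem Delta1Definable.comp₃ {R : ℕ → ℕ → ℕ → Prop} {F G H : (ℕ → ℕ) → ℕ}
    (h : Delta1Definable fun ρ => R (ρ 0) (ρ 1) (ρ 2)) (hF : Sigma1Fun F) (hG : Sigma1Fun G)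
    (hH : Sigma1Fun H) : Delta1Definable fun ρ => R (F ρ) (G ρ) (H ρ) :=
  ⟨.comp₃ h.pos hF hG hH, .comp₃ (R := fun a b c => ¬ R a b c) h.neg hF hG hH⟩

/-- A number that codes no formula; it is never provable in the sense of the constructed predicate
and plays the role of a contradiction. -/
def badCode : ℕ := Nat.pair 8 0

namespace Enumeration

variable (E : Enumeration) (M N q s : ℕ)

instance delta1_found {F G : (ℕ → ℕ) → ℕ} [hF : Sigma1Fun F] [hG : Sigma1Fun G] :
    Delta1Definable fun ρ => E.found (F ρ) (G ρ) :=
  .comp₃ (R := fun a b _ => E.found a b) E.delta1 hF hG hF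

/-- At stage `s`, the set coded by `b` refutes some enumerated sentence when it is used to
interpret the box, although it contains everything enumerated before stage `s` and is compatible
with the axiom `□ᴺA → □ᴹA` (for boxed `A`, whence `M` and `N` instead of `m` and `n`), with the
rule `Ros□`, and with the underivability of `badCode`. -/
def RefutesAt (b : ℕ) : Prop :=
  (∃ x, x ≤ s ∧ E.found x s ∧ boxEval q b x = 0) ∧
  (∀ x, x ≤ s → ∀ w, w < s → E.found x w → bit b x = 1) ∧
  (∀ c, c ≤ s → bit b (boxCodeIter q N c) = 1 → bit b (boxCodeIter q M c) = 1) ∧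
  (∀ c, c ≤ s → ∀ w, w < s → bit b (boxCode q c) = 1 → ¬ E.found (Nat.pair 2 (boxCode q c)) w) ∧
  ¬ bit b badCode = 1

/-- Some set refutes an enumerated sentence at stage `s`. From the first such stage on, the
construction follows the refuting set and not the enumeration. -/
def SwitchesAt : Prop := ∃ b, b < 2 ^ (s + 1) ∧ E.RefutesAt M N q s b

/-- The numbers enumerated before any switch. -/
def FoundBeforeSwitch (x : ℕ) : Prop := ∃ w, E.found x w ∧ ∀ s, s ≤ w → ¬ E.SwitchesAt M N q s

/-- The numbers enumerated before any switch, and the members of the least refuting set at the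
first switch. -/
def Accepted (x : ℕ) : Prop :=
  E.FoundBeforeSwitch M N q x ∨ ∃ s b, b < 2 ^ (s + 1) ∧ E.RefutesAt M N q s b ∧
    (∀ s', s' < s → ¬ E.SwitchesAt M N q s') ∧ (∀ b', b' < b → ¬ E.RefutesAt M N q s b') ∧
    bit b x = 1

/-- The pairs `(y, z)` such that the implication between the boxes of `y` and `z` has to be
provable: the axiom `□ᴺA → □ᴹA` (under a box), and the rule `Ros□`, by which the box of `y` has to
be refutable when the negation of `y` is enumerated. -/
def BoxImplication (y z : ℕ) : Prop :=
  (∃ c, y = boxCodeIter q N c ∧ z = boxCodeIter q M c) ∨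
    ∃ c, y = boxCode q c ∧ E.FoundBeforeSwitch M N q (Nat.pair 2 y) ∧ z = badCode

instance delta1_refutesAt {F G H : (ℕ → ℕ) → ℕ} [hF : Sigma1Fun F] [hG : Sigma1Fun G]
    [hH : Sigma1Fun H] : Delta1Definable fun ρ => E.RefutesAt M N (F ρ) (G ρ) (H ρ) := by
  refine .comp₃ ?_ hF hG hH
  unfold RefutesAt
  exact @Delta1Definable.and _ _ inferInstance (@Delta1Definable.and _ _ inferInstance
    (@Delta1Definable.and _ _ inferInstance inferInstance))

instance delta1_switchesAt {F G : (ℕ → ℕ) → ℕ} [hF : Sigma1Fun F] [hG : Sigma1Fun G] :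
    Delta1Definable fun ρ => E.SwitchesAt M N (F ρ) (G ρ) := by
  refine .comp₃ (R := fun a b _ => E.SwitchesAt M N a b) ?_ hF hG hF
  unfold SwitchesAt; infer_instance

instance sigma1_foundBeforeSwitch {F G : (ℕ → ℕ) → ℕ} [hF : Sigma1Fun F] [hG : Sigma1Fun G] :
    Sigma1Definable fun ρ => E.FoundBeforeSwitch M N (F ρ) (G ρ) := by
  refine .comp₂ ?_ hF hG
  unfold FoundBeforeSwitch; infer_instance

theorem sigma1_accepted : Sigma1Definable fun ρ => E.Accepted M N (ρ 0) (ρ 1) := by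
  unfold Accepted; infer_instance

theorem sigma1_boxImplication :
    Sigma1Definable fun ρ => E.BoxImplication M N (ρ 0) (ρ 1) (ρ 2) := by
  unfold BoxImplication; infer_instance

end Enumeration

/-! ### A box defined by self-application -/

/-- The substitution of the terms of a list for the first variables, and of `0` for the others. -/
def listSubst (ts : List ATerm) (n : ℕ) : ATerm := ts.getD n .zero

/-- The environment whose first values are those of a list, the others being `0`. -/
def listEnv (l : List ℕ) (n : ℕ) : ℕ := l.getD n 0

theorem consEnv_listEnv (a : ℕ) (l : List ℕ) : consEnv a (listEnv l) = listEnv (a :: l) := by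
  funext n; cases n <;> rfl

theorem consSubst_listSubst (t : ATerm) (ts : List ATerm) :
    consSubst t (listSubst ts) = listSubst (t :: ts) := by
  funext n; cases n <;> rfl

theorem liftSub_listSubst (ts : List ATerm) :
    liftSub (listSubst ts) = listSubst (.var 0 :: ts.map (·.lift 0)) := by
  funext n
  cases n with
  | zero => rfl
  | succ n => exact (ts.getD_map .zero (ATerm.lift 0)).symm

namespace AFml

/-- The formula `φ(t₀, …, tₖ)`. -/
def app (φ : AFml) (ts : List ATerm) : AFml := φ.substAll (listSubst ts)

@[simp] theorem app_substAll (φ : AFml) (ts : List ATerm) (σ : ℕ → ATerm) :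
    (φ.app ts).substAll σ = φ.app (ts.map (·.substAll σ)) := by
  rw [app, substAll_substAll, app]
  congr 1
  funext n
  exact (ts.getD_map .zero (ATerm.substAll σ)).symm

theorem app_app (φ : AFml) (ts ss : List ATerm) :
    (φ.app ts).app ss = φ.app (ts.map (·.substAll (listSubst ss))) :=
  φ.app_substAll ts _

theorem app_imp (φ ψ : AFml) (ts : List ATerm) :
    (AFml.imp φ ψ).app ts = .imp (φ.app ts) (ψ.app ts) :=
  rfl

theorem app_and (φ ψ : AFml) (ts : List ATerm) :
    (AFml.and φ ψ).app ts = .and (φ.app ts) (ψ.app ts) :=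
  rfl

@[simp] theorem sat_app (φ : AFml) (ts : List ATerm) (ρ : ℕ → ℕ) :
    (φ.app ts).Sat ρ ↔ φ.Sat (listEnv (ts.map (·.val ρ))) := by
  rw [app, sat_substAll, iff_iff_eq]
  congr 1
  funext n
  exact (ts.getD_map _ (ATerm.val ρ)).symm

theorem app_map_numeral (φ : AFml) (l : List ℕ) :
    φ.app (l.map numeral) = φ.substAll (numeralEnv (listEnv l)) := by
  rw [app]
  congr 1
  funext n
  exact l.getD_map 0 numeral

theorem freeLt_app (φ : AFml) {ts : List ATerm} {c : ℕ} (h : ∀ t ∈ ts, t.FreeLt c) :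
    (φ.app ts).FreeLt c := by
  refine FreeLt.substAll (fun n => ?_) φ
  rcases lt_or_ge n ts.length with hn | hn
  · rw [listSubst, List.getD_eq_getElem _ _ hn]
    exact h _ (List.getElem_mem hn)
  · rw [listSubst, List.getD_eq_default _ _ hn]
    trivial

/-- Universal quantification over the numbers `≤ t`. -/
def ballLe (t : ATerm) (φ : AFml) : AFml := .all (.imp (.le (.var 0) (t.lift 0)) φ)

/-- Existential quantification over the numbers `≤ t`. -/
def bexLe (t : ATerm) (φ : AFml) : AFml := .ex (.and (.le (.var 0) (t.lift 0)) φ)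

theorem ballLe_substAll (t : ATerm) (φ : AFml) (σ : ℕ → ATerm) :
    (ballLe t φ).substAll σ = ballLe (t.substAll σ) (φ.substAll (liftSub σ)) := by
  simp only [ballLe, substAll, ATerm.lift_substAll_liftSub, ATerm.substAll, liftSub]

theorem bexLe_substAll (t : ATerm) (φ : AFml) (σ : ℕ → ATerm) :
    (bexLe t φ).substAll σ = bexLe (t.substAll σ) (φ.substAll (liftSub σ)) := by
  simp only [bexLe, substAll, ATerm.lift_substAll_liftSub, ATerm.substAll, liftSub]

theorem app_bexLe (t : ATerm) (φ : AFml) (ts : List ATerm) :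
    (bexLe t φ).app ts =
      bexLe (t.substAll (listSubst ts)) (φ.app (.var 0 :: ts.map (·.lift 0))) := by
  rw [app, bexLe_substAll, liftSub_listSubst, app]

theorem sat_ballLe {t : ATerm} {φ : AFml} {ρ : ℕ → ℕ} :
    (ballLe t φ).Sat ρ ↔ ∀ a ≤ t.val ρ, φ.Sat (consEnv a ρ) := by
  simp only [ballLe, Sat, ATerm.val_lift, ATerm.val, consEnv]

theorem sat_bexLe {t : ATerm} {φ : AFml} {ρ : ℕ → ℕ} :
    (bexLe t φ).Sat ρ ↔ ∃ a ≤ t.val ρ, φ.Sat (consEnv a ρ) := by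
  simp only [bexLe, Sat, ATerm.val_lift, ATerm.val, consEnv]

end AFml

theorem IsSigma1.proves_app {φ : AFml} (h : IsSigma1 φ) (l : List ℕ)
    (hs : φ.Sat (listEnv l)) : Proves PA (φ.app (l.map numeral)) :=
  φ.app_map_numeral l ▸ h.proves_of_sat _ hs

/-- The `Δ₀` formula `φ(w, x₀, x₁, …)` defines the `Σ₁` relation `S(x₀, x₁, …)` by quantification
over the witness `w`, and larger numbers than a witness are witnesses too. -/
structure IsSigma1Kernel (φ : AFml) (S : (ℕ → ℕ) → Prop) : Prop where
  isDelta0 : IsDelta0 φ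
  mono : ∀ l {w w'}, w ≤ w' → φ.Sat (listEnv (w :: l)) → φ.Sat (listEnv (w' :: l))
  iff_exists : ∀ l, S (listEnv l) ↔ ∃ w, φ.Sat (listEnv (w :: l))

theorem Sigma1Definable.exists_kernel {S : (ℕ → ℕ) → Prop} (h : Sigma1Definable S) :
    ∃ φ, IsSigma1Kernel φ S := by
  obtain ⟨D, ⟨φ, hφ, sat⟩, mono, hS⟩ := h
  refine ⟨φ, hφ, fun l w w' hw => ?_, fun l => (hS _).trans (exists_congr fun w => ?_)⟩
  · simpa only [sat, consEnv_listEnv] using mono (listEnv l) w w' hw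
  · rw [consEnv_listEnv, sat]

namespace Proves

variable {Γ : Set AFml}

theorem imp_lift_ex (φ : AFml) : Proves Γ (.imp φ ((AFml.ex φ).lift 0)) := by
  have h := Proves.exI (Γ := Γ) (φ.lift 1) (.var 0)
  rwa [AFml.lift_one_subst0_var] at h

theorem ex_imp_ex {χ φ ψ : AFml} (h : Proves Γ (.imp (χ.lift 0) (.imp φ ψ))) :
    Proves Γ (.imp χ (.imp (.ex φ) (.ex ψ))) := by
  have flipped : Proves Γ (.imp (.ex φ) (.imp χ (.ex ψ))) := .ex_imp (.taut₂ h (imp_lift_ex ψ))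
  exact .taut₁ flipped

theorem ex_eq_and_iff (t : ATerm) (φ : AFml) :
    Proves Γ (iffF (.ex (.and (.eq (.var 0) (t.lift 0)) φ)) (φ.subst0 t)) := by
  have mp : Proves Γ (.imp (.ex (.and (.eq (.var 0) (t.lift 0)) φ)) (φ.subst0 t)) := by
    have h := Proves.eqSubst (Γ := Γ) (φ.lift 1) (.var 0) (t.lift 0)
    rw [AFml.lift_one_subst0_var, AFml.lift_one_subst0_lift] at h
    exact .ex_imp (.taut₁ h)
  have mpr := Proves.exI (Γ := Γ) (.and (.eq (.var 0) (t.lift 0)) φ) t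
  simp only [AFml.subst0, AFml.substAll, ATerm.substAll, ATerm.lift_substAll_subst0Env,
    subst0Env] at mpr
  exact .taut₃ mp mpr (.eqRefl t)

theorem ballLe_imp (t s : ATerm) (φ : AFml) (σ : ℕ → ATerm) :
    Proves Γ (.imp ((AFml.ballLe t φ).substAll σ)
      (.imp (.le s (t.substAll σ)) (φ.substAll (consSubst s σ)))) := by
  have h := Proves.allE (Γ := Γ)
    (.imp (.le (.var 0) ((t.substAll σ).lift 0)) (φ.substAll (liftSub σ))) s
  rw [AFml.ballLe_substAll, AFml.ballLe]
  simpa only [AFml.subst0, AFml.substAll, ATerm.substAll, ATerm.lift_substAll_subst0Env,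
    subst0Env, ← AFml.substAll_liftSub_subst0] using h

end Proves

/-- The finitely many witnesses below `N` are treated separately: they are refuted if they are all
false, and irrelevant if the conclusion is provable. -/
theorem pa_ex_imp {β χ : AFml} (hβ : IsDelta0 β) (hf : β.FreeLt 1) (N : ℕ)
    (large : Proves PA (.imp (.le (numeral N) (.var 0)) (.imp β (χ.lift 0))))
    (small : (∃ i, β.Sat fun _ => i) → Proves PA χ) : Proves PA (.imp (.ex β) χ) := by
  by_cases hex : ∃ i, β.Sat fun _ => i
  · exact .taut₁ (small hex)
  · have refuted : Proves PA (.imp (.le (.var 0) (numeral N)) (.neg β)) := by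
      refine pa_le_numeral_imp fun i _ => ?_
      have h := (hβ.paDecides fun _ => i).2 fun hi => hex ⟨i, hi⟩
      rwa [← AFml.substAll_congr (σ := subst0Env (numeral i)) (c := 1) (fun n hn => ?_) hf] at h
      obtain rfl : n = 0 := by omega
      rfl
    exact .ex_imp (.taut₃ large refuted (pa_le_total_numeral N))

/-- The formula `∃ v, v = t ∧ ∃ w, w = ⌜Θ⌝ ∧ Θ(w, v)`: its truth is that of `Θ(⌜Θ⌝, t)`, and its
code is an explicit function of the code of `Θ`, so that no diagonal lemma is needed. -/
def boxFml (Θ : AFml) (t : ATerm) : AFml :=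
  .ex (.and (.eq (.var 0) (t.lift 0)) (.ex (.and (.eq (.var 0) (gnum Θ)) Θ)))

section boxFml

variable {Θ : AFml}

theorem code_boxFml (c : ℕ) : (boxFml Θ (numeral c)).code = boxCode Θ.code c := by
  rw [boxFml, numeral_lift]; rfl

theorem boxFml_substAll (h : Θ.FreeLt 2) (t : ATerm) (σ : ℕ → ATerm) :
    (boxFml Θ t).substAll σ = boxFml Θ (t.substAll σ) := by
  have self : Θ.substAll (liftSub (liftSub σ)) = Θ :=
    AFml.substAll_eq_self (fun n hn => by interval_cases n <;> rfl) h
  simp only [boxFml, AFml.substAll, self, ATerm.substAll, ATerm.lift_substAll_liftSub, gnum,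
    numeral_substAll, liftSub]

theorem freeLt_boxFml (h : Θ.FreeLt 2) {t : ATerm} {c : ℕ} (ht : t.FreeLt c) :
    (boxFml Θ t).FreeLt c :=
  ⟨⟨Nat.succ_pos c, ht.lift⟩, ⟨Nat.succ_pos _, numeral_freeLt _ _⟩, h.mono (by omega)⟩

theorem sigma1_boxFml (h : IsSigma1 Θ) (t : ATerm) : IsSigma1 (boxFml Θ t) :=
  .ex (.and (.delta0 (.eq _ _)) (.ex (.and (.delta0 (.eq _ _)) h)))

theorem trueN_boxFml (c : ℕ) :
    TrueN (boxFml Θ (numeral c)) ↔ Θ.Sat (listEnv [Θ.code, c]) := by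
  have nil : (fun _ => 0) = listEnv [] := rfl
  simp only [TrueN, boxFml, AFml.Sat, ATerm.val, numeral_lift, numeral_val, gnum, consEnv,
    exists_eq_left, nil, consEnv_listEnv]

theorem pa_boxFml_iff (h : Θ.FreeLt 2) (t : ATerm) :
    Proves PA (iffF (boxFml Θ t) (Θ.app [gnum Θ, t])) := by
  have outer := Proves.ex_eq_and_iff (Γ := PA) t (.ex (.and (.eq (.var 0) (gnum Θ)) Θ))
  have inner := Proves.ex_eq_and_iff (Γ := PA) (gnum Θ) (Θ.substAll (liftSub (subst0Env t)))
  rw [AFml.substAll_liftSub_subst0] at inner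
  have app : Θ.app [gnum Θ, t] = Θ.substAll (consSubst (gnum Θ) (subst0Env t)) :=
    AFml.substAll_congr (fun n hn => by interval_cases n <;> rfl) h
  rw [app, boxFml]
  simp only [gnum, AFml.subst0, AFml.substAll, ATerm.substAll, liftSub, numeral_substAll,
    numeral_lift] at outer inner ⊢
  exact .taut₂ outer inner

end boxFml

section closureFml

variable (π δ γ : AFml) (a : ℕ)

/-- With free variables `y, u, k`: the formula `π(k, y, u)` restricted to the numbers `y ≤ k`
different from `a`. -/
def memFml : AFml :=
  .and (.and (.le (.var 0) (.var 2)) (π.app [.var 2, .var 0, .var 1]))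
    (.neg (.eq (.var 0) (numeral a)))

/-- With free variables `u, k, q`: if `y, z, w ≤ k` and `γ(w, q, y, z)`, and `y` belongs to `u`,
then so does `z`. -/
def closedFml : AFml :=
  .ballLe (.var 1) <| .ballLe (.var 2) <| .ballLe (.var 3) <|
    .imp (γ.app [.var 0, .var 5, .var 2, .var 1]) <|
      .imp ((memFml π a).app [.var 2, .var 3, .var 4]) ((memFml π a).app [.var 1, .var 3, .var 4])

/-- With free variables `k, q, x`: some `u ≤ k` contains `x`, is closed under `γ`, and has only
elements `y` such that `δ(k, q, y)`. -/
def boundedClosureFml : AFml :=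
  .bexLe (.var 0) <| .and ((memFml π a).app [.var 3, .var 0, .var 1]) <|
    .and ((AFml.ballLe (.var 1) <|
      .imp ((memFml π a).app [.var 0, .var 1, .var 2]) (δ.app [.var 2, .var 3, .var 0])).app
        [.var 0, .var 1, .var 2])
      ((closedFml π γ a).app [.var 0, .var 1, .var 2])

/-- With free variables `q, x`: some finite set contains `x`, is closed under `γ`, and has only
elements satisfying `δ`. -/
def closureFml : AFml := .ex (boundedClosureFml π δ γ a)

variable {π δ γ a}

theorem app_closureFml_numeral (q c : ℕ) :
    (closureFml π δ γ a).app [numeral q, numeral c] =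
      .ex ((boundedClosureFml π δ γ a).app [.var 0, numeral q, numeral c]) := by
  rw [closureFml, AFml.app, AFml.substAll, liftSub_listSubst]
  simp only [List.map, numeral_lift, AFml.app]

theorem isDelta0_memFml (hπ : IsDelta0 π) : IsDelta0 (memFml π a) :=
  .and (.and (.le _ _) (hπ.substAll _)) (.neg (.eq _ _))

theorem isDelta0_boundedClosureFml (hπ : IsDelta0 π) (hδ : IsDelta0 δ) (hγ : IsDelta0 γ) :
    IsDelta0 (boundedClosureFml π δ γ a) := by
  have mem (ts : List ATerm) : IsDelta0 ((memFml π a).app ts) :=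
    (isDelta0_memFml hπ).substAll _
  have closed : IsDelta0 (closedFml π γ a) :=
    .ball _ (.ball _ (.ball _ (.imp (hγ.substAll _) (.imp (mem _) (mem _)))))
  exact .bex _ (.and (mem _) (.and ((IsDelta0.ball _ (.imp (mem _) (hδ.substAll _))).substAll _)
    (closed.substAll _)))

theorem freeLt_closureFml : (closureFml π δ γ a).FreeLt 2 := by
  refine ⟨⟨Nat.succ_pos _, ATerm.FreeLt.lift (t := .var 0) (Nat.succ_pos 2)⟩, ?_, ?_, ?_⟩
  all_goals exact AFml.freeLt_app _ (by simp [ATerm.FreeLt])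

theorem sat_memFml {y u k : ℕ} :
    (memFml π a).Sat (listEnv [y, u, k]) ↔ (y ≤ k ∧ π.Sat (listEnv [k, y, u])) ∧ y ≠ a := by
  simp [memFml, AFml.Sat, ATerm.val, listEnv]

theorem sat_boundedClosureFml {k q x : ℕ} :
    (boundedClosureFml π δ γ a).Sat (listEnv [k, q, x]) ↔
      ∃ u ≤ k, (memFml π a).Sat (listEnv [x, u, k]) ∧
        (∀ y ≤ k, (memFml π a).Sat (listEnv [y, u, k]) → δ.Sat (listEnv [k, q, y])) ∧
        ∀ y ≤ k, ∀ z ≤ k, ∀ w ≤ k, γ.Sat (listEnv [w, q, y, z]) →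
          (memFml π a).Sat (listEnv [y, u, k]) → (memFml π a).Sat (listEnv [z, u, k]) := by
  simp only [boundedClosureFml, closedFml, AFml.Sat, AFml.sat_app, AFml.sat_ballLe,
    AFml.sat_bexLe, consEnv_listEnv]
  rfl

theorem Proves.app_ballLe_imp {Γ : Set AFml} (t s : ATerm) (φ : AFml) (ts : List ATerm) :
    Proves Γ (.imp ((AFml.ballLe t φ).app ts)
      (.imp (.le s (t.substAll (listSubst ts))) (φ.app (s :: ts)))) := by
  rw [AFml.app, AFml.app, ← consSubst_listSubst]
  exact .ballLe_imp t s φ (listSubst ts)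

theorem Proves.closedFml_imp {Γ : Set AFml} (u k q y z w : ATerm) :
    Proves Γ (.imp ((closedFml π γ a).app [u, k, q]) (.imp (.le y k) (.imp (.le z k)
      (.imp (.le w k) (.imp (γ.app [w, q, y, z])
        (.imp ((memFml π a).app [y, u, k]) ((memFml π a).app [z, u, k]))))))) := by
  let inner : AFml := .imp (γ.app [.var 0, .var 5, .var 2, .var 1]) <|
      .imp ((memFml π a).app [.var 2, .var 3, .var 4]) ((memFml π a).app [.var 1, .var 3, .var 4])
  have hy := app_ballLe_imp (Γ := Γ) (.var 1) y (.ballLe (.var 2) (.ballLe (.var 3) inner))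
    [u, k, q]
  have hz := app_ballLe_imp (Γ := Γ) (.var 2) z (.ballLe (.var 3) inner) [y, u, k, q]
  have hw := app_ballLe_imp (Γ := Γ) (.var 3) w inner [z, y, u, k, q]
  simp only [inner, AFml.app_imp, AFml.app_app] at hy hz hw
  exact .taut₃ hy hz hw

theorem pa_boundedClosureFml_imp {q c c' w : ℕ}
    (hw : Proves PA (γ.app [numeral w, numeral q, numeral c, numeral c'])) :
    Proves PA (.imp (.le (numeral (c + c' + w)) (.var 0)) (.imp
      ((boundedClosureFml π δ γ a).app [.var 0, numeral q, numeral c])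
      ((boundedClosureFml π δ γ a).app [.var 0, numeral q, numeral c']))) := by
  have le (n : ℕ) (hn : n ≤ c + c' + w) :
      Proves PA (.imp (.le (numeral (c + c' + w)) (.var 1)) (.le (numeral n) (.var 1))) := by
    simpa only [AFml.subst0, AFml.substAll, ATerm.substAll, subst0Env, numeral_substAll]
      using (pa_le_of_numeral_le hn).subst0 (.var 1)
  have closed := Proves.closedFml_imp (Γ := PA) (π := π) (γ := γ) (a := a) (.var 0) (.var 1)
    (numeral q) (numeral c) (numeral c') (numeral w)
  simp only [boundedClosureFml, AFml.app_bexLe, AFml.app_and, AFml.app_app]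
  refine .ex_imp_ex ?_
  simp only [AFml.lift, List.map, ATerm.substAll, numeral_lift]
  have bounds := Proves.taut₃ (le c (by omega)) (le c' (by omega)) (le w (by omega))
    (D := .imp (.le (numeral (c + c' + w)) (.var 1)) (.and (.le (numeral c) (.var 1))
      (.and (.le (numeral c') (.var 1)) (.le (numeral w) (.var 1)))))
  exact .taut₃ closed hw bounds

theorem pa_closureFml_imp (hπ : IsDelta0 π) (hδ : IsDelta0 δ) (hγ : IsDelta0 γ) {q c c' w : ℕ}
    (hw : γ.Sat (listEnv [w, q, c, c']))
    (provable : (closureFml π δ γ a).Sat (listEnv [q, c]) →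
      Proves PA ((closureFml π δ γ a).app [numeral q, numeral c'])) :
    Proves PA (.imp ((closureFml π δ γ a).app [numeral q, numeral c])
      ((closureFml π δ γ a).app [numeral q, numeral c'])) := by
  have step : Proves PA (γ.app [numeral w, numeral q, numeral c, numeral c']) :=
    γ.app_map_numeral [w, q, c, c'] ▸ (hγ.paDecides _).1 hw
  have large := pa_boundedClosureFml_imp (a := a) (π := π) (δ := δ) step
  have conclusion := Proves.imp_lift_ex (Γ := PA)
    ((boundedClosureFml π δ γ a).app [.var 0, numeral q, numeral c'])
  rw [← app_closureFml_numeral] at conclusion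
  rw [app_closureFml_numeral q c]
  refine pa_ex_imp ((isDelta0_boundedClosureFml hπ hδ hγ).substAll _) (AFml.freeLt_app _ ?_) _
    (.taut₂ large conclusion) ?_
  · simp [ATerm.FreeLt, numeral_freeLt]
  · rintro ⟨i, hi⟩
    refine provable ⟨i, ?_⟩
    rw [AFml.sat_app] at hi
    simpa only [consEnv_listEnv, List.map, ATerm.val, numeral_val] using hi

theorem Proves.not_memFml {Γ : Set AFml} (u k : ATerm) :
    Proves Γ (.neg ((memFml π a).app [numeral a, u, k])) := by
  simp only [memFml, AFml.app, AFml.substAll, numeral_substAll]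
  exact .taut₁ (.eqRefl (numeral a)) fun v h h' => h'.2 h

theorem pa_not_closureFml (q : ℕ) :
    Proves PA (.neg ((closureFml π δ γ a).app [numeral q, numeral a])) := by
  have body : Proves PA (.imp ((boundedClosureFml π δ γ a).app [.var 0, numeral q, numeral a])
      (botFml.lift 0)) := by
    simp only [boundedClosureFml, AFml.app_bexLe]
    refine .ex_imp ?_
    simp only [AFml.app_and, AFml.app_app, List.map, numeral_lift]
    exact .taut₁ (.not_memFml (.var 0) (.var 1)) fun v h h' => absurd h'.2.1 h
  rw [app_closureFml_numeral]
  exact .taut₂ (Proves.ex_imp body) pa_not_bot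

end closureFml

/-- `u` codes a finite set of elements of `A`, different from `a`, which is closed under `R`. -/
def IsClosedSet (A : ℕ → Prop) (R : ℕ → ℕ → Prop) (a u : ℕ) : Prop :=
  ∀ y, bit u y = 1 → A y ∧ y ≠ a ∧ ∀ z, R y z → bit u z = 1

section Kernels

variable {A : ℕ → ℕ → Prop} {R : ℕ → ℕ → ℕ → Prop} {π δ γ : AFml} {a q : ℕ}

theorem accepted_of_sat_closureFml (hδ : IsSigma1Kernel δ fun ρ => A (ρ 0) (ρ 1)) {x : ℕ}
    (h : (closureFml π δ γ a).Sat (listEnv [q, x])) : A q x := by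
  obtain ⟨k, hk⟩ := h
  rw [consEnv_listEnv, sat_boundedClosureFml] at hk
  obtain ⟨u, -, hx, accepted, -⟩ := hk
  exact (hδ.iff_exists [q, x]).2 ⟨k, accepted x (sat_memFml.1 hx).1.1 hx⟩

theorem sat_closureFml_of_isClosedSet (hπ : IsSigma1Kernel π fun ρ => bit (ρ 1) (ρ 0) = 1)
    (hδ : IsSigma1Kernel δ fun ρ => A (ρ 0) (ρ 1))
    (hγ : IsSigma1Kernel γ fun ρ => R (ρ 0) (ρ 1) (ρ 2)) {u x : ℕ}
    (closed : IsClosedSet (A q) (R q) a u) (hx : bit u x = 1) :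
    (closureFml π δ γ a).Sat (listEnv [q, x]) := by
  obtain ⟨w, hw⟩ : ∃ w, ∀ y ≤ u, bit u y = 1 →
      π.Sat (listEnv [w, y, u]) ∧ δ.Sat (listEnv [w, q, y]) := by
    refine exists_uniform_witness (fun y w w' hw h hy => ?_) fun y _ => ?_
    · exact ⟨hπ.mono _ hw (h hy).1, hδ.mono _ hw (h hy).2⟩
    · by_cases hy : bit u y = 1
      · obtain ⟨w₁, h₁⟩ := (hπ.iff_exists [y, u]).1 hy
        obtain ⟨w₂, h₂⟩ := (hδ.iff_exists [q, y]).1 (closed y hy).1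
        exact ⟨max w₁ w₂, fun _ =>
          ⟨hπ.mono _ (le_max_left _ _) h₁, hδ.mono _ (le_max_right _ _) h₂⟩⟩
      · exact ⟨0, fun h => absurd h hy⟩
  have le_u {y : ℕ} (hy : bit u y = 1) : y ≤ u :=
    le_of_bit_eq_one (Nat.lt_two_pow_self.trans (Nat.pow_lt_pow_succ one_lt_two)) hy
  have mem (y : ℕ) : (memFml π a).Sat (listEnv [y, u, max u w]) ↔ bit u y = 1 := by
    rw [sat_memFml]
    refine ⟨fun h => (hπ.iff_exists [y, u]).2 ⟨_, h.1.2⟩, fun hy => ?_⟩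
    exact ⟨⟨le_max_of_le_left (le_u hy), hπ.mono _ (le_max_right _ _) (hw y (le_u hy) hy).1⟩,
      (closed y hy).2.1⟩
  refine ⟨max u w, ?_⟩
  rw [consEnv_listEnv, sat_boundedClosureFml]
  refine ⟨u, le_max_left u w, ?_⟩
  simp only [mem]
  refine ⟨hx, fun y _ hy => ?_, fun y _ z _ w' _ hw' hy => ?_⟩
  · exact hδ.mono _ (le_max_right u w) (hw y (le_u hy) hy).2
  · exact (closed y hy).2.2 z ((hγ.iff_exists [q, y, z]).2 ⟨w', hw'⟩)

end Kernels

/-- `Θ(q, x)` is a `Σ₁` formula which means that `x` belongs to a finite set of elements of `A q`,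
different from `a`, which is closed under `R q`; and `PA` proves that `Θ(q, ·)` is closed under
`R q`, as far as this is compatible with the truth, and fails at `a`. -/
structure IsClosureFml (A : ℕ → ℕ → Prop) (R : ℕ → ℕ → ℕ → Prop) (a : ℕ) (Θ : AFml) : Prop where
  isSigma1 : IsSigma1 Θ
  freeLt : Θ.FreeLt 2
  accepted_of_sat : ∀ {q x}, Θ.Sat (listEnv [q, x]) → A q x
  sat_of_isClosedSet : ∀ {q u x}, IsClosedSet (A q) (R q) a u → bit u x = 1 →
    Θ.Sat (listEnv [q, x])
  pa_imp : ∀ {q y z}, R q y z → (Θ.Sat (listEnv [q, y]) → Θ.Sat (listEnv [q, z])) →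
    Proves PA (.imp (Θ.app [numeral q, numeral y]) (Θ.app [numeral q, numeral z]))
  pa_not : ∀ q, Proves PA (.neg (Θ.app [numeral q, numeral a]))

theorem exists_isClosureFml {A : ℕ → ℕ → Prop} {R : ℕ → ℕ → ℕ → Prop}
    (hA : Sigma1Definable fun ρ => A (ρ 0) (ρ 1))
    (hR : Sigma1Definable fun ρ => R (ρ 0) (ρ 1) (ρ 2)) (a : ℕ) : ∃ Θ, IsClosureFml A R a Θ := by
  have hbit : Sigma1Definable fun ρ => bit (ρ 1) (ρ 0) = 1 := by infer_instance
  obtain ⟨π, hπ⟩ := hbit.exists_kernel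
  obtain ⟨δ, hδ⟩ := hA.exists_kernel
  obtain ⟨γ, hγ⟩ := hR.exists_kernel
  have sigma1 : IsSigma1 (closureFml π δ γ a) :=
    .ex (.delta0 (isDelta0_boundedClosureFml hπ.isDelta0 hδ.isDelta0 hγ.isDelta0))
  refine ⟨closureFml π δ γ a, sigma1, freeLt_closureFml, accepted_of_sat_closureFml hδ,
    sat_closureFml_of_isClosedSet hπ hδ hγ, fun {q y z} step truth => ?_, pa_not_closureFml⟩
  obtain ⟨w, hw⟩ := (hγ.iff_exists [q, y, z]).1 step
  exact pa_closureFml_imp hπ.isDelta0 hδ.isDelta0 hγ.isDelta0 hw fun h =>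
    sigma1.proves_app [q, z] (truth h)

/-- `P` is a `Σ₁` formula, with `q` the parameter of the codes of its instances, such that `P(c)`
means that `c` belongs to a finite set of elements of `A q`, different from `a`, which is closed
under `R q`; and `PA` proves that `P` is closed under `R q` and fails at `a`, as far as this is
compatible with the truth. -/
structure IsClosureBox (A : ℕ → ℕ → Prop) (R : ℕ → ℕ → ℕ → Prop) (a q : ℕ) (P : AFml) : Prop where
  isSigma1 : IsSigma1 P
  freeLt : P.FreeLt 1
  isSigma1_subst0 : ∀ c, IsSigma1 (P.subst0 (numeral c))
  code_subst0 : ∀ c, (P.subst0 (numeral c)).code = boxCode q c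
  proves_of_trueN : ∀ c, TrueN (P.subst0 (numeral c)) → Proves PA (P.subst0 (numeral c))
  accepted_of_trueN : ∀ c, TrueN (P.subst0 (numeral c)) → A q c
  trueN_of_isClosedSet : ∀ u c, IsClosedSet (A q) (R q) a u → bit u c = 1 →
    TrueN (P.subst0 (numeral c))
  proves_imp : ∀ c c', R q c c' →
    (TrueN (P.subst0 (numeral c)) → TrueN (P.subst0 (numeral c'))) →
    Proves PA (.imp (P.subst0 (numeral c)) (P.subst0 (numeral c')))
  refutes : Proves PA (.neg (P.subst0 (numeral a)))

theorem IsClosureFml.isClosureBox {A : ℕ → ℕ → Prop} {R : ℕ → ℕ → ℕ → Prop} {a : ℕ} {Θ : AFml}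
    (h : IsClosureFml A R a Θ) : IsClosureBox A R a Θ.code (boxFml Θ (.var 0)) := by
  have inst (c : ℕ) : (boxFml Θ (.var 0)).subst0 (numeral c) = boxFml Θ (numeral c) :=
    boxFml_substAll h.freeLt _ _
  have unfolded (c : ℕ) : Proves PA (iffF (boxFml Θ (numeral c)) (Θ.app [gnum Θ, numeral c])) :=
    pa_boxFml_iff h.freeLt (numeral c)
  refine ⟨sigma1_boxFml h.isSigma1 _, freeLt_boxFml h.freeLt Nat.one_pos, ?_, ?_, ?_, ?_, ?_, ?_,
    ?_⟩
  all_goals simp only [inst, trueN_boxFml]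
  · exact fun c => sigma1_boxFml h.isSigma1 _
  · exact code_boxFml
  · exact fun c hc => .taut₂ (unfolded c) (h.isSigma1.proves_app [_, c] hc)
  · exact fun c => h.accepted_of_sat
  · exact fun u c => h.sat_of_isClosedSet
  · exact fun c c' step truth => .taut₃ (unfolded c) (unfolded c') (h.pa_imp step truth)
  · exact .taut₂ (unfolded a) (h.pa_not Θ.code)

/-! ### Reasoning modulo false `Σ₁` sentences -/

/-- `φ` is provable up to a false `Σ₁` sentence. For a `Σ₁`-sound theory containing PA this is
consistent, although refutations of false `Σ₁` sentences need not be provable. -/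
def ProvesModFalseSigma1 (Γ : Set AFml) (φ : AFml) : Prop :=
  ∃ σ, IsSigma1 σ ∧ σ.FreeLt 0 ∧ ¬ TrueN σ ∧ Proves Γ (.or σ φ)

namespace ProvesModFalseSigma1

variable {Γ : Set AFml} {φ ψ χ : AFml}

theorem of_proves (h : Proves Γ φ) : ProvesModFalseSigma1 Γ φ :=
  ⟨botFml, .delta0 (.eq _ _), ⟨trivial, trivial⟩, by simp [TrueN, botFml, AFml.Sat, ATerm.val],
    .taut₁ h⟩

theorem not_of_false (hσ : IsSigma1 φ) (hclosed : φ.FreeLt 0) (hfalse : ¬ TrueN φ) :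
    ProvesModFalseSigma1 Γ (.neg φ) :=
  ⟨φ, hσ, hclosed, hfalse, .taut fun v => by simp only [AFml.evalProp]; tauto⟩

theorem taut₂ (hφ : ProvesModFalseSigma1 Γ φ) (hψ : ProvesModFalseSigma1 Γ ψ)
    (h : ∀ v, φ.evalProp v → ψ.evalProp v → χ.evalProp v := by
      intro v; simp only [AFml.evalProp]; tauto) :
    ProvesModFalseSigma1 Γ χ := by
  obtain ⟨σ, hσ, hσ_closed, hσ_false, hφ⟩ := hφ
  obtain ⟨τ, hτ, hτ_closed, hτ_false, hψ⟩ := hψ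
  refine ⟨.or σ τ, .or hσ hτ, ⟨hσ_closed, hτ_closed⟩, fun h => h.elim hσ_false hτ_false,
    .taut₂ hφ hψ fun v => ?_⟩
  have := h v
  simp only [AFml.evalProp]
  tauto

theorem taut₁ (hφ : ProvesModFalseSigma1 Γ φ)
    (h : ∀ v, φ.evalProp v → χ.evalProp v := by
      intro v; simp only [AFml.evalProp]; tauto) :
    ProvesModFalseSigma1 Γ χ :=
  hφ.taut₂ hφ fun v hv _ => h v hv

end ProvesModFalseSigma1

theorem Sigma1Sound.not_provesModFalseSigma1_botFml {Γ : Set AFml} (hext : PA ⊆ Γ)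
    (hsound : Sigma1Sound Γ) : ¬ ProvesModFalseSigma1 Γ botFml := fun ⟨σ, hσ, hclosed, hfalse, h⟩ =>
  hfalse (hsound σ hσ hclosed (.taut₂ h (pa_not_bot.mono hext)))

/-- The truth value `a` is correct for `φ`, up to false `Σ₁` sentences; values other than `0` and
`1` carry no information. -/
def HasValue (Γ : Set AFml) (a : ℕ) (φ : AFml) : Prop :=
  (a = 1 → ProvesModFalseSigma1 Γ φ) ∧ (a = 0 → ProvesModFalseSigma1 Γ (.neg φ))

namespace HasValue

variable {Γ : Set AFml} {a b : ℕ} {φ ψ : AFml}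

theorem imp (hφ : HasValue Γ a φ) (hψ : HasValue Γ b ψ) :
    HasValue Γ (truthTable 5 a b) (.imp φ ψ) := by
  refine ⟨fun h => ?_, fun h => ?_⟩ <;>
    obtain ⟨ha, hb⟩ := truthTable_lt_two_iff.1 (show truthTable 5 a b < 2 by omega)
  · rw [truthTable_imp ha hb] at h
    by_cases ha1 : a = 1
    · exact (hψ.1 (h ha1)).taut₁
    · exact (hφ.2 (by omega)).taut₁
  · have hab : ¬ (a = 1 → b = 1) := fun h' => by have := (truthTable_imp ha hb).2 h'; omega
    exact (hφ.1 (by tauto)).taut₂ (hψ.2 (by omega))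

theorem neg (h : HasValue Γ a φ) : HasValue Γ (truthTable 5 a 0) (.neg φ) := by
  refine ⟨fun h' => ?_, fun h' => ?_⟩ <;>
    obtain ⟨ha, -⟩ := truthTable_lt_two_iff.1 (show truthTable 5 a 0 < 2 by omega) <;>
    have := truthTable_neg ha
  · exact h.2 (by omega)
  · exact (h.1 (by omega)).taut₁

theorem and (hφ : HasValue Γ a φ) (hψ : HasValue Γ b ψ) :
    HasValue Γ (truthTable 3 a b) (.and φ ψ) := by
  refine ⟨fun h => ?_, fun h => ?_⟩ <;>
    obtain ⟨ha, hb⟩ := truthTable_lt_two_iff.1 (show truthTable 3 a b < 2 by omega)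
  · obtain ⟨ha1, hb1⟩ := (truthTable_and ha hb).1 h
    exact (hφ.1 ha1).taut₂ (hψ.1 hb1)
  · have hab : ¬ (a = 1 ∧ b = 1) := fun h' => by have := (truthTable_and ha hb).2 h'; omega
    by_cases ha0 : a = 0
    · exact (hφ.2 ha0).taut₁
    · exact (hψ.2 (by omega)).taut₁

theorem or (hφ : HasValue Γ a φ) (hψ : HasValue Γ b ψ) :
    HasValue Γ (truthTable 4 a b) (.or φ ψ) := by
  refine ⟨fun h => ?_, fun h => ?_⟩ <;>
    obtain ⟨ha, hb⟩ := truthTable_lt_two_iff.1 (show truthTable 4 a b < 2 by omega)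
  · rcases (truthTable_or ha hb).1 h with ha1 | hb1
    · exact (hφ.1 ha1).taut₁
    · exact (hψ.1 hb1).taut₁
  · have hab : ¬ (a = 1 ∨ b = 1) := fun h' => by have := (truthTable_or ha hb).2 h'; omega
    exact (hφ.2 (by omega)).taut₂ (hψ.2 (by omega))

end HasValue

/-! ### The provability predicate -/

/-- The box obtained from an enumeration of the theorems of a `Σ₁`-sound extension of PA. -/
structure IsRosserBox (Tax : Set AFml) (E : Enumeration) (M N q : ℕ) (P : AFml) : Prop
    extends IsClosureBox (E.Accepted M N) (E.BoxImplication M N) badCode q P where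
  pa_subset : PA ⊆ Tax
  sound : Sigma1Sound Tax
  found_iff : ∀ x, (∃ w, E.found x w) ↔ IsTheoremCode Tax x
  le : M ≤ N

theorem PrAxiomatized.exists_isRosserBox {Tax : Set AFml} (hpr : PrAxiomatized Tax)
    (hext : PA ⊆ Tax) (hsound : Sigma1Sound Tax) {M N : ℕ} (hMN : M ≤ N) :
    ∃ E q P, IsRosserBox Tax E M N q P := by
  obtain ⟨E, hE⟩ := exists_enumeration hpr.sigma1Definable_isTheoremCode
  obtain ⟨Θ, hΘ⟩ := exists_isClosureFml (E.sigma1_accepted M N) (E.sigma1_boxImplication M N)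
    badCode
  exact ⟨E, Θ.code, _, hΘ.isClosureBox, hext, hsound, hE, hMN⟩

theorem AFml.code_ne_pair {k : ℕ} (hk : 7 < k) (φ : AFml) (x : ℕ) : φ.code ≠ Nat.pair k x := by
  cases φ <;> simp only [AFml.code, ne_eq, Nat.pair_eq_pair, not_and] <;> omega

theorem boxCodeIter_add (q a b c : ℕ) :
    boxCodeIter q (a + b) c = boxCodeIter q a (boxCodeIter q b c) := by
  induction a with
  | zero => rw [Nat.zero_add, boxCodeIter]
  | succ a ih => rw [Nat.succ_add, boxCodeIter, ih, boxCodeIter]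

theorem IsTheoremCode.not_neg {Tax : Set AFml} {x : ℕ} (hx : IsTheoremCode Tax x)
    (hcons : ¬ Proves Tax botFml) : ¬ IsTheoremCode Tax (Nat.pair 2 x) := by
  obtain ⟨φ, rfl, hφ⟩ := hx
  rw [← AFml.code, isTheoremCode_code]
  exact fun hneg => hcons (.taut₂ hφ hneg)

theorem IsTheoremCode.ne_pair {Tax : Set AFml} {x k : ℕ} (hx : IsTheoremCode Tax x) (hk : 7 < k)
    (y : ℕ) : x ≠ Nat.pair k y := by
  obtain ⟨φ, rfl, -⟩ := hx
  exact φ.code_ne_pair hk y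

namespace Enumeration

variable {E : Enumeration} {M N q s b x : ℕ}

theorem exists_least_refutesAt (h : E.SwitchesAt M N q s) :
    ∃ s b, b < 2 ^ (s + 1) ∧ E.RefutesAt M N q s b ∧ (∀ s', s' < s → ¬ E.SwitchesAt M N q s') ∧
      ∀ b', b' < b → ¬ E.RefutesAt M N q s b' := by
  classical
  have switch : ∃ s, E.SwitchesAt M N q s := ⟨s, h⟩
  have hs := Nat.find_spec switch
  obtain ⟨hb, refutes⟩ := Nat.find_spec hs
  exact ⟨Nat.find switch, Nat.find hs, hb, refutes, fun _ => Nat.find_min switch,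
    fun b' hb' h' => Nat.find_min hs hb' ⟨hb'.trans hb, h'⟩⟩

theorem FoundBeforeSwitch.exists_lt (h : E.FoundBeforeSwitch M N q x) (hs : E.SwitchesAt M N q s) :
    ∃ w, w < s ∧ E.found x w := by
  obtain ⟨w, found, before⟩ := h
  exact ⟨w, not_le.1 fun hsw => before s hsw hs, found⟩

theorem accepted_iff_bit (hb : b < 2 ^ (s + 1)) (refutes : E.RefutesAt M N q s b)
    (first : ∀ s', s' < s → ¬ E.SwitchesAt M N q s')
    (least : ∀ b', b' < b → ¬ E.RefutesAt M N q s b') :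
    E.Accepted M N q x ↔ bit b x = 1 := by
  have switches : E.SwitchesAt M N q s := ⟨b, hb, refutes⟩
  refine ⟨?_, fun h => .inr ⟨s, b, hb, refutes, first, least, h⟩⟩
  rintro (h | ⟨s', b', hb', refutes', first', least', h⟩)
  · obtain ⟨w, hw, found⟩ := h.exists_lt switches
    exact refutes.2.1 x ((E.le_stage found).trans hw.le) w hw found
  · obtain rfl : s' = s := le_antisymm (not_lt.1 fun hs => first' s hs switches)
      (not_lt.1 fun hs => first s' hs ⟨b', hb', refutes'⟩)
    obtain rfl : b' = b := le_antisymm (not_lt.1 fun hb => least' b hb refutes)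
      (not_lt.1 fun hb => least b' hb refutes')
    exact h

theorem RefutesAt.isClosedSet (hb : b < 2 ^ (s + 1)) (refutes : E.RefutesAt M N q s b)
    (accepted : ∀ x, bit b x = 1 → E.Accepted M N q x) :
    IsClosedSet (E.Accepted M N q) (E.BoxImplication M N q) badCode b := by
  intro y hy
  have hys : y ≤ s := le_of_bit_eq_one hb hy
  have switches : E.SwitchesAt M N q s := ⟨b, hb, refutes⟩
  obtain ⟨-, -, closed, compatible, bad⟩ := refutes
  refine ⟨accepted y hy, fun h => bad (h ▸ hy), ?_⟩
  rintro z (⟨c, rfl, rfl⟩ | ⟨c, rfl, negFound, rfl⟩)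
  · exact closed c ((le_boxCodeIter q N c).trans hys) hy
  · obtain ⟨w, hw, found⟩ := negFound.exists_lt switches
    exact absurd found (compatible c ((lt_boxCode q c).le.trans hys) w hw hy)

end Enumeration

namespace IsRosserBox

variable {Tax : Set AFml} {E : Enumeration} {M N q : ℕ} {P : AFml}

theorem hasValue_boxValue (h : IsRosserBox Tax E M N q P) {b : ℕ}
    (hb : ∀ c, TrueN (P.subst0 (numeral c)) ↔ bit b c = 1) (φ : AFml) :
    HasValue Tax (boxValue q b φ.code) φ := by
  by_cases hbot : φ.code = botFml.code
  · obtain rfl := AFml.code_injective hbot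
    rw [boxValue_code_botFml]
    exact ⟨fun h => absurd h (by decide), fun _ => .of_proves (pa_not_bot.mono h.pa_subset)⟩
  by_cases hbox : ∃ c, φ.code = boxCode q c
  · obtain ⟨c, hc⟩ := hbox
    obtain rfl := AFml.code_injective (hc.trans (h.code_subst0 c).symm)
    rw [hc, boxValue_boxCode]
    refine ⟨fun hbc => .of_proves ((h.proves_of_trueN c ((hb c).2 hbc)).mono h.pa_subset),
      fun hbc => .not_of_false (h.isSigma1_subst0 c) (h.freeLt.subst0 (numeral_freeLt c 0)) ?_⟩
    rw [hb, hbc]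
    exact zero_ne_one
  · rw [boxValue, if_neg hbot, dif_neg hbox]
    exact ⟨fun h => absurd h (by decide), fun h => absurd h (by decide)⟩

theorem hasValue_boxEval (h : IsRosserBox Tax E M N q P) {b : ℕ}
    (hb : ∀ c, TrueN (P.subst0 (numeral c)) ↔ bit b c = 1) (φ : AFml) :
    HasValue Tax (boxEval q b φ.code) φ := by
  have atom {φ : AFml} (hφ : ¬ (2 ≤ φ.code.unpair.1 ∧ φ.code.unpair.1 ≤ 5)) :
      HasValue Tax (boxEval q b φ.code) φ := by
    rw [boxEval, evalCode_atom hφ]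
    exact h.hasValue_boxValue hb φ
  induction φ with
  | eq | le | all | ex => exact atom (by simp [AFml.code])
  | neg φ ih => rw [AFml.code, boxEval_neg]; exact ih.neg
  | and φ ψ ih₁ ih₂ =>
    rw [AFml.code, boxEval_binary q b le_rfl (by decide)]
    exact ih₁.and ih₂
  | or φ ψ ih₁ ih₂ =>
    rw [AFml.code, boxEval_binary q b (by decide) (by decide)]
    exact ih₁.or ih₂
  | imp φ ψ ih₁ ih₂ =>
    rw [AFml.code, boxEval_binary q b (by decide) le_rfl]
    exact ih₁.imp ih₂

theorem not_switchesAt (h : IsRosserBox Tax E M N q P) (s : ℕ) : ¬ E.SwitchesAt M N q s := by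
  intro hs
  obtain ⟨s, b, hb, refutes, first, least⟩ := Enumeration.exists_least_refutesAt hs
  have accepted_iff (x : ℕ) : E.Accepted M N q x ↔ bit b x = 1 :=
    Enumeration.accepted_iff_bit hb refutes first least
  have trueN_iff (c : ℕ) : TrueN (P.subst0 (numeral c)) ↔ bit b c = 1 :=
    ⟨fun hc => (accepted_iff c).1 (h.accepted_of_trueN c hc), fun hc => h.trueN_of_isClosedSet b c
      (refutes.isClosedSet hb fun x => (accepted_iff x).2) hc⟩
  obtain ⟨⟨x, -, found, hx⟩, -⟩ := refutes
  obtain ⟨φ, rfl, hφ⟩ := (h.found_iff x).1 ⟨s, found⟩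
  exact h.sound.not_provesModFalseSigma1_botFml h.pa_subset
    (((h.hasValue_boxEval trueN_iff φ).2 hx).taut₂ (.of_proves hφ))

theorem foundBeforeSwitch_iff (h : IsRosserBox Tax E M N q P) (x : ℕ) :
    E.FoundBeforeSwitch M N q x ↔ IsTheoremCode Tax x := by
  rw [← h.found_iff]
  exact exists_congr fun w => and_iff_left fun s _ => h.not_switchesAt s

theorem accepted_iff (h : IsRosserBox Tax E M N q P) (x : ℕ) :
    E.Accepted M N q x ↔ IsTheoremCode Tax x := by
  rw [← h.foundBeforeSwitch_iff]
  exact or_iff_left fun ⟨s, b, hb, refutes, _⟩ => h.not_switchesAt s ⟨b, hb, refutes⟩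

theorem isTheoremCode_of_boxCode (h : IsRosserBox Tax E M N q P) {c : ℕ}
    (hc : IsTheoremCode Tax (boxCode q c)) : IsTheoremCode Tax c := by
  rw [← h.code_subst0, isTheoremCode_code] at hc
  exact (h.accepted_iff c).1
    (h.accepted_of_trueN c (h.sound _ (h.isSigma1_subst0 c)
      (h.freeLt.subst0 (numeral_freeLt c 0)) hc))

theorem isTheoremCode_of_boxCodeIter (h : IsRosserBox Tax E M N q P) {c : ℕ} :
    ∀ k, IsTheoremCode Tax (boxCodeIter q k c) → IsTheoremCode Tax c
  | 0, hc => hc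
  | k + 1, hc => h.isTheoremCode_of_boxCodeIter k (h.isTheoremCode_of_boxCode hc)

theorem isTheoremCode_boxCodeIter_of_le (h : IsRosserBox Tax E M N q P) {c : ℕ}
    (hc : IsTheoremCode Tax (boxCodeIter q N c)) : IsTheoremCode Tax (boxCodeIter q M c) := by
  rw [← Nat.sub_add_cancel h.le, boxCodeIter_add] at hc
  exact h.isTheoremCode_of_boxCodeIter _ hc

theorem consistent (h : IsRosserBox Tax E M N q P) : ¬ Proves Tax botFml := fun hbot =>
  h.sound.not_provesModFalseSigma1_botFml h.pa_subset (.of_proves hbot)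

theorem trueN_iff (h : IsRosserBox Tax E M N q P) (x : ℕ) :
    TrueN (P.subst0 (numeral x)) ↔ IsTheoremCode Tax x := by
  refine ⟨fun hx => (h.accepted_iff x).1 (h.accepted_of_trueN x hx), fun hx => ?_⟩
  obtain ⟨u, -, hu⟩ := exists_bit_eq_one_iff (IsTheoremCode Tax) x
  refine h.trueN_of_isClosedSet u x (fun y hy => ?_) ((hu x).2 ⟨le_rfl, hx⟩)
  obtain ⟨hyx, hy⟩ := (hu y).1 hy
  refine ⟨(h.accepted_iff y).2 hy, hy.ne_pair (by decide) 0, ?_⟩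
  rintro z (⟨c, rfl, rfl⟩ | ⟨c, rfl, negFound, rfl⟩)
  · exact (hu _).2 ⟨((boxCodeIter_strictMono q c).monotone h.le).trans hyx,
      h.isTheoremCode_boxCodeIter_of_le hy⟩
  · exact absurd ((h.foundBeforeSwitch_iff _).1 negFound) (hy.not_neg h.consistent)

theorem isProvPred (h : IsRosserBox Tax E M N q P) : IsProvPred Tax P := by
  refine ⟨h.freeLt, fun φ => ⟨fun hφ => ?_, fun hφ => ?_⟩⟩
  · exact h.proves_of_trueN _ ((h.trueN_iff _).2 (isTheoremCode_code.2 hφ))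
  · exact isTheoremCode_code.1 ((h.trueN_iff _).1 (h.sound _ (h.isSigma1_subst0 _)
      (h.freeLt.subst0 (numeral_freeLt _ 0)) (hφ.mono h.pa_subset)))

theorem proves_boxCodeIter_imp (h : IsRosserBox Tax E M N q P) (c : ℕ) :
    Proves Tax (.imp (P.subst0 (numeral (boxCodeIter q N c)))
      (P.subst0 (numeral (boxCodeIter q M c)))) := by
  refine (h.proves_imp _ _ (.inl ⟨c, rfl, rfl⟩) fun hN => ?_).mono h.pa_subset
  rw [h.trueN_iff] at hN ⊢
  exact h.isTheoremCode_boxCodeIter_of_le hN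

theorem proves_neg_boxCode (h : IsRosserBox Tax E M N q P) {c : ℕ}
    (hc : Proves Tax (.neg (P.subst0 (numeral c)))) :
    Proves Tax (.neg (P.subst0 (numeral (boxCode q c)))) := by
  have negTheorem : IsTheoremCode Tax (Nat.pair 2 (boxCode q c)) := by
    rw [← h.code_subst0, ← AFml.code, isTheoremCode_code]
    exact hc
  have himp := h.proves_imp (boxCode q c) badCode
    (.inr ⟨c, rfl, (h.foundBeforeSwitch_iff _).2 negTheorem, rfl⟩) fun hbox =>
      absurd negTheorem (((h.trueN_iff _).1 hbox).not_neg h.consistent)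
  exact Proves.mono h.pa_subset (.taut₂ himp h.refutes)

end IsRosserBox

/-! ### Soundness -/

theorem IsInterp.evalTC_iff {P : AFml} {f : MFml → AFml} (hf : IsInterp P f) {v : AFml → Prop}
    (hv : ¬ v botFml) (A : MFml) : A.evalTC (fun B => (f B).evalProp v) ↔ (f A).evalProp v := by
  obtain ⟨-, bot, neg, and, or, imp, -⟩ := hf
  induction A with
  | var | box => rfl
  | bot => rw [bot]; exact iff_of_false id hv
  | neg A ih => rw [neg, MFml.evalTC, ih]; rfl
  | and A B ih₁ ih₂ => rw [and, MFml.evalTC, ih₁, ih₂]; rfl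
  | or A B ih₁ ih₂ => rw [or, MFml.evalTC, ih₁, ih₂]; rfl
  | imp A B ih₁ ih₂ => rw [imp, MFml.evalTC, ih₁, ih₂]; rfl

theorem IsInterp.proves_of_mTaut {P : AFml} {f : MFml → AFml} (hf : IsInterp P f) {A : MFml}
    (hA : MTaut A) : Proves PA (f A) := by
  have himp : Proves PA (.imp (.neg botFml) (f A)) :=
    .taut fun v hv => (hf.evalTC_iff (v := v) hv A).1 (hA _)
  exact himp.mp pa_not_bot

namespace IsRosserBox

variable {Tax : Set AFml} {E : Enumeration} {M N q : ℕ} {P : AFml}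

theorem code_appNum (h : IsRosserBox Tax E M N q P) (φ : AFml) :
    (P.appNum φ).code = boxCode q φ.code := h.code_subst0 φ.code

theorem map_boxIter_succ (h : IsRosserBox Tax E M N q P) {f : MFml → AFml} (hf : IsInterp P f)
    (A : MFml) (k : ℕ) :
    f (boxIter (k + 1) A) = P.subst0 (numeral (boxCodeIter q k (f A).code)) := by
  obtain ⟨-, -, -, -, -, -, box⟩ := hf
  induction k with
  | zero => exact box A
  | succ k ih => rw [boxIter, box, ih, AFml.appNum, gnum, h.code_subst0, boxCodeIter]

theorem soundness (h : IsRosserBox Tax E M N q P) {f : MFml → AFml} (hf : IsInterp P f)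
    {A : MFml} (hA : NAProves (M + 1) (N + 1) A) : Proves Tax (f A) := by
  obtain ⟨-, -, neg, -, -, imp, box⟩ := id hf
  induction hA with
  | taut hA => exact (hf.proves_of_mTaut hA).mono h.pa_subset
  | acc A =>
    rw [imp, h.map_boxIter_succ hf, h.map_boxIter_succ hf]
    exact h.proves_boxCodeIter_imp _
  | mp _ _ ih₁ ih₂ => rw [imp] at ih₁; exact ih₁.mp ih₂
  | nec _ ih => rw [box]; exact ((h.isProvPred.2 _).1 ih).mono h.pa_subset
  | ros _ ih =>
    rw [neg, box] at ih
    rw [neg, box, box, AFml.appNum, gnum, h.code_appNum]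
    exact h.proves_neg_boxCode ih

end IsRosserBox

/-! ### Codes of modal formulas -/

/-- The canonical interpretation. A variable becomes a negated box of a number that codes no
formula: such sentences are no interpretations of compound formulas, and boxes are the only atoms
to which `boxValue` assigns arbitrary values. -/
def canonicalInterp (P : AFml) : MFml → AFml
  | .var i => .neg (P.subst0 (numeral (Nat.pair 9 i)))
  | .bot => botFml
  | .neg A => .neg (canonicalInterp P A)
  | .and A B => .and (canonicalInterp P A) (canonicalInterp P B)
  | .or A B => .or (canonicalInterp P A) (canonicalInterp P B)
  | .imp A B => .imp (canonicalInterp P A) (canonicalInterp P B)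
  | .box A => P.appNum (canonicalInterp P A)

theorem isInterp_canonicalInterp {P : AFml} (hP : P.FreeLt 1) : IsInterp P (canonicalInterp P) :=
  ⟨fun _ => hP.subst0 (numeral_freeLt _ 0), rfl, fun _ => rfl, fun _ _ => rfl, fun _ _ => rfl,
    fun _ _ => rfl, fun _ => rfl⟩

/-- The code of the canonical interpretation of a modal formula. -/
def modalCode (q : ℕ) : MFml → ℕ
  | .var i => Nat.pair 2 (boxCode q (Nat.pair 9 i))
  | .bot => botFml.code
  | .neg A => Nat.pair 2 (modalCode q A)
  | .and A B => Nat.pair 3 (Nat.pair (modalCode q A) (modalCode q B))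
  | .or A B => Nat.pair 4 (Nat.pair (modalCode q A) (modalCode q B))
  | .imp A B => Nat.pair 5 (Nat.pair (modalCode q A) (modalCode q B))
  | .box A => boxCode q (modalCode q A)

theorem IsRosserBox.code_canonicalInterp {Tax : Set AFml} {E : Enumeration} {M N q : ℕ} {P : AFml}
    (h : IsRosserBox Tax E M N q P) (A : MFml) : (canonicalInterp P A).code = modalCode q A := by
  induction A with
  | var i => rw [canonicalInterp, modalCode, AFml.code, h.code_subst0]
  | bot => rfl
  | neg A ih => rw [canonicalInterp, modalCode, AFml.code, ih]
  | and A B ih₁ ih₂ | or A B ih₁ ih₂ | imp A B ih₁ ih₂ =>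
    rw [canonicalInterp, modalCode, AFml.code, ih₁, ih₂]
  | box A ih => rw [canonicalInterp, modalCode, h.code_appNum, ih]

section ModalCode

variable {q : ℕ}

theorem modalCode_ne_pair {k : ℕ} (hk : 7 < k) (A : MFml) (x : ℕ) :
    modalCode q A ≠ Nat.pair k x := by
  cases A <;> simp [modalCode, botFml, AFml.code, boxCode] <;> omega

theorem exists_eq_box_of_modalCode {A : MFml} {c : ℕ} (h : modalCode q A = boxCode q c) :
    ∃ B, A = .box B ∧ modalCode q B = c := by
  cases A with
  | box B => exact ⟨B, rfl, boxCode_injective q h⟩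
  | _ => simp [modalCode, boxCode, botFml, AFml.code] at h

theorem exists_eq_boxIter_of_modalCode {c : ℕ} :
    ∀ {k : ℕ} {A : MFml}, modalCode q A = boxCodeIter q k c →
      ∃ B, A = boxIter k B ∧ modalCode q B = c
  | 0, A, h => ⟨A, rfl, h⟩
  | k + 1, A, h => by
    obtain ⟨A', rfl, hA'⟩ := exists_eq_box_of_modalCode h
    obtain ⟨B, rfl, hB⟩ := exists_eq_boxIter_of_modalCode hA'
    exact ⟨B, rfl, hB⟩

theorem modalCode_boxIter (k : ℕ) (A : MFml) :
    modalCode q (boxIter k A) = boxCodeIter q k (modalCode q A) := by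
  induction k with
  | zero => rfl
  | succ k ih => rw [boxIter, modalCode, ih, boxCodeIter]

theorem modalCode_injective (q : ℕ) : Function.Injective (modalCode q) := by
  have var_ne (i : ℕ) (B : MFml) : boxCode q (Nat.pair 9 i) ≠ modalCode q B := fun h => by
    obtain ⟨C, rfl, hC⟩ := exists_eq_box_of_modalCode h.symm
    exact modalCode_ne_pair (by decide) C i hC
  intro A B h
  induction A generalizing B with
  | var i =>
    cases B with
    | var j => simpa [modalCode, (boxCode_injective q).eq_iff] using h
    | neg B => exact absurd (by simpa [modalCode] using h) (var_ne i B)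
    | _ => simp [modalCode, boxCode, botFml, AFml.code] at h
  | bot => cases B <;> simp [modalCode, boxCode, botFml, AFml.code] at h ⊢
  | neg A ih =>
    cases B with
    | var j => exact absurd (by simpa [modalCode] using h.symm) (var_ne j A)
    | neg B => rw [ih (by simpa [modalCode] using h)]
    | _ => simp [modalCode, boxCode, botFml, AFml.code] at h
  | and A₁ A₂ ih₁ ih₂ | or A₁ A₂ ih₁ ih₂ | imp A₁ A₂ ih₁ ih₂ =>
    cases B <;> simp only [modalCode, boxCode, botFml, AFml.code, Nat.pair_eq_pair, true_and,
      false_and, Nat.succ_ne_self, Nat.reduceEqDiff, OfNat.ofNat_ne_zero] at h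
    rw [ih₁ h.1, ih₂ h.2]
  | box A ih =>
    obtain ⟨B, rfl, hB⟩ := exists_eq_box_of_modalCode h.symm
    rw [ih hB.symm]

theorem IsSub.modalCode_le {A B : MFml} (h : IsSub A B) : modalCode q A ≤ modalCode q B := by
  induction h with
  | refl => exact le_rfl
  | neg _ ih => exact ih.trans (Nat.right_le_pair _ _)
  | andL _ ih | orL _ ih | impL _ ih =>
    exact ih.trans ((Nat.left_le_pair _ _).trans (Nat.right_le_pair _ _))
  | andR _ ih | orR _ ih | impR _ ih =>
    exact ih.trans ((Nat.right_le_pair _ _).trans (Nat.right_le_pair _ _))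
  | box _ ih => exact ih.trans (lt_boxCode _ _).le

theorem boxEval_modalCode {b : ℕ} {v : MFml → Prop} {A : MFml}
    (hvar : ∀ i, IsSub (.var i) A → (bit b (Nat.pair 9 i) = 1 ↔ ¬ v (.var i)))
    (hbox : ∀ B, IsSub (.box B) A → (bit b (modalCode q B) = 1 ↔ v (.box B))) :
    boxEval q b (modalCode q A) < 2 ∧ (boxEval q b (modalCode q A) = 1 ↔ A.evalTC v) := by
  induction A with
  | var i =>
    rw [modalCode, boxEval_neg, truthTable_lt_two_iff, boxEval_boxCode,
      truthTable_neg (bit_lt_two b _), hvar i (.refl _), not_not]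
    exact ⟨⟨bit_lt_two b _, two_pos⟩, Iff.rfl⟩
  | bot =>
    rw [modalCode, boxEval_code_botFml]
    exact ⟨two_pos, iff_of_false zero_ne_one id⟩
  | neg A ih =>
    obtain ⟨lt, iff⟩ := ih (fun i h => hvar i h.neg) fun B h => hbox B h.neg
    rw [modalCode, boxEval_neg, truthTable_lt_two_iff, truthTable_neg lt, MFml.evalTC, iff]
    exact ⟨⟨lt, two_pos⟩, Iff.rfl⟩
  | and A B ih₁ ih₂ =>
    obtain ⟨lt₁, iff₁⟩ := ih₁ (fun i h => hvar i h.andL) fun B h => hbox B h.andL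
    obtain ⟨lt₂, iff₂⟩ := ih₂ (fun i h => hvar i h.andR) fun B h => hbox B h.andR
    rw [modalCode, boxEval_binary q b le_rfl (by decide), truthTable_and lt₁ lt₂,
      truthTable_lt_two_iff, MFml.evalTC, iff₁, iff₂]
    exact ⟨⟨lt₁, lt₂⟩, Iff.rfl⟩
  | or A B ih₁ ih₂ =>
    obtain ⟨lt₁, iff₁⟩ := ih₁ (fun i h => hvar i h.orL) fun B h => hbox B h.orL
    obtain ⟨lt₂, iff₂⟩ := ih₂ (fun i h => hvar i h.orR) fun B h => hbox B h.orR
    rw [modalCode, boxEval_binary q b (by decide) (by decide), truthTable_or lt₁ lt₂,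
      truthTable_lt_two_iff, MFml.evalTC, iff₁, iff₂]
    exact ⟨⟨lt₁, lt₂⟩, Iff.rfl⟩
  | imp A B ih₁ ih₂ =>
    obtain ⟨lt₁, iff₁⟩ := ih₁ (fun i h => hvar i h.impL) fun B h => hbox B h.impL
    obtain ⟨lt₂, iff₂⟩ := ih₂ (fun i h => hvar i h.impR) fun B h => hbox B h.impR
    rw [modalCode, boxEval_binary q b (by decide) le_rfl, truthTable_imp lt₁ lt₂,
      truthTable_lt_two_iff, MFml.evalTC, iff₁, iff₂]
    exact ⟨⟨lt₁, lt₂⟩, Iff.rfl⟩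
  | box A =>
    rw [modalCode, boxEval_boxCode]
    exact ⟨bit_lt_two _ _, hbox A (.refl _)⟩

end ModalCode

/-! ### Completeness -/

theorem IsSub.trans {A B C : MFml} (hAB : IsSub A B) (hBC : IsSub B C) : IsSub A C := by
  induction hBC with
  | refl => exact hAB
  | neg _ ih => exact ih.neg
  | andL _ ih => exact ih.andL
  | andR _ ih => exact ih.andR
  | orL _ ih => exact ih.orL
  | orR _ ih => exact ih.orR
  | impL _ ih => exact ih.impL
  | impR _ ih => exact ih.impR
  | box _ ih => exact ih.box

theorem isSub_boxIter_of_le {j k : ℕ} (h : j ≤ k) (A : MFml) :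
    IsSub (boxIter j A) (boxIter k A) := by
  induction k, h using Nat.le_induction with
  | base => exact .refl _
  | succ k _ ih => exact ih.box

theorem finite_setOf_isSub (A : MFml) : {B | IsSub B A}.Finite := by
  induction A with
  | var i => exact (Set.finite_singleton (.var i)).subset fun B hB => by cases hB; rfl
  | bot => exact (Set.finite_singleton .bot).subset fun B hB => by cases hB; rfl
  | neg A ih => exact (ih.insert (.neg A)).subset fun B hB => by cases hB <;> simp [*]
  | and A₁ A₂ ih₁ ih₂ =>
    exact ((ih₁.union ih₂).insert (.and A₁ A₂)).subset fun B hB => by cases hB <;> simp [*]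
  | or A₁ A₂ ih₁ ih₂ =>
    exact ((ih₁.union ih₂).insert (.or A₁ A₂)).subset fun B hB => by cases hB <;> simp [*]
  | imp A₁ A₂ ih₁ ih₂ =>
    exact ((ih₁.union ih₂).insert (.imp A₁ A₂)).subset fun B hB => by cases hB <;> simp [*]
  | box A ih => exact (ih.insert (.box A)).subset fun B hB => by cases hB <;> simp [*]

theorem NAProves.of_finite {m n : ℕ} {Γ : Set MFml} (hΓ : Γ.Finite)
    (proves : ∀ B ∈ Γ, NAProves m n B) :
    ∀ {A}, (∀ v, (∀ B ∈ Γ, B.evalTC v) → A.evalTC v) → NAProves m n A := by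
  induction Γ, hΓ using Set.Finite.induction_on with
  | empty => exact fun h => .taut fun v => h v fun _ hB => hB.elim
  | @insert C Γ _ _ ih =>
    obtain ⟨hC, hΓ⟩ := Set.forall_mem_insert.1 proves
    exact fun h => .mp (ih hΓ fun v hv hCv => h v (Set.forall_mem_insert.2 ⟨hCv, hv⟩)) hC

/-- A propositional valuation that falsifies `X` and respects the derivable formulas of the forms
`□C`, `¬□C` and `□C → □D`, where `C` and `D` are subformulas of `X`. -/
structure IsCountervaluation (m n : ℕ) (X : MFml) (v : MFml → Prop) : Prop where
  not_evalTC : ¬ X.evalTC v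
  box_of_proves : ∀ {C}, IsSub C X → NAProves m n (.box C) → v (.box C)
  not_box_of_proves : ∀ {C}, IsSub C X → NAProves m n (.neg (.box C)) → ¬ v (.box C)
  box_imp_of_proves : ∀ {C D}, IsSub C X → IsSub D X →
    NAProves m n (.imp (.box C) (.box D)) → v (.box C) → v (.box D)

theorem exists_isCountervaluation {m n : ℕ} {X : MFml} (hX : ¬ NAProves m n X) :
    ∃ v, IsCountervaluation m n X v := by
  let boxes : Set MFml := MFml.box '' {C | IsSub C X}
  let Γ : Set MFml := boxes ∪ MFml.neg '' boxes ∪ Set.image2 MFml.imp boxes boxes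
  have boxes_finite : boxes.Finite := (finite_setOf_isSub X).image _
  have finite : Γ.Finite := (boxes_finite.union (boxes_finite.image _)).union
    (boxes_finite.image2 _ boxes_finite)
  have mem_boxes {C} (hC : IsSub C X) : .box C ∈ boxes := Set.mem_image_of_mem _ hC
  obtain ⟨v, hv, hXv⟩ : ∃ v, (∀ B ∈ Γ ∩ {B | NAProves m n B}, B.evalTC v) ∧ ¬ X.evalTC v := by
    by_contra! h
    exact hX (.of_finite (finite.inter_of_left _) (fun _ hB => hB.2) h)
  exact ⟨v, hXv, fun hC h => hv _ ⟨.inl (.inl (mem_boxes hC)), h⟩,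
    fun hC h => hv _ ⟨.inl (.inr (Set.mem_image_of_mem _ (mem_boxes hC))), h⟩,
    fun hC hD h => hv _ ⟨.inr (Set.mem_image2_of_mem (mem_boxes hC) (mem_boxes hD)), h⟩⟩

namespace Enumeration

variable {E : Enumeration} {M N q s x : ℕ} {X : MFml} {v : MFml → Prop}

/-- The closure of the numbers enumerated before stage `s` under the passage from
`boxCodeIter q N c` to `boxCodeIter q M c`. -/
inductive FoundClosure (E : Enumeration) (M N q s : ℕ) : ℕ → Prop
  | found {x w} : w < s → E.found x w → FoundClosure E M N q s x
  | step {c} : FoundClosure E M N q s (boxCodeIter q N c) →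
      FoundClosure E M N q s (boxCodeIter q M c)

/-- The modal formulas whose canonical interpretation is enumerated before stage `s` are derivable;
the induction hypothesis in the proof of completeness. -/
def DerivableBefore (E : Enumeration) (M N q s : ℕ) : Prop :=
  ∀ w, w < s → ∀ A, E.found (modalCode q A) w → NAProves (M + 1) (N + 1) A

/-- The set of numbers that turns the valuation `v` into a refutation of `X` at stage `s`. -/
def CountermodelSet (E : Enumeration) (M N q s : ℕ) (X : MFml) (v : MFml → Prop) (x : ℕ) : Prop :=
  E.FoundClosure M N q s x ∨ (∃ C, IsSub C X ∧ modalCode q C = x ∧ v (.box C)) ∨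
    ∃ i, IsSub (.var i) X ∧ Nat.pair 9 i = x ∧ ¬ v (.var i)

theorem FoundClosure.isTheoremCode {Tax : Set AFml} {P : AFml} (hx : E.FoundClosure M N q s x)
    (h : IsRosserBox Tax E M N q P) : IsTheoremCode Tax x := by
  induction hx with
  | found _ hx => exact (h.found_iff _).1 ⟨_, hx⟩
  | step _ ih => exact h.isTheoremCode_boxCodeIter_of_le ih

theorem FoundClosure.proves_box (hx : E.FoundClosure M N q s x)
    (derivable : E.DerivableBefore M N q s) :
    ∀ {A}, modalCode q A = x → NAProves (M + 1) (N + 1) (.box A) := by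
  induction hx with
  | found hw hx => rintro A rfl; exact .nec (derivable _ hw A hx)
  | step _ ih =>
    intro A hA
    obtain ⟨B, rfl, rfl⟩ := exists_eq_boxIter_of_modalCode hA
    exact .mp (.acc B) (ih (modalCode_boxIter N B))

namespace CountermodelSet

theorem modalCode_iff (derivable : E.DerivableBefore M N q s)
    (hv : IsCountervaluation (M + 1) (N + 1) X v) {A : MFml} (hA : IsSub A X) :
    E.CountermodelSet M N q s X v (modalCode q A) ↔ v (.box A) := by
  refine ⟨?_, fun h => .inr (.inl ⟨A, hA, rfl, h⟩)⟩
  rintro (hx | ⟨C, -, hC, h⟩ | ⟨i, -, hi, -⟩)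
  · exact hv.box_of_proves hA (hx.proves_box derivable rfl)
  · rwa [← modalCode_injective q hC]
  · exact absurd hi.symm (modalCode_ne_pair (by decide) A i)

theorem pair_nine_iff {Tax : Set AFml} {P : AFml} (h : IsRosserBox Tax E M N q P) {i : ℕ}
    (hi : IsSub (.var i) X) :
    E.CountermodelSet M N q s X v (Nat.pair 9 i) ↔ ¬ v (.var i) := by
  refine ⟨?_, fun h => .inr (.inr ⟨i, hi, rfl, h⟩)⟩
  rintro (hx | ⟨C, -, hC, -⟩ | ⟨j, -, hj, h⟩)
  · exact absurd rfl ((hx.isTheoremCode h).ne_pair (by decide) i)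
  · exact absurd hC (modalCode_ne_pair (by decide) C i)
  · rwa [← (Nat.pair_eq_pair.1 hj).2]

theorem boxCodeIter_of_le (hMN : M ≤ N) (hv : IsCountervaluation (M + 1) (N + 1) X v) {c : ℕ}
    (hc : E.CountermodelSet M N q s X v (boxCodeIter q N c)) :
    E.CountermodelSet M N q s X v (boxCodeIter q M c) := by
  rcases id hc with hx | ⟨C, hCX, hC, h⟩ | ⟨i, -, hi, -⟩
  · exact .inl hx.step
  · obtain ⟨B, rfl, rfl⟩ := exists_eq_boxIter_of_modalCode hC
    have hBX : IsSub (boxIter M B) X := (isSub_boxIter_of_le hMN B).trans hCX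
    exact .inr (.inl ⟨boxIter M B, hBX, modalCode_boxIter M B,
      hv.box_imp_of_proves hCX hBX (.acc B) h⟩)
  · cases N with
    | zero => obtain rfl := Nat.le_zero.1 hMN; exact hc
    | succ N => simp [boxCodeIter, boxCode] at hi

theorem not_found_neg {Tax : Set AFml} {P : AFml} (h : IsRosserBox Tax E M N q P)
    (derivable : E.DerivableBefore M N q s) (hv : IsCountervaluation (M + 1) (N + 1) X v) {c w : ℕ}
    (hw : w < s) (hc : E.CountermodelSet M N q s X v (boxCode q c)) :
    ¬ E.found (Nat.pair 2 (boxCode q c)) w := by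
  intro found
  rcases hc with hx | ⟨C, hCX, hC, hCv⟩ | ⟨i, -, hi, -⟩
  · exact (hx.isTheoremCode h).not_neg h.consistent ((h.found_iff _).1 ⟨w, found⟩)
  · obtain ⟨B, rfl, rfl⟩ := exists_eq_box_of_modalCode hC
    exact hv.not_box_of_proves hCX (.ros (derivable w hw (.neg (.box B)) found)) hCv
  · simp [boxCode] at hi

theorem not_badCode {Tax : Set AFml} {P : AFml} (h : IsRosserBox Tax E M N q P) :
    ¬ E.CountermodelSet M N q s X v badCode := by
  rintro (hx | ⟨C, -, hC, -⟩ | ⟨i, -, hi, -⟩)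
  · exact (hx.isTheoremCode h).ne_pair (by decide) 0 rfl
  · exact modalCode_ne_pair (by decide) C 0 hC
  · simp [badCode] at hi

theorem boxEval_eq_zero {Tax : Set AFml} {P : AFml} (h : IsRosserBox Tax E M N q P)
    (derivable : E.DerivableBefore M N q s) (hv : IsCountervaluation (M + 1) (N + 1) X v)
    (hXs : modalCode q X ≤ s) {b : ℕ}
    (hb : ∀ x, bit b x = 1 ↔ x ≤ s ∧ E.CountermodelSet M N q s X v x) :
    boxEval q b (modalCode q X) = 0 := by
  have le_of_isSub {A : MFml} (hA : IsSub A X) : modalCode q A ≤ s := hA.modalCode_le.trans hXs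
  have hvar (i : ℕ) (hi : IsSub (.var i) X) : bit b (Nat.pair 9 i) = 1 ↔ ¬ v (.var i) := by
    rw [hb, pair_nine_iff h hi]
    exact and_iff_right ((lt_boxCode q _).le.trans
      ((Nat.right_le_pair 2 _).trans (le_of_isSub hi)))
  have hbox (A : MFml) (hA : IsSub (.box A) X) : bit b (modalCode q A) = 1 ↔ v (.box A) := by
    have hAX : IsSub A X := (IsSub.refl A).box.trans hA
    rw [hb, modalCode_iff derivable hv hAX]
    exact and_iff_right (le_of_isSub hAX)
  obtain ⟨lt, iff⟩ := boxEval_modalCode hvar hbox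
  have := mt iff.1 hv.not_evalTC
  omega

theorem refutesAt {Tax : Set AFml} {P : AFml} (h : IsRosserBox Tax E M N q P)
    (derivable : E.DerivableBefore M N q s) (hv : IsCountervaluation (M + 1) (N + 1) X v)
    (found : E.found (modalCode q X) s) {b : ℕ}
    (hb : ∀ x, bit b x = 1 ↔ x ≤ s ∧ E.CountermodelSet M N q s X v x) :
    E.RefutesAt M N q s b := by
  have hXs : modalCode q X ≤ s := E.le_stage found
  refine ⟨⟨modalCode q X, hXs, found, boxEval_eq_zero h derivable hv hXs hb⟩,
    fun x hx w hw hxw => (hb x).2 ⟨hx, .inl (.found hw hxw)⟩, fun c _ hc => ?_,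
    fun c _ w hw hc => not_found_neg h derivable hv hw ((hb _).1 hc).2,
    fun hbad => not_badCode h ((hb _).1 hbad).2⟩
  obtain ⟨hcs, hc⟩ := (hb _).1 hc
  exact (hb _).2 ⟨((boxCodeIter_strictMono q c).monotone h.le).trans hcs,
    hc.boxCodeIter_of_le h.le hv⟩

end CountermodelSet

end Enumeration

namespace IsRosserBox

variable {Tax : Set AFml} {E : Enumeration} {M N q : ℕ} {P : AFml}

theorem derivableBefore (h : IsRosserBox Tax E M N q P) (s : ℕ) : E.DerivableBefore M N q s := by
  induction s with
  | zero => exact fun w hw => absurd hw (Nat.not_lt_zero w)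
  | succ s derivable =>
    intro w hw X found
    by_contra hX
    obtain ⟨v, hv⟩ := exists_isCountervaluation hX
    obtain ⟨b, hb, bit_iff⟩ := exists_bit_eq_one_iff (E.CountermodelSet M N q s X v) s
    exact h.not_switchesAt s ⟨b, hb, Enumeration.CountermodelSet.refutesAt h derivable hv
      (E.mono (Nat.lt_succ_iff.1 hw) found) bit_iff⟩

theorem completeness (h : IsRosserBox Tax E M N q P) {A : MFml}
    (hA : Proves Tax (canonicalInterp P A)) : NAProves (M + 1) (N + 1) A := by
  rw [← isTheoremCode_code, h.code_canonicalInterp, ← h.found_iff] at hA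
  obtain ⟨s, found⟩ := hA
  exact h.derivableBefore (s + 1) s s.lt_succ_self A found

end IsRosserBox

/-! ### The main theorem -/

theorem statement_8_general (Tax : Set AFml) (hext : PA ⊆ Tax) (hpr : PrAxiomatized Tax)
    (hsound : Sigma1Sound Tax) (m n : ℕ) (hm : 1 ≤ m) (hmn : m ≤ n) :
    ∃ P : AFml, IsSigma1 P ∧ IsProvPred Tax P ∧
      (∀ (A : MFml) (f : MFml → AFml), IsInterp P f → NAProves m n A → Proves Tax (f A)) ∧
      (∃ f : MFml → AFml, IsInterp P f ∧ ∀ A : MFml, NAProves m n A ↔ Proves Tax (f A)) := by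
  obtain ⟨M, rfl⟩ := Nat.exists_eq_add_of_le' hm
  obtain ⟨N, rfl⟩ := Nat.exists_eq_add_of_le' (hm.trans hmn)
  obtain ⟨E, q, P, hP⟩ := hpr.exists_isRosserBox hext hsound (Nat.le_of_succ_le_succ hmn)
  have hf : IsInterp P (canonicalInterp P) := isInterp_canonicalInterp hP.freeLt
  exact ⟨P, hP.isSigma1, hP.isProvPred, fun A f hf => hP.soundness hf,
    canonicalInterp P, hf, fun A => ⟨hP.soundness hf, hP.completeness⟩⟩

/-- Theorem 4.4: Suppose `T` is `Σ₁`-sound and `n > m ≥ 1`. Then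
there is a `Σ₁` provability predicate `PR_T(x)` of `T` such that (1) `N⁺A_{m,n}` is sound for
every arithmetical interpretation based on `PR_T(x)`, and (2) some arithmetical interpretation
based on `PR_T(x)` is exact for `N⁺A_{m,n}`. -/
theorem statement_8 (Tax : Set AFml) (hext : PA ⊆ Tax)
    (hcons : ¬ Proves Tax botFml) (hpr : PrAxiomatized Tax)
    (hsound : Sigma1Sound Tax)
    (m n : ℕ) (hm : 1 ≤ m) (hmn : m < n) :
    ∃ P : AFml, IsSigma1 P ∧ IsProvPred Tax P ∧
      (∀ (A : MFml) (f : MFml → AFml), IsInterp P f → NAProves m n A → Proves Tax (f A)) ∧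
      (∃ f : MFml → AFml, IsInterp P f ∧ ∀ A : MFml, NAProves m n A ↔ Proves Tax (f A)) :=
  statement_8_general Tax hext hpr hsound m n hm hmn.le

end PLN
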